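/- arXiv:1903.12018 — 8 statements merged into one kernel-verified Lean document; each statement's English description precedes it below -/
import Mathlib

section
/- Let a ∈ ℝ^p and b ∈ ℝ^q be jointly Gaussian zero-mean random vectors with Var(b) invertible. Then the conditional expectation of a given b is the linear function E[a | b] = Cov(a,b) Var(b)⁻¹ b almost surely. -/
open MeasureTheory ProbabilityTheory

/-- If `a ∈ ℝ^p`, `b ∈ ℝ^q` are jointly Gaussian zero-mean random vectors (every linear
combination of their components has a centered Gaussian law) and `Var(b)` is invertible,
then `E[a | b] = Cov(a,b) Var(b)⁻¹ b` almost surely (componentwise). -/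
theorem stmt4 {Ω : Type*} [MeasurableSpace Ω] (μ : Measure Ω) [IsProbabilityMeasure μ]
    (p q : ℕ) (a : Ω → Fin p → ℝ) (b : Ω → Fin q → ℝ)
    (ha : Measurable a) (hb : Measurable b)
    (hGauss : ∀ (c : Fin p → ℝ) (d : Fin q → ℝ), ∃ v : NNReal,
      μ.map (fun ω => (∑ k, c k * a ω k) + ∑ l, d l * b ω l) = gaussianReal 0 v)
    (Covab : Matrix (Fin p) (Fin q) ℝ) (Varb : Matrix (Fin q) (Fin q) ℝ)
    (hCov : ∀ k l, Covab k l = ∫ ω, a ω k * b ω l ∂μ)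
    (hVar : ∀ l l', Varb l l' = ∫ ω, b ω l * b ω l' ∂μ)
    (hinv : IsUnit Varb.det) :
    ∀ k, (μ[(fun ω => a ω k) | MeasurableSpace.comap b inferInstance])
      =ᵐ[μ] fun ω => (Covab * Varb⁻¹).mulVec (b ω) k := by
  intro k
  have hak : Measurable fun ω => a ω k := (measurable_pi_apply k).comp ha
  have hbl : ∀ l, Measurable fun ω => b ω l := fun l => (measurable_pi_apply l).comp hb
  have key : ∀ f : Ω → ℝ, Measurable f → (∃ v : NNReal, μ.map f = gaussianReal 0 v) →
      MemLp f 2 μ ∧ ∫ ω, f ω ∂μ = 0 := by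
    rintro f hf ⟨v, hv⟩
    constructor
    · have h := memLp_id_gaussianReal' (μ := 0) (v := v) 2 (by simp)
      rw [← hv] at h
      exact (memLp_map_measure_iff (by fun_prop) hf.aemeasurable).1 h
    · have h := integral_id_gaussianReal (μ := 0) (v := v)
      rw [← hv, integral_map hf.aemeasurable (by fun_prop)] at h
      exact h
  have hA : MemLp (fun ω => a ω k) 2 μ ∧ ∫ ω, a ω k ∂μ = 0 := by
    refine key _ hak ?_
    simpa [Pi.single_apply] using hGauss (Pi.single k 1) 0
  have hB : ∀ l, MemLp (fun ω => b ω l) 2 μ ∧ ∫ ω, b ω l ∂μ = 0 := by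
    intro l
    refine key _ (hbl l) ?_
    simpa [Pi.single_apply] using hGauss 0 (Pi.single l 1)
  set M := Covab * Varb⁻¹ with hM
  have hMV : M * Varb = Covab := by
    rw [hM, Matrix.mul_assoc, Matrix.nonsing_inv_mul _ hinv, Matrix.mul_one]
  have hg : ∀ ω, M.mulVec (b ω) k = ∑ l, M k l * b ω l := fun ω => rfl
  simp only [hg]
  set g : Ω → ℝ := fun ω => ∑ l, M k l * b ω l with hgdef
  have hgL : MemLp g 2 μ := memLp_finsetSum _ fun l _ => (hB l).1.const_mul _
  have hg0 : ∫ ω, g ω ∂μ = 0 := by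
    rw [hgdef, integral_finsetSum _ fun l _ =>
      ((hB l).1.const_mul _).integrable (by norm_num)]
    simp [integral_const_mul, (hB _).2]
  let r : Ω → ℝ := fun ω => a ω k - g ω
  have hgm : Measurable g := by fun_prop
  have hrm : Measurable r := hak.sub hgm
  have hrL : MemLp r 2 μ := hA.1.sub hgL
  have hr0 : ∫ ω, r ω ∂μ = 0 := by
    simp only [r]
    rw [integral_sub (hA.1.integrable (by norm_num)) (hgL.integrable (by norm_num)), hA.2, hg0,
      sub_zero]
  have hcov : ∀ l, cov[r, fun ω => b ω l; μ] = 0 := by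
    intro l
    have h1 : cov[fun ω => a ω k, fun ω => b ω l; μ] = Covab k l := by
      rw [covariance_eq_sub hA.1 (hB l).1, hA.2, zero_mul, sub_zero, hCov]; rfl
    have h2 : ∀ l', cov[fun ω => b ω l', fun ω => b ω l; μ] = Varb l' l := by
      intro l'
      rw [covariance_eq_sub (hB l').1 (hB l).1, (hB l').2, zero_mul, sub_zero, hVar]; rfl
    have h3 : cov[g, fun ω => b ω l; μ] = Covab k l := by
      rw [hgdef, covariance_fun_sum_left (X := fun l ω => M k l * b ω l)
        (fun l => (hB l).1.const_mul _) (hB l).1, ← hMV]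
      simp [covariance_const_mul_left, h2, Matrix.mul_apply]
    rw [covariance_fun_sub_left hA.1 hgL (hB l).1, h1, h3, sub_self]
  have hlaw : HasGaussianLaw (fun ω => ((fun _ : Unit => r ω), fun l => b ω l)) μ := by
    have hm : Measurable (fun ω => ((fun _ : Unit => r ω), fun l => b ω l)) := by fun_prop
    refine ⟨isGaussian_of_map_eq_gaussianReal fun L => ?_⟩
    set s : ℝ := L ((fun _ => 1), 0) with hs
    let d : Fin q → ℝ := fun l => L (0, Pi.single l 1)
    have hL : ∀ (x : ℝ) (y : Fin q → ℝ), L ((fun _ => x), y) = s * x + ∑ l, d l * y l := by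
      intro x y
      have e1 : ((fun _ : Unit => x), y) = x • ((fun _ : Unit => (1:ℝ)), (0 : Fin q → ℝ))
          + ∑ l, y l • ((0 : Unit → ℝ), (Pi.single l 1 : Fin q → ℝ)) := by
        ext i
        · simp [Prod.fst_sum]
        · simp [Prod.snd_sum, Finset.sum_apply, Pi.single_apply]
      rw [e1, map_add, map_smul, map_sum]
      simp only [map_smul, smul_eq_mul, d, hs, mul_comm]
    obtain ⟨v, hv⟩ := hGauss (Pi.single k s) (fun l => d l - s * M k l)
    refine ⟨0, v, ?_⟩
    rw [← hv, Measure.map_map (by fun_prop) hm]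
    congr 1
    funext ω
    simp only [Function.comp, hL, r, hgdef, Pi.single_apply, sub_mul, Finset.sum_sub_distrib,
      mul_sub, Finset.mul_sum, mul_assoc]
    simp
    ring
  have hind := hlaw.indepFun_of_covariance_eval (X := fun _ : Unit => r)
    (Y := fun l ω => b ω l) (fun _ l => hcov l)
  have hind2 : IndepFun r b μ := 
    hind.comp (φ := fun f : Unit → ℝ => f ()) (ψ := id) (measurable_pi_apply ()) measurable_id
  have hle : MeasurableSpace.comap b inferInstance ≤ ‹MeasurableSpace Ω› := hb.comap_le
  have c1 := condExp_indep_eq hrm.comap_le hle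
    (f := r) (comap_measurable r).stronglyMeasurable hind2
  have hgsm : StronglyMeasurable[MeasurableSpace.comap b inferInstance] g := by
    have : Measurable fun y : Fin q → ℝ => ∑ l, M k l * y l := by fun_prop
    exact (this.comp (comap_measurable b)).stronglyMeasurable
  have c2 := condExp_of_stronglyMeasurable hle hgsm (hgL.integrable (μ := μ) (by norm_num))
  have c3 := condExp_add (hrL.integrable (by norm_num)) (hgL.integrable (by norm_num))
    (MeasurableSpace.comap b inferInstance) (μ := μ)
  have e : (fun ω => a ω k) = r + g := by funext ω; simp [r]
  rw [e]
  filter_upwards [c1, c3] with ω h1 h3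
  rw [h3, Pi.add_apply, h1, c2, hr0, zero_add]
end

section
/- Let (x, y_0, y_1, …, y_n) be jointly Gaussian zero-mean random vectors with Σ_00 = Cov(y_0,y_0) invertible, and define x̂_0 = E[x | y_0], ỹ_i = y_i − E[y_i | y_0], Θ̂_i = Cov(x, ỹ_i) and Σ̂_ii = Cov(ỹ_i, ỹ_i). If Σ̂_ii is invertible, then for each i ∈ {1,…,n}, E[x | y_0, y_i] = x̂_0 + Θ̂_i Σ̂_ii⁻¹ ỹ_i almost surely. -/
open MeasureTheory ProbabilityTheory Matrix

/-- every element of `S` is a measurable centred Gaussian variable -/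
def GaussSub {Ω : Type*} [MeasurableSpace Ω] (μ : Measure Ω) (S : Submodule ℝ (Ω → ℝ)) : Prop :=
  ∀ f ∈ S, Measurable f ∧ ∃ v : NNReal, μ.map f = gaussianReal 0 v

section
variable {Ω : Type*} {m : MeasurableSpace Ω} {mΩ : MeasurableSpace Ω} {μ : Measure Ω} [IsProbabilityMeasure μ]
  {S : Submodule ℝ (Ω → ℝ)}

lemma GaussSub.memLp (hS : GaussSub μ S) {f : Ω → ℝ} (hf : f ∈ S) : MemLp f 2 μ := by
  obtain ⟨hm, v, hv⟩ := hS f hf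
  have h := memLp_id_gaussianReal' (μ := 0) (v := v) 2 (by simp)
  rw [← hv, memLp_map_measure_iff (by fun_prop) hm.aemeasurable] at h
  exact h

lemma GaussSub.integral (hS : GaussSub μ S) {f : Ω → ℝ} (hf : f ∈ S) : ∫ ω, f ω ∂μ = 0 := by
  obtain ⟨hm, v, hv⟩ := hS f hf
  have h := integral_id_gaussianReal (μ := 0) (v := v)
  rwa [← hv, integral_map hm.aemeasurable (by fun_prop)] at h

lemma GaussSub.integrable (hS : GaussSub μ S) {f : Ω → ℝ} (hf : f ∈ S) : Integrable f μ :=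
  (hS.memLp hf).integrable (by norm_num)

lemma GaussSub.integrable_mul (hS : GaussSub μ S) {f g : Ω → ℝ} (hf : f ∈ S) (hg : g ∈ S) :
    Integrable (fun ω => f ω * g ω) μ :=
  (hS.memLp hf).integrable_mul (hS.memLp hg)

lemma GaussSub.mem_comb {ι : Type*} [Fintype ι] {f : Ω → ℝ} (hf : f ∈ S) {Y : ι → Ω → ℝ}
    (hY : ∀ j, Y j ∈ S) (c : ι → ℝ) : (fun ω => f ω - ∑ j, c j * Y j ω) ∈ S := by
  have h : f - ∑ j, c j • Y j ∈ S :=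
    S.sub_mem hf (S.sum_mem fun j _ => S.smul_mem _ (hY j))
  convert h using 1
  ext ω
  simp

lemma GaussSub.integral_comb (hS : GaussSub μ S) {ι : Type*} [Fintype ι] {f g : Ω → ℝ}
    (hf : f ∈ S) (hg : g ∈ S) {Y : ι → Ω → ℝ} (hY : ∀ j, Y j ∈ S) (c : ι → ℝ) :
    ∫ ω, (f ω - ∑ j, c j * Y j ω) * g ω ∂μ
      = ∫ ω, f ω * g ω ∂μ - ∑ j, c j * ∫ ω, Y j ω * g ω ∂μ := by
  have h1 : ∀ ω, (f ω - ∑ j, c j * Y j ω) * g ω = f ω * g ω - ∑ j, c j * (Y j ω * g ω) := by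
    intro ω
    rw [sub_mul, Finset.sum_mul]
    simp only [mul_assoc]
  simp_rw [h1]
  have hi : ∀ j ∈ Finset.univ, Integrable (fun ω => c j * (Y j ω * g ω)) μ :=
    fun j _ => (hS.integrable_mul (hY j) hg).const_mul _
  rw [integral_sub (hS.integrable_mul hf hg) (integrable_finsetSum _ hi), integral_finsetSum _ hi]
  simp_rw [integral_const_mul]

lemma GaussSub.condExp_zero (hS : GaussSub μ S) {ι : Type*} [Fintype ι] {Z : Ω → ℝ}
    (hZ : Z ∈ S) {Y : ι → Ω → ℝ} (hY : ∀ j, Y j ∈ S)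
    (h0 : ∀ j, ∫ ω, Z ω * Y j ω ∂μ = 0)
    (hm : m ≤ MeasurableSpace.comap (fun ω j => Y j ω) inferInstance) :
    μ[Z | m] =ᵐ[μ] fun _ => 0 := by
  classical
  have hZm : Measurable Z := (hS Z hZ).1
  have hYm : Measurable (fun ω j => Y j ω) := measurable_pi_lambda _ fun j => (hS _ (hY j)).1
  have hG : HasGaussianLaw (fun ω ↦ ((fun _ : Unit ↦ Z ω), fun j ↦ Y j ω)) μ := by
    refine ⟨isGaussian_of_map_eq_gaussianReal fun L => ⟨0, ?_⟩⟩
    rw [Measure.map_map (by fun_prop)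
      ((measurable_pi_lambda _ fun _ => hZm).prodMk hYm)]
    refine (hS _ ?_).2
    have h : L (fun _ => 1, 0) • Z + ∑ j, L (0, Pi.single j 1) • Y j ∈ S :=
      S.add_mem (S.smul_mem _ hZ) (S.sum_mem fun j _ => S.smul_mem _ (hY j))
    convert h using 1
    ext ω
    have h2 : ((fun _ : Unit ↦ Z ω), fun j ↦ Y j ω)
        = Z ω • ((fun _ : Unit => (1:ℝ)), (0 : ι → ℝ))
          + ∑ j, Y j ω • ((0 : Unit → ℝ), (Pi.single j 1 : ι → ℝ)) := by
      ext k
      · simp [Prod.fst_sum]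
      · simp [Prod.snd_sum, Finset.sum_apply, Pi.single_apply]
    simp only [Function.comp_apply]
    rw [h2, map_add, map_sum, map_smul]
    simp_rw [map_smul]
    simp only [Pi.add_apply, Finset.sum_apply, Pi.smul_apply, smul_eq_mul, mul_comm]
  have hI := HasGaussianLaw.indepFun_of_covariance_eval (X := fun _ : Unit => Z) (Y := Y) hG
    (fun _ j => by
      rw [covariance_eq_sub (hS.memLp hZ) (hS.memLp (hY j)), hS.integral hZ]
      simpa using h0 j)
  have hI2 : IndepFun Z (fun ω j => Y j ω) μ :=
    hI.comp (φ := fun u : Unit → ℝ => u ()) (ψ := id) (by fun_prop) measurable_id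
  have hI3 : Indep (MeasurableSpace.comap Z inferInstance) m μ :=
    indep_of_indep_of_le_right hI2 hm
  have h := condExp_indep_eq hZm.comap_le (hm.trans hYm.comap_le)
    (comap_measurable Z).stronglyMeasurable hI3
  rwa [hS.integral hZ] at h

lemma GaussSub.condExp_eq (hS : GaussSub μ S) {ι : Type*} [Fintype ι] {X W : Ω → ℝ}
    (hX : X ∈ S) (hW : (fun ω => X ω - W ω) ∈ S) {Y : ι → Ω → ℝ} (hY : ∀ j, Y j ∈ S)
    (h0 : ∀ l, ∫ ω, (X ω - W ω) * Y l ω ∂μ = 0)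
    (hm : m ≤ MeasurableSpace.comap (fun ω j => Y j ω) inferInstance)
    (hmW : Measurable[m] W) :
    μ[X | m] =ᵐ[μ] W := by
  have hle : m ≤ mΩ := hm.trans (Measurable.comap_le
    (measurable_pi_lambda _ fun j => (hS _ (hY j)).1))
  have h1 := hS.condExp_zero hW hY h0 hm
  have hi : Integrable W μ := by
    have h := (hS.integrable hX).sub (hS.integrable hW)
    convert h using 1
    ext ω
    simp
  have h2 : μ[W | m] = W := condExp_of_stronglyMeasurable hle hmW.stronglyMeasurable hi
  have h3 := condExp_sub (hS.integrable hX) hi m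
  rw [h2] at h3
  filter_upwards [h1, h3] with ω h1 h3
  have h4 : (0:ℝ) = (μ[X | m]) ω - W ω := by
    rw [← h1]
    exact h3
  linarith

lemma GaussSub.condExp_comb (hS : GaussSub μ S) {ι : Type*} [Fintype ι] {Z : Ω → ℝ}
    (hZ : Z ∈ S) {Y : ι → Ω → ℝ} (hY : ∀ j, Y j ∈ S) (c : ι → ℝ)
    (h0 : ∀ l, ∫ ω, (Z ω - ∑ j, c j * Y j ω) * Y l ω ∂μ = 0)
    (hm : m ≤ MeasurableSpace.comap (fun ω j => Y j ω) inferInstance)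
    (hmY : ∀ j, Measurable[m] (Y j)) :
    μ[Z | m] =ᵐ[μ] fun ω => ∑ j, c j * Y j ω :=
  hS.condExp_eq hZ (GaussSub.mem_comb hZ hY c) hY h0 hm
    (Finset.measurable_fun_sum _ fun j _ => (hmY j).const_mul (c j))

lemma GaussSub.exists_coef (hS : GaussSub μ S) {ι : Type*} [Fintype ι] [DecidableEq ι]
    {Z : Ω → ℝ} (hZ : Z ∈ S) {Y : ι → Ω → ℝ} (hY : ∀ j, Y j ∈ S) (G : Matrix ι ι ℝ)
    (hG : ∀ k l, G k l = ∫ ω, Y k ω * Y l ω ∂μ) (hu : IsUnit G.det) :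
    ∃ c : ι → ℝ, ∀ l, ∫ ω, (Z ω - ∑ j, c j * Y j ω) * Y l ω ∂μ = 0 := by
  refine ⟨(fun l => ∫ ω, Z ω * Y l ω ∂μ) ᵥ* G⁻¹, fun l => ?_⟩
  rw [hS.integral_comb hZ (hY l) hY]
  simp_rw [← hG]
  have h : (((fun l => ∫ ω, Z ω * Y l ω ∂μ) ᵥ* G⁻¹) ᵥ* G) l = ∫ ω, Z ω * Y l ω ∂μ := by
    rw [vecMul_vecMul, nonsing_inv_mul _ hu, vecMul_one]
  rw [← h]
  simp [vecMul, dotProduct]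

end

/-- Let `(x, y₀, y₁, …, yₙ)` be jointly Gaussian zero-mean random vectors with
`Cov(y₀,y₀)` invertible, `x̂₀ = E[x | y₀]`, `ỹᵢ = yᵢ − E[yᵢ | y₀]`, `Θ̂ᵢ = Cov(x, ỹᵢ)`,
`Σ̂ᵢᵢ = Cov(ỹᵢ, ỹᵢ)`. If `Σ̂ᵢᵢ` is invertible, then
`E[x | y₀, yᵢ] = x̂₀ + Θ̂ᵢ Σ̂ᵢᵢ⁻¹ ỹᵢ` almost surely. -/
theorem stmt7 {Ω : Type*} [MeasurableSpace Ω] (μ : Measure Ω) [IsProbabilityMeasure μ]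
    (dx q n : ℕ) (dy : Fin n → ℕ)
    (x : Ω → Fin dx → ℝ) (y0 : Ω → Fin q → ℝ) (y : ∀ i : Fin n, Ω → Fin (dy i) → ℝ)
    (hx : Measurable x) (hy0 : Measurable y0) (hy : ∀ i, Measurable (y i))
    (hGauss : ∀ (a : Fin dx → ℝ) (b0 : Fin q → ℝ) (b : ∀ i, Fin (dy i) → ℝ),
      ∃ v : NNReal,
        μ.map (fun ω => (∑ k, a k * x ω k) + (∑ k, b0 k * y0 ω k)
          + ∑ i, ∑ k, b i k * y i ω k) = gaussianReal 0 v)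
    (Sigma00 : Matrix (Fin q) (Fin q) ℝ)
    (hSigma00 : ∀ k l, Sigma00 k l = ∫ ω, y0 ω k * y0 ω l ∂μ)
    (hinv0 : IsUnit Sigma00.det)
    (xhat0 : Ω → Fin dx → ℝ)
    (hxhat0 : xhat0 = fun ω k =>
      (μ[(fun ω => x ω k) | MeasurableSpace.comap y0 inferInstance]) ω)
    (yhat : ∀ i : Fin n, Ω → Fin (dy i) → ℝ)
    (hyhat : ∀ i, yhat i = fun ω k =>
      (μ[(fun ω => y i ω k) | MeasurableSpace.comap y0 inferInstance]) ω)
    (Θhat : ∀ i, Matrix (Fin dx) (Fin (dy i)) ℝ)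
    (hΘhat : ∀ i k l, Θhat i k l = ∫ ω, x ω k * (y i ω l - yhat i ω l) ∂μ)
    (Sigmahat : ∀ i j, Matrix (Fin (dy i)) (Fin (dy j)) ℝ)
    (hSigmahat : ∀ i j k l, Sigmahat i j k l
      = ∫ ω, (y i ω k - yhat i ω k) * (y j ω l - yhat j ω l) ∂μ)
    (hinv : ∀ i, IsUnit (Sigmahat i i).det) :
    ∀ i k,
      (μ[(fun ω => x ω k) |
          MeasurableSpace.comap (fun ω => (y0 ω, y i ω)) inferInstance])
        =ᵐ[μ] fun ω =>
          xhat0 ω k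
            + (Θhat i * (Sigmahat i i)⁻¹).mulVec (fun l => y i ω l - yhat i ω l) k := by
  intro i k
  classical
  -- the Gaussian space
  let S : Submodule ℝ (Ω → ℝ) :=
    { carrier := {f | ∃ (a : Fin dx → ℝ) (b0 : Fin q → ℝ) (b : ∀ i, Fin (dy i) → ℝ),
        f = fun ω => (∑ k, a k * x ω k) + (∑ k, b0 k * y0 ω k) + ∑ i, ∑ k, b i k * y i ω k}
      zero_mem' := ⟨0, 0, 0, by ext; simp⟩
      add_mem' := by
        rintro _ _ ⟨a, b0, b, rfl⟩ ⟨a', b0', b', rfl⟩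
        refine ⟨a + a', b0 + b0', b + b', ?_⟩
        ext ω
        simp only [Pi.add_apply, add_mul, Finset.sum_add_distrib]
        ring
      smul_mem' := by
        rintro c _ ⟨a, b0, b, rfl⟩
        refine ⟨c • a, c • b0, c • b, ?_⟩
        ext ω
        simp only [Pi.smul_apply, smul_eq_mul, mul_add, Finset.mul_sum, mul_assoc] }
  have hS : GaussSub μ S := by
    rintro _ ⟨a, b0, b, rfl⟩
    refine ⟨?_, hGauss a b0 b⟩
    have h1 : ∀ k, Measurable fun ω => x ω k := fun k => (measurable_pi_apply k).comp hx
    have h2 : ∀ k, Measurable fun ω => y0 ω k := fun k => (measurable_pi_apply k).comp hy0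
    have h3 : ∀ i k, Measurable fun ω => y i ω k := fun i k => (measurable_pi_apply k).comp (hy i)
    fun_prop
  have hxS : (fun ω => x ω k) ∈ S :=
    ⟨Pi.single k 1, 0, 0, by ext ω; simp [Pi.single_apply]⟩
  have hy0S : ∀ l, (fun ω => y0 ω l) ∈ S := fun l =>
    ⟨0, Pi.single l 1, 0, by ext ω; simp [Pi.single_apply]⟩
  have hyS : ∀ l, (fun ω => y i ω l) ∈ S := fun l =>
    ⟨0, 0, Pi.single i (Pi.single l 1), by
      ext ω
      rw [Finset.sum_eq_single i]
      · simp [Pi.single_apply]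
      · intro j _ hj
        simp [Pi.single_eq_of_ne hj]
      · simp⟩
  have hm0 : ∀ l, Measurable[MeasurableSpace.comap y0 inferInstance] fun ω => y0 ω l :=
    fun l => (measurable_pi_apply l).comp (comap_measurable y0)
  obtain ⟨cx, hcx⟩ := hS.exists_coef hxS hy0S Sigma00 hSigma00 hinv0
  have hy' := fun l => hS.exists_coef (hyS l) hy0S Sigma00 hSigma00 hinv0
  choose cy hcy using hy'
  have hxe : (fun ω => xhat0 ω k) =ᵐ[μ] fun ω => ∑ j, cx j * y0 ω j := by
    rw [hxhat0]
    exact hS.condExp_comb hxS hy0S cx hcx le_rfl hm0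
  have hye : ∀ l, (fun ω => yhat i ω l) =ᵐ[μ] fun ω => ∑ j, cy l j * y0 ω j := by
    intro l
    rw [hyhat i]
    exact hS.condExp_comb (hyS l) hy0S (cy l) (hcy l) le_rfl hm0
  have hTS : ∀ l, (fun ω => y i ω l - ∑ j, cy l j * y0 ω j) ∈ S :=
    fun l => GaussSub.mem_comb (hyS l) hy0S (cy l)
  have hXS : (fun ω => x ω k - ∑ j, cx j * y0 ω j) ∈ S := GaussSub.mem_comb hxS hy0S cx
  have hTh : ∀ l, Θhat i k l = ∫ ω, x ω k * (y i ω l - ∑ j, cy l j * y0 ω j) ∂μ := by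
    intro l
    rw [hΘhat]
    refine integral_congr_ae ?_
    filter_upwards [hye l] with ω h
    simp only [h]
  have hSh : ∀ l m, Sigmahat i i l m = ∫ ω, (y i ω l - ∑ j, cy l j * y0 ω j)
      * (y i ω m - ∑ j, cy m j * y0 ω j) ∂μ := by
    intro l m
    rw [hSigmahat]
    refine integral_congr_ae ?_
    filter_upwards [hye l, hye m] with ω h h'
    simp only [h, h']
  set K := Θhat i * (Sigmahat i i)⁻¹ with hK
  have hZS := GaussSub.mem_comb hXS hTS (K k)
  have hZ0 : ∀ m, ∫ ω, ((x ω k - ∑ j, cx j * y0 ω j)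
      - ∑ l, K k l * (y i ω l - ∑ j, cy l j * y0 ω j)) * y0 ω m ∂μ = 0 := by
    intro m
    rw [hS.integral_comb hXS (hy0S m) hTS (K k), hcx m]
    simp [hcy]
  have hZT : ∀ m, ∫ ω, ((x ω k - ∑ j, cx j * y0 ω j)
      - ∑ l, K k l * (y i ω l - ∑ j, cy l j * y0 ω j))
        * (y i ω m - ∑ j, cy m j * y0 ω j) ∂μ = 0 := by
    intro m
    rw [hS.integral_comb hXS (hTS m) hTS (K k), hS.integral_comb hxS (hTS m) hy0S cx, ← hTh]
    have h1 : ∀ j, ∫ ω, y0 ω j * (y i ω m - ∑ j, cy m j * y0 ω j) ∂μ = 0 := by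
      intro j
      rw [← hcy m j]
      simp_rw [mul_comm]
    simp_rw [h1, ← hSh]
    have h2 : (K * Sigmahat i i) k m = Θhat i k m := by
      rw [hK, Matrix.mul_assoc, nonsing_inv_mul _ (hinv i), Matrix.mul_one]
    rw [← h2, Matrix.mul_apply]
    simp
  have hZy : ∀ m, ∫ ω, ((x ω k - ∑ j, cx j * y0 ω j)
      - ∑ l, K k l * (y i ω l - ∑ j, cy l j * y0 ω j)) * y i ω m ∂μ = 0 := by
    intro m
    have h := hS.integral_comb (hyS m) hZS hy0S (cy m)
    have e1 := hZT m
    simp_rw [mul_comm _ (y i _ m - _)] at e1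
    rw [e1] at h
    simp_rw [mul_comm (y0 _ _) (_ - _), hZ0, mul_comm (y i _ m) (_ - _)] at h
    simpa using h.symm
  -- conditional expectation
  let Y : Fin q ⊕ Fin (dy i) → Ω → ℝ := Sum.elim (fun l ω => y0 ω l) (fun l ω => y i ω l)
  have hYS : ∀ j, Y j ∈ S := by
    rintro (j | j)
    · exact hy0S j
    · exact hyS j
  have hle : MeasurableSpace.comap (fun ω => (y0 ω, y i ω)) inferInstance ≤ MeasurableSpace.comap (fun ω j => Y j ω) inferInstance := by
    have : (fun ω => (y0 ω, y i ω)) = (fun u : Fin q ⊕ Fin (dy i) → ℝ =>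
        ((fun l => u (Sum.inl l)), (fun l => u (Sum.inr l)))) ∘ (fun ω j => Y j ω) := rfl
    rw [this, ← MeasurableSpace.comap_comp]
    exact MeasurableSpace.comap_mono (Measurable.comap_le (by fun_prop))
  have hpair : Measurable[MeasurableSpace.comap (fun ω => (y0 ω, y i ω)) inferInstance] (fun ω => (y0 ω, y i ω)) := comap_measurable _
  have hA0 : ∀ l, Measurable[MeasurableSpace.comap (fun ω => (y0 ω, y i ω)) inferInstance] fun ω => y0 ω l :=
    fun l => ((measurable_pi_apply l).comp measurable_fst).comp hpair
  have hAi : ∀ l, Measurable[MeasurableSpace.comap (fun ω => (y0 ω, y i ω)) inferInstance] fun ω => y i ω l :=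
    fun l => ((measurable_pi_apply l).comp measurable_snd).comp hpair
  have hWm : Measurable[MeasurableSpace.comap (fun ω => (y0 ω, y i ω)) inferInstance]
      (fun ω => (∑ j, cx j * y0 ω j)
        + ∑ l, K k l * (y i ω l - ∑ j, cy l j * y0 ω j)) :=
    Measurable.add (Finset.measurable_fun_sum _ fun j _ => (hA0 j).const_mul _)
      (Finset.measurable_fun_sum _ fun l _ => Measurable.const_mul (Measurable.sub (hAi l)
        (Finset.measurable_fun_sum _ fun j _ => (hA0 j).const_mul _)) _)
  simp_rw [sub_sub (x _ k)] at hZS hZ0 hZy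
  have hc := hS.condExp_eq hxS hZS hYS (by
    rintro (j | j)
    · exact hZ0 j
    · exact hZy j) hle hWm
  have hyall := ae_all_iff.2 hye
  filter_upwards [hc, hxe, hyall] with ω h1 h3 h4
  rw [h1, h3]
  simp [mulVec, dotProduct, h4]
end

section
/- Let (x, y_0, y_1, …, y_n) be jointly Gaussian zero-mean random vectors with Σ_00 = Cov(y_0,y_0) invertible, and define ỹ_i = y_i − E[y_i | y_0] and Σ̂_ij = Cov(ỹ_i, ỹ_j). If Σ̂_ii is invertible, then for all i, j ∈ {1,…,n}, E[ỹ_j | y_0, y_i] = Σ̂_ji Σ̂_ii⁻¹ ỹ_i almost surely. -/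
open MeasureTheory ProbabilityTheory Matrix

lemma aux_memLp {Ω : Type*} [MeasurableSpace Ω] {μ : Measure Ω} [IsProbabilityMeasure μ]
    {f : Ω → ℝ} (hf : ∃ v : NNReal, μ.map f = gaussianReal 0 v) :
    HasGaussianLaw f μ ∧ MemLp f 2 μ ∧ ∫ ω, f ω ∂μ = 0 := by
  obtain ⟨v, hv⟩ := hf
  have h : HasGaussianLaw f μ := ⟨by rw [hv]; infer_instance⟩
  refine ⟨h, h.memLp_two, ?_⟩
  have := integral_map (μ := μ) (φ := f) (f := fun x : ℝ => x) h.aemeasurable (by fun_prop)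
  rw [← this, hv]
  exact integral_id_gaussianReal

lemma aux_cond {Ω : Type*} [mΩ : MeasurableSpace Ω] {μ : Measure Ω} [IsProbabilityMeasure μ]
    (S : Submodule ℝ (Ω → ℝ))
    (hS : ∀ f ∈ S, Measurable f ∧ ∃ v : NNReal, μ.map f = gaussianReal 0 v)
    {κ E : Type*} [Fintype κ] [mE : MeasurableSpace E] (V : κ → Ω → ℝ) (hV : ∀ k, V k ∈ S)
    (φ : (κ → ℝ) → E) (hφ : Measurable φ)
    (W : Ω → ℝ) (hW : W ∈ S) (h0 : ∀ k, ∫ ω, V k ω * W ω ∂μ = 0) :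
    μ[W | MeasurableSpace.comap (fun ω => φ (fun k => V k ω)) mE] =ᵐ[μ] 0 := by
  classical
  have hVm : Measurable fun ω k => V k ω := measurable_pi_lambda _ fun k => (hS _ (hV k)).1
  have hG : HasGaussianLaw (fun ω => (fun k => V k ω, fun _ : Unit => W ω)) μ := by
    constructor
    have hm : Measurable (fun ω => ((fun k => V k ω, fun _ : Unit => W ω) : (κ → ℝ) × (Unit → ℝ))) :=
      hVm.prodMk (measurable_pi_lambda _ fun k => (hS _ hW).1)
    apply isGaussian_of_isGaussian_map
    intro L
    rw [Measure.map_map L.continuous.measurable hm]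
    have : L ∘ (fun ω => ((fun k => V k ω, fun _ : Unit => W ω) : (κ → ℝ) × (Unit → ℝ)))
        ∈ S := by
      have e : L ∘ (fun ω => ((fun k => V k ω, fun _ : Unit => W ω) : (κ → ℝ) × (Unit → ℝ)))
        = (∑ k, L (Pi.single k 1, 0) • V k) + L (0, fun _ => 1) • W := by
        ext ω
        have h : ((fun k => V k ω, fun _ : Unit => W ω) : (κ → ℝ) × (Unit → ℝ))
          = (∑ k, V k ω • ((Pi.single k 1, 0) : (κ → ℝ) × (Unit → ℝ))) + W ω • (0, fun _ => 1) := by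
          ext k
          · simp [Prod.fst_sum, Finset.sum_apply, Pi.single_apply]
          · simp [Prod.snd_sum]
        simp only [Function.comp_apply]
        rw [h, map_add, map_sum]
        simp only [map_smul]
        simp [mul_comm]
      rw [e]
      exact S.add_mem (S.sum_mem fun k _ => S.smul_mem _ (hV k)) (S.smul_mem _ hW)
    obtain ⟨v, hv⟩ := (hS _ this).2
    rw [hv]; infer_instance
  have hI := hG.indepFun_of_covariance_eval (X := V) (Y := fun _ : Unit => W) (by
    intro k _
    obtain ⟨-, h1, h2⟩ := aux_memLp (hS _ (hV k)).2
    obtain ⟨-, h3, h4⟩ := aux_memLp (hS _ hW).2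
    rw [covariance_eq_sub h1 h3, h2, h4]
    simpa using h0 k)
  have hI2 : IndepFun W (fun ω => φ (fun k => V k ω)) μ :=
    (hI.comp hφ (measurable_pi_apply ())).symm
  have := condExp_indep_eq (μ := μ) (f := W) (hS _ hW).1.comap_le (hφ.comp hVm).comap_le
    (comap_measurable W).stronglyMeasurable hI2
  refine this.trans ?_
  rw [(aux_memLp (hS _ hW).2).2.2]
  rfl

lemma aux_proj {Ω : Type*} [mΩ : MeasurableSpace Ω] {μ : Measure Ω} [IsProbabilityMeasure μ]
    (S : Submodule ℝ (Ω → ℝ))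
    (hS : ∀ f ∈ S, Measurable f ∧ ∃ v : NNReal, μ.map f = gaussianReal 0 v)
    {κ E : Type*} [Fintype κ] [mE : MeasurableSpace E] (V : κ → Ω → ℝ) (hV : ∀ k, V k ∈ S)
    (φ : (κ → ℝ) → E) (hφ : Measurable φ)
    (T U : Ω → ℝ) (hT : T ∈ S) (hU : U ∈ S)
    (hUm : Measurable[MeasurableSpace.comap (fun ω => φ (fun k => V k ω)) mE] U)
    (h0 : ∀ k, ∫ ω, V k ω * (T ω - U ω) ∂μ = 0) :
    μ[T | MeasurableSpace.comap (fun ω => φ (fun k => V k ω)) mE] =ᵐ[μ] U := by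
  have hVm : Measurable fun ω k => V k ω := measurable_pi_lambda _ fun k => (hS _ (hV k)).1
  have hm := (hφ.comp hVm).comap_le
  have h1 := aux_cond S hS V hV φ hφ (T - U) (S.sub_mem hT hU) h0
  have iT : Integrable T μ := (aux_memLp (hS _ hT).2).1.integrable
  have iU : Integrable U μ := (aux_memLp (hS _ hU).2).1.integrable
  have h2 := condExp_sub (μ := μ) iT iU (MeasurableSpace.comap (fun ω => φ (fun k => V k ω)) mE)
  have h3 : μ[U | MeasurableSpace.comap (fun ω => φ (fun k => V k ω)) mE] = U :=
    condExp_of_stronglyMeasurable hm hUm.stronglyMeasurable iU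
  filter_upwards [h1, h2] with ω a b
  rw [a, h3] at b
  simp at b
  linarith

lemma aux_orth {Ω : Type*} [mΩ : MeasurableSpace Ω] {μ : Measure Ω} [IsProbabilityMeasure μ]
    (S : Submodule ℝ (Ω → ℝ))
    (hS : ∀ f ∈ S, Measurable f ∧ ∃ v : NNReal, μ.map f = gaussianReal 0 v)
    {ι : Type*} [Fintype ι] (h f : Ω → ℝ) (g : ι → Ω → ℝ) (c : ι → ℝ)
    (hh : h ∈ S) (hf : f ∈ S) (hg : ∀ l, g l ∈ S) :
    ∫ ω, h ω * (f ω - ∑ l, c l * g l ω) ∂μ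
      = ∫ ω, h ω * f ω ∂μ - ∑ l, c l * ∫ ω, g l ω * h ω ∂μ := by
  have hi : ∀ f ∈ S, ∀ g ∈ S, Integrable (fun ω => f ω * g ω) μ := fun f hf g hg =>
    (aux_memLp (hS _ hf).2).2.1.integrable_mul (aux_memLp (hS _ hg).2).2.1
  have e : (fun ω => h ω * (f ω - ∑ l, c l * g l ω))
      = fun ω => h ω * f ω - ∑ l, c l * (g l ω * h ω) := by
    ext ω
    rw [mul_sub, Finset.mul_sum]
    congr 1
    exact Finset.sum_congr rfl fun l _ => by ring
  rw [e, integral_sub (hi _ hh _ hf)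
    (integrable_finset_sum _ fun l _ => (hi _ (hg l) _ hh).const_mul _),
    integral_finset_sum _ fun l _ => (hi _ (hg l) _ hh).const_mul _]
  simp_rw [integral_const_mul]

theorem stmt8 {Ω : Type*} [MeasurableSpace Ω] (μ : Measure Ω) [IsProbabilityMeasure μ]
    (dx q n : ℕ) (dy : Fin n → ℕ)
    (x : Ω → Fin dx → ℝ) (y0 : Ω → Fin q → ℝ) (y : ∀ i : Fin n, Ω → Fin (dy i) → ℝ)
    (hx : Measurable x) (hy0 : Measurable y0) (hy : ∀ i, Measurable (y i))
    (hGauss : ∀ (a : Fin dx → ℝ) (b0 : Fin q → ℝ) (b : ∀ i, Fin (dy i) → ℝ),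
      ∃ v : NNReal,
        μ.map (fun ω => (∑ k, a k * x ω k) + (∑ k, b0 k * y0 ω k)
          + ∑ i, ∑ k, b i k * y i ω k) = gaussianReal 0 v)
    (Sigma00 : Matrix (Fin q) (Fin q) ℝ)
    (hSigma00 : ∀ k l, Sigma00 k l = ∫ ω, y0 ω k * y0 ω l ∂μ)
    (hinv0 : IsUnit Sigma00.det)
    (yhat : ∀ i : Fin n, Ω → Fin (dy i) → ℝ)
    (hyhat : ∀ i, yhat i = fun ω k =>
      (μ[(fun ω => y i ω k) | MeasurableSpace.comap y0 inferInstance]) ω)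
    (Sigmahat : ∀ i j, Matrix (Fin (dy i)) (Fin (dy j)) ℝ)
    (hSigmahat : ∀ i j k l, Sigmahat i j k l
      = ∫ ω, (y i ω k - yhat i ω k) * (y j ω l - yhat j ω l) ∂μ)
    (hinv : ∀ i, IsUnit (Sigmahat i i).det) :
    ∀ i j k,
      (μ[(fun ω => y j ω k - yhat j ω k) |
          MeasurableSpace.comap (fun ω => (y0 ω, y i ω)) inferInstance])
        =ᵐ[μ] fun ω =>
          (Sigmahat j i * (Sigmahat i i)⁻¹).mulVec (fun l => y i ω l - yhat i ω l) k := by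
  classical
  let S : Submodule ℝ (Ω → ℝ) :=
    { carrier := {f | ∃ (a : Fin dx → ℝ) (b0 : Fin q → ℝ) (b : ∀ i, Fin (dy i) → ℝ),
        f = fun ω => (∑ k, a k * x ω k) + (∑ k, b0 k * y0 ω k) + ∑ i, ∑ k, b i k * y i ω k}
      zero_mem' := ⟨0, 0, 0, by ext ω; simp⟩
      add_mem' := by
        rintro _ _ ⟨a, b0, b, rfl⟩ ⟨a', b0', b', rfl⟩
        refine ⟨a + a', b0 + b0', b + b', ?_⟩
        ext ω
        simp only [Pi.add_apply, add_mul, Finset.sum_add_distrib]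
        ring
      smul_mem' := by
        rintro c _ ⟨a, b0, b, rfl⟩
        refine ⟨c • a, c • b0, c • b, ?_⟩
        ext ω
        simp only [Pi.smul_apply, smul_eq_mul, mul_assoc, mul_add, Finset.mul_sum] }
  have hS : ∀ f ∈ S, Measurable f ∧ ∃ v : NNReal, μ.map f = gaussianReal 0 v := by
    rintro _ ⟨a, b0, b, rfl⟩
    refine ⟨?_, hGauss a b0 b⟩
    have := fun i => measurable_pi_iff.1 (hy i)
    have := measurable_pi_iff.1 hy0
    have := measurable_pi_iff.1 hx
    fun_prop
  have hS0 : ∀ k, (fun ω => y0 ω k) ∈ S := fun k =>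
    ⟨0, Pi.single k 1, 0, by ext ω; simp [Pi.single_apply]⟩
  have hSy : ∀ i k, (fun ω => y i ω k) ∈ S := fun i k =>
    ⟨0, 0, Pi.single i (Pi.single k 1), by
      ext ω
      rw [Finset.sum_eq_single i]
      · simp [Pi.single_apply]
      · intro j _ hj
        simp [Pi.single_eq_of_ne hj]
      · simp⟩
  have hcomb : ∀ {r : ℕ} (g : Fin r → Ω → ℝ) (c : Fin r → ℝ), (∀ l, g l ∈ S) →
      (fun ω => ∑ l, c l * g l ω) ∈ S := by
    intro r g c hg
    have : (fun ω => ∑ l, c l * g l ω) = ∑ l, c l • g l := by ext ω; simp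
    rw [this]
    exact S.sum_mem fun l _ => S.smul_mem _ (hg l)
  -- regression on `y0`
  let C0 : ∀ i, Matrix (Fin (dy i)) (Fin q) ℝ := fun i k l => ∫ ω, y0 ω l * y i ω k ∂μ
  let B : ∀ i, Matrix (Fin (dy i)) (Fin q) ℝ := fun i => C0 i * Sigma00⁻¹
  have hB : ∀ i, B i * Sigma00 = C0 i := fun i => by
    simp only [B]
    rw [Matrix.mul_assoc, Matrix.nonsing_inv_mul _ hinv0, Matrix.mul_one]
  let z : ∀ i : Fin n, Fin (dy i) → Ω → ℝ := fun i k ω => y i ω k - ∑ l, B i k l * y0 ω l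
  have hz : ∀ i k, z i k ∈ S := fun i k =>
    S.sub_mem (hSy i k) (hcomb (fun l ω => y0 ω l) (B i k) hS0)
  have hz0 : ∀ i k l, ∫ ω, y0 ω l * z i k ω ∂μ = 0 := by
    intro i k l
    have := aux_orth S hS (fun ω => y0 ω l) (fun ω => y i ω k) (fun l ω => y0 ω l) (B i k)
      (hS0 l) (hSy i k) hS0
    refine this.trans ?_
    have h := congrFun (congrFun (hB i) k) l
    simp only [Matrix.mul_apply, hSigma00] at h
    rw [h]
    exact sub_self _
  have hyz : ∀ i k, (fun ω => y i ω k - yhat i ω k) =ᵐ[μ] z i k := by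
    intro i k
    have := aux_proj S hS (fun l ω => y0 ω l) hS0 id measurable_id (fun ω => y i ω k)
      (fun ω => ∑ l, B i k l * y0 ω l) (hSy i k) (hcomb (fun l ω => y0 ω l) (B i k) hS0)
      (by
        have h : Measurable fun v : Fin q → ℝ => ∑ l, B i k l * v l := by fun_prop
        exact h.comp (comap_measurable _))
      (hz0 i k)
    filter_upwards [this] with ω hω
    rw [hyhat]
    exact congrArg (fun t => y i ω k - t) hω
  have hSz : ∀ i j k l, Sigmahat i j k l = ∫ ω, z i k ω * z j l ω ∂μ := by
    intro i j k l
    rw [hSigmahat]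
    refine integral_congr_ae ?_
    filter_upwards [hyz i k, hyz j l] with ω h1 h2
    rw [h1, h2]
  intro i j k
  let A := Sigmahat j i * (Sigmahat i i)⁻¹
  have hA : A * Sigmahat i i = Sigmahat j i := by
    simp only [A]
    rw [Matrix.mul_assoc, Matrix.nonsing_inv_mul _ (hinv i), Matrix.mul_one]
  have hU := hcomb (z i) (A k) (hz i)
  -- orthogonality
  have ho0 : ∀ l, ∫ ω, y0 ω l * (z j k ω - ∑ m, A k m * z i m ω) ∂μ = 0 := by
    intro l
    rw [aux_orth S hS (fun ω => y0 ω l) (z j k) (z i) (A k) (hS0 l) (hz j k) (hz i), hz0]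
    simp_rw [mul_comm (z i _ _), hz0]
    simp
  have hoz : ∀ l, ∫ ω, z i l ω * (z j k ω - ∑ m, A k m * z i m ω) ∂μ = 0 := by
    intro l
    rw [aux_orth S hS (z i l) (z j k) (z i) (A k) (hz i l) (hz j k) (hz i)]
    have h := congrFun (congrFun hA k) l
    simp only [Matrix.mul_apply, hSz] at h
    rw [h]
    simp_rw [mul_comm (z i l _)]
    exact sub_self _
  have hoy : ∀ l, ∫ ω, y i ω l * (z j k ω - ∑ m, A k m * z i m ω) ∂μ = 0 := by
    intro l
    have h := aux_orth S hS (fun ω => z j k ω - ∑ m, A k m * z i m ω) (fun ω => y i ω l)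
      (fun l ω => y0 ω l) (B i l) (S.sub_mem (hz j k) hU) (hSy i l) hS0
    simp only [ho0] at h
    have h' := hoz l
    simp_rw [mul_comm (z i l _)] at h'
    simp_rw [mul_comm (y i _ l)]
    have h2 := h.symm.trans h'
    simpa using h2
  have hmain := aux_proj S hS (Sum.elim (fun l ω => y0 ω l) (fun l ω => y i ω l))
    (by rintro (l | l); exacts [hS0 l, hSy i l])
    (fun v => ((fun l => v (Sum.inl l), fun l => v (Sum.inr l)) :
      (Fin q → ℝ) × (Fin (dy i) → ℝ))) (by fun_prop)
    (z j k) (fun ω => ∑ m, A k m * z i m ω) (hz j k) hU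
    (by
      have h : Measurable fun p : (Fin q → ℝ) × (Fin (dy i) → ℝ) =>
        ∑ m, A k m * (p.2 m - ∑ l, B i m l * p.1 l) := by fun_prop
      exact h.comp (comap_measurable (fun ω => (y0 ω, y i ω))))
    (by rintro (l | l); exacts [ho0 l, hoy l])
  refine (condExp_congr_ae (hyz j k)).trans (hmain.trans ?_)
  filter_upwards [ae_all_iff.2 fun m => hyz i m] with ω hω
  simp only [Matrix.mulVec, dotProduct]
  exact Finset.sum_congr rfl fun m _ => by rw [hω m]
end

section
/- Let n ∈ ℕ and let S = [S_ij]_{i,j=1}^n and P = [P_ij]_{i,j=1}^n be symmetric block matrices with blocks S_ij ∈ ℝ^{m_i × m_j} and P_ij ∈ ℝ^{p_i × p_j}. If S is positive definite, P is positive semi-definite, and each diagonal block P_ii is positive definite, then the block matrix Γ = [Γ_ij] with Γ_ij = P_ij ⊗ S_ij (Kronecker product) is positive definite; consequently, for any matrices L_j ∈ ℝ^{m_j × d}, the system Σ_{j=1}^n ( S_ij F_j P_ji − S_ij L_j P_ii ) = 0, i ∈ {1,…,n}, has the unique solution vec(F_1,…,F_n) = Γ⁻¹ η, where η = vec(S_{1•}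 L P_11, …, S_{n•} L P_nn) and S_{i•} L = Σ_j S_ij L_j. -/
open Matrix

open scoped MatrixOrder in
lemma psd_factor {ι : Type} [Fintype ι] [DecidableEq ι] {M : Matrix ι ι ℝ}
    (h : M.PosSemidef) : ∃ B : Matrix ι ι ℝ, M = Bᴴ * B :=
  CStarAlgebra.nonneg_iff_eq_star_mul_self.mp h.nonneg

/-- If the block matrix `S = [Sᵢⱼ]` is positive definite, the block matrix `P = [Pᵢⱼ]` is
positive semi-definite and every diagonal block `Pᵢᵢ` is positive definite, then the block
matrix `Γ` with blocks `Γᵢⱼ = Pᵢⱼ ⊗ Sᵢⱼ` is positive definite; consequently the system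
`Σⱼ (Sᵢⱼ Fⱼ Pⱼᵢ − Sᵢⱼ Lⱼ Pᵢᵢ) = 0, i = 1,…,n` has the unique solution
`vec(F₁,…,Fₙ) = Γ⁻¹ η` with `η = vec(S₁• L P₁₁, …, Sₙ• L Pₙₙ)`, `Sᵢ• L = Σⱼ Sᵢⱼ Lⱼ`. -/
theorem stmt10 (n d : ℕ) (m : Fin n → ℕ)
    (S : ∀ i j : Fin n, Matrix (Fin (m i)) (Fin (m j)) ℝ)
    (P : Fin n → Fin n → Matrix (Fin d) (Fin d) ℝ)
    (L : ∀ j : Fin n, Matrix (Fin (m j)) (Fin d) ℝ)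
    (Sbig : Matrix (Σ i : Fin n, Fin (m i)) (Σ i : Fin n, Fin (m i)) ℝ)
    (hSbig : ∀ (i j : Fin n) (r : Fin (m i)) (r' : Fin (m j)),
      Sbig ⟨i, r⟩ ⟨j, r'⟩ = S i j r r')
    (Pbig : Matrix (Fin n × Fin d) (Fin n × Fin d) ℝ)
    (hPbig : ∀ (i j : Fin n) (c c' : Fin d), Pbig (i, c) (j, c') = P i j c c')
    (hSpd : Sbig.PosDef) (hPpsd : Pbig.PosSemidef) (hPii : ∀ i, (P i i).PosDef)
    (Γ : Matrix (Σ i : Fin n, Fin d × Fin (m i)) (Σ j : Fin n, Fin d × Fin (m j)) ℝ)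
    (hΓ : ∀ (i j : Fin n) (c : Fin d) (r : Fin (m i)) (c' : Fin d) (r' : Fin (m j)),
      Γ ⟨i, (c, r)⟩ ⟨j, (c', r')⟩ = P i j c c' * S i j r r')
    (η : (Σ i : Fin n, Fin d × Fin (m i)) → ℝ)
    (hη : ∀ (i : Fin n) (c : Fin d) (r : Fin (m i)),
      η ⟨i, (c, r)⟩ = ((∑ j, S i j * L j) * P i i) r c) :
    Γ.PosDef ∧
    ∀ F : ∀ j : Fin n, Matrix (Fin (m j)) (Fin d) ℝ,
      (∀ i, ∑ j, (S i j * F j * P j i - S i j * L j * P i i) = 0)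
        ↔ (fun p : Σ i : Fin n, Fin d × Fin (m i) => F p.1 p.2.2 p.2.1)
            = Γ⁻¹.mulVec η := by
  classical
  have key : ∃ B : Matrix (Fin n × Fin d) (Fin n × Fin d) ℝ, Pbig = Bᴴ * B := by
    exact psd_factor hPpsd
  obtain ⟨B, hB⟩ := key
  have hPB : ∀ i j c c', P i j c c' = ∑ k, B k (i, c) * B k (j, c') := by
    intro i j c c'
    rw [← hPbig, hB]
    simp [Matrix.mul_apply]
  have hSsymm : ∀ i j r r', S i j r r' = S j i r' r := by
    intro i j r r'
    rw [← hSbig, ← hSbig]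
    simpa using (hSpd.isHermitian.apply ⟨i, r⟩ ⟨j, r'⟩).symm
  have hPsymm : ∀ i j c c', P i j c c' = P j i c' c := by
    intro i j c c'
    rw [hPB, hPB]
    exact Finset.sum_congr rfl fun k _ => mul_comm _ _
  have hpd : Γ.PosDef := by
    refine Matrix.PosDef.of_dotProduct_mulVec_pos ?_ ?_
    · ext ⟨i, c, r⟩ ⟨j, c', r'⟩
      simp only [Matrix.conjTranspose_apply, star_trivial, hΓ]
      rw [hPsymm, hSsymm]
    · intro x hx
      let y : (Fin n × Fin d) → (Σ i : Fin n, Fin (m i)) → ℝ :=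
        fun k p => ∑ c, B k (p.1, c) * x ⟨p.1, (c, p.2)⟩
      have hq : star x ⬝ᵥ Γ *ᵥ x = ∑ k, star (y k) ⬝ᵥ Sbig *ᵥ (y k) := by
        have hrow : ∀ i c r, (Γ *ᵥ x) ⟨i, (c, r)⟩ =
            ∑ k, B k (i, c) * (Sbig *ᵥ (y k)) ⟨i, r⟩ := by
          intro i c r
          simp only [dotProduct, mulVec, Fintype.sum_sigma,
            Fintype.sum_prod_type (α₁ := Fin d), hΓ, hSbig, hPB, y, Finset.mul_sum,
            Finset.sum_mul]
          conv_rhs => rw [Finset.sum_comm]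
          refine Finset.sum_congr rfl fun j _ => ?_
          rw [Finset.sum_comm]
          conv_rhs => rw [Finset.sum_comm]
          refine Finset.sum_congr rfl fun r' _ => ?_
          rw [Finset.sum_comm]
          refine Finset.sum_congr rfl fun k _ => Finset.sum_congr rfl fun c' _ => ?_
          ring
        rw [dotProduct, Fintype.sum_sigma]
        have hr : ∀ k, star (y k) ⬝ᵥ Sbig *ᵥ (y k) =
            ∑ i, ∑ r, y k ⟨i, r⟩ * (Sbig *ᵥ (y k)) ⟨i, r⟩ := by
          intro k
          rw [dotProduct, Fintype.sum_sigma]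
          rfl
        simp only [hr]
        conv_rhs => rw [Finset.sum_comm]
        refine Finset.sum_congr rfl fun i _ => ?_
        rw [Fintype.sum_prod_type, Finset.sum_comm]
        conv_rhs => rw [Finset.sum_comm]
        refine Finset.sum_congr rfl fun r _ => ?_
        simp only [hrow, Finset.mul_sum, Pi.star_apply, star_trivial]
        rw [Finset.sum_comm]
        refine Finset.sum_congr rfl fun k _ => ?_
        simp only [y, Finset.sum_mul]
        refine Finset.sum_congr rfl fun c _ => ?_
        ring
      have hnn : ∀ k, 0 ≤ star (y k) ⬝ᵥ Sbig *ᵥ (y k) := fun k =>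
        hSpd.posSemidef.dotProduct_mulVec_nonneg (y k)
      rw [hq]
      refine lt_of_le_of_ne (Finset.sum_nonneg fun k _ => hnn k) fun h0 => hx ?_
      have hy : ∀ k, y k = 0 := by
        intro k
        by_contra hne
        have h1 := (Finset.sum_eq_zero_iff_of_nonneg fun k _ => hnn k).mp h0.symm k (Finset.mem_univ k)
        exact (hSpd.dotProduct_mulVec_pos hne).ne' h1
      funext ⟨i, c, r⟩
      have hz : (fun c => x ⟨i, (c, r)⟩) = 0 := by
        by_contra hne
        refine ((hPii i).dotProduct_mulVec_pos hne).ne' ?_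
        have hv : P i i *ᵥ (fun c => x ⟨i, (c, r)⟩) = 0 := by
          funext c
          simp only [mulVec, dotProduct, hPB, Finset.sum_mul, Pi.zero_apply]
          rw [Finset.sum_comm]
          refine Finset.sum_eq_zero fun k _ => ?_
          have := congrFun (hy k) ⟨i, r⟩
          simp only [y, Pi.zero_apply] at this
          simp only [mul_assoc, ← Finset.mul_sum, this, mul_zero]
        rw [hv]; simp
      exact congrFun hz c
  refine ⟨hpd, fun F => ?_⟩
  have hu : IsUnit Γ.det := (Matrix.isUnit_iff_isUnit_det _).mp hpd.isUnit
  have h1 : ((fun p : Σ i : Fin n, Fin d × Fin (m i) => F p.1 p.2.2 p.2.1) = Γ⁻¹.mulVec η) ↔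
      Γ *ᵥ (fun p : Σ i : Fin n, Fin d × Fin (m i) => F p.1 p.2.2 p.2.1) = η := by
    constructor
    · intro h
      rw [h, Matrix.mulVec_mulVec, Matrix.mul_nonsing_inv _ hu, Matrix.one_mulVec]
    · intro h
      rw [← h, Matrix.mulVec_mulVec, Matrix.nonsing_inv_mul _ hu, Matrix.one_mulVec]
  have h2 : ∀ i c r, (Γ *ᵥ (fun p : Σ i : Fin n, Fin d × Fin (m i) => F p.1 p.2.2 p.2.1)) ⟨i, (c, r)⟩
      = (∑ j, S i j * F j * P j i) r c := by
    intro i c r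
    simp only [mulVec, dotProduct, Fintype.sum_sigma, Fintype.sum_prod_type, hΓ, Matrix.sum_apply,
      Matrix.mul_apply, Finset.sum_mul]
    refine Finset.sum_congr rfl fun j _ => Finset.sum_congr rfl fun c' _ =>
      Finset.sum_congr rfl fun r' _ => ?_
    rw [hPsymm i j]; ring
  rw [h1]
  simp only [Finset.sum_sub_distrib, sub_eq_zero, ← Matrix.sum_mul]
  constructor
  · intro h
    funext ⟨i, c, r⟩
    rw [h2, hη, h i]
  · intro h i
    ext r c
    rw [← hη, ← h2, h]
end

section
/- In the multi-agent Gaussian estimation problem, suppose the gains F_1, …, F_n (with F_i ∈ ℝ^{d_z^i × d_y^i}) satisfy Σ_{j=1}^n ( S_ij F_j Σ̂_ji − S_ij L_j Θ̂_i ) = 0 for every i ∈ {1,…,n}. Then the strategy g* given by ẑ_i = L_i x̂_0 + F_i ỹ_i minimizes the expected team estimation error: J(g*) ≤ J(g) for every measurable, square-integrable strategy g = (g_1,…,g_n) with ẑ_i = g_i(y_0, y_i). -/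
open MeasureTheory ProbabilityTheory Matrix

/-- A linear space of measurable centered Gaussian variables. -/
structure GaussSp {Ω : Type*} [MeasurableSpace Ω] (μ : Measure Ω) (V : Submodule ℝ (Ω → ℝ)) : Prop where
  meas : ∀ u ∈ V, Measurable u
  gauss : ∀ u ∈ V, ∃ v : NNReal, μ.map u = gaussianReal 0 v

namespace GaussSp
variable {Ω : Type*} [MeasurableSpace Ω] {μ : Measure Ω} [IsProbabilityMeasure μ]
  {V : Submodule ℝ (Ω → ℝ)}

theorem law (hV : GaussSp μ V) {u : Ω → ℝ} (hu : u ∈ V) : HasGaussianLaw u μ := by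
  obtain ⟨v, hv⟩ := hV.gauss u hu
  exact ⟨by rw [hv]; infer_instance⟩

theorem memLp (hV : GaussSp μ V) {u : Ω → ℝ} (hu : u ∈ V) : MemLp u 2 μ := (hV.law hu).memLp_two

theorem mean (hV : GaussSp μ V) {u : Ω → ℝ} (hu : u ∈ V) : ∫ ω, u ω ∂μ = 0 := by
  obtain ⟨v, hv⟩ := hV.gauss u hu
  have := integral_id_gaussianReal (μ := 0) (v := v)
  rw [← hv, integral_map (hV.meas u hu).aemeasurable (by fun_prop)] at this
  simpa using this

/-- Integration against a fixed element, as a linear functional. -/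
noncomputable def Ip (hV : GaussSp μ V) (p : V) : V →ₗ[ℝ] ℝ where
  toFun u := ∫ ω, (u : Ω → ℝ) ω * (p : Ω → ℝ) ω ∂μ
  map_add' u v := by
    rw [← integral_add]
    · simp [add_mul]
    · exact (hV.memLp u.2).integrable_mul (hV.memLp p.2)
    · exact (hV.memLp v.2).integrable_mul (hV.memLp p.2)
  map_smul' c u := by
    simp [mul_assoc, integral_const_mul]

theorem Ip_apply (hV : GaussSp μ V) (p u : V) :
    hV.Ip p u = ∫ ω, (u : Ω → ℝ) ω * (p : Ω → ℝ) ω ∂μ := rfl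

theorem Ip_comm (hV : GaussSp μ V) (p u : V) : hV.Ip p u = hV.Ip u p := by
  simp [Ip_apply, mul_comm]

theorem indep (hV : GaussSp μ V) {ι : Type*} [Fintype ι] (u : V) (w : ι → V)
    (h : ∀ k, hV.Ip (w k) u = 0) :
    IndepFun (u : Ω → ℝ) (fun ω k => (w k : Ω → ℝ) ω) μ := by
  classical
  have mu := hV.meas u u.2
  have mw : Measurable (fun ω k => (w k : Ω → ℝ) ω) :=
    measurable_pi_lambda _ fun k => hV.meas _ (w k).2
  have hj : HasGaussianLaw (fun ω => ((fun _ : Unit => (u : Ω → ℝ) ω),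
      (fun k => (w k : Ω → ℝ) ω))) μ := by
    have mj : Measurable (fun ω => ((fun _ : Unit => (u : Ω → ℝ) ω),
      (fun k => (w k : Ω → ℝ) ω))) := (measurable_pi_lambda _ fun k => mu).prodMk mw
    refine ⟨⟨fun L => ?_⟩⟩
    rw [Measure.map_map (by fun_prop) mj]
    have hmem : (L ∘ fun ω => ((fun _ : Unit => (u : Ω → ℝ) ω),
      (fun k => (w k : Ω → ℝ) ω))) ∈ V := by
      have : (L ∘ fun ω => ((fun _ : Unit => (u : Ω → ℝ) ω), (fun k => (w k : Ω → ℝ) ω)))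
        = ((L ((fun _ => 1), 0) • u + ∑ k, L (0, Pi.single k 1) • w k : V) : Ω → ℝ) := by
        ext ω
        have e : ((fun _ : Unit => (u : Ω → ℝ) ω), (fun k => (w k : Ω → ℝ) ω))
          = (u : Ω → ℝ) ω • ((fun _ => 1 : Unit → ℝ), (0 : ι → ℝ))
            + ∑ k, (w k : Ω → ℝ) ω • ((0 : Unit → ℝ), (Pi.single k 1 : ι → ℝ)) := by
          ext k
          · simp [Prod.fst_sum]
          · simp [Prod.snd_sum, Finset.sum_apply, Pi.single_apply]
        rw [Function.comp_apply, e, map_add, map_sum]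
        simp only [map_smul, smul_eq_mul]
        simp [Finset.sum_apply, mul_comm]
      rw [this]; exact Subtype.coe_prop _
    obtain ⟨v, hv⟩ := hV.gauss _ hmem
    have h2 := (hV.law hmem).map_eq_gaussianReal
    rw [h2, integral_map mj.aemeasurable (by fun_prop), variance_map (by fun_prop) mj.aemeasurable]
    rfl
  have := hj.indepFun_of_covariance_eval (X := fun _ : Unit => (u : Ω → ℝ))
    (Y := fun k => (w k : Ω → ℝ)) (by
      intro _ k
      rw [covariance_eq_sub (hV.memLp u.2) (hV.memLp (w k).2), hV.mean u.2, hV.mean (w k).2]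
      have := h k
      rw [Ip_apply] at this
      simpa using this)
  exact this.comp (φ := fun f : Unit → ℝ => f ()) (measurable_pi_apply _) measurable_id

theorem condexp (hV : GaussSp μ V) {q : ℕ} (y0 : Ω → Fin q → ℝ) (hy0 : Measurable y0)
    (w : Fin q → V) (hw : ∀ k, (w k : Ω → ℝ) = fun ω => y0 ω k)
    (M : Matrix (Fin q) (Fin q) ℝ) (hM : ∀ k l, M k l = hV.Ip (w l) (w k))
    (hdet : IsUnit M.det) (u : V) :
    ∃ c : Fin q → ℝ, (∀ l, hV.Ip (w l) (u - ∑ k, c k • w k) = 0) ∧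
      μ[(u : Ω → ℝ) | MeasurableSpace.comap y0 inferInstance] =ᵐ[μ]
        fun ω => ∑ k, c k * y0 ω k := by
  let b : Fin q → ℝ := fun l => hV.Ip (w l) u
  let c := b ᵥ* M⁻¹
  have hc : c ᵥ* M = b := by simp [c, Matrix.vecMul_vecMul, Matrix.nonsing_inv_mul M hdet]
  have ho : ∀ l, hV.Ip (w l) (u - ∑ k, c k • w k) = 0 := by
    intro l
    have := congrFun hc l
    simp only [Matrix.vecMul, dotProduct, hM] at this
    simp [this, b]
  refine ⟨c, ho, ?_⟩
  set d : V := u - ∑ k, c k • w k with hd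
  have hu : (u : Ω → ℝ) = (d : Ω → ℝ) + fun ω => ∑ k, c k * y0 ω k := by
    ext ω; simp [hd, hw, Finset.sum_apply]
  have hi := hV.indep d w ho
  have hy : (fun ω k => (w k : Ω → ℝ) ω) = y0 := by ext ω k; simp [hw]
  rw [hy] at hi
  have hm : Measurable[MeasurableSpace.comap y0 inferInstance] (fun ω => ∑ k, c k * y0 ω k) :=
    (show Measurable (fun v : Fin q → ℝ => ∑ k, c k * v k) by fun_prop).comp (comap_measurable y0)
  have hle := hy0.comap_le
  have hint : Integrable (fun ω => ∑ k, c k * y0 ω k) μ := by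
    have : (fun ω => ∑ k, c k * y0 ω k) = ((∑ k, c k • w k : V) : Ω → ℝ) := by
      ext ω; simp [hw, Finset.sum_apply]
    rw [this]; exact (hV.memLp (Subtype.coe_prop _)).integrable (by norm_num)
  have h1 := condExp_add (m := MeasurableSpace.comap y0 inferInstance)
    ((hV.memLp d.2).integrable (by norm_num)) hint
  have h2 := condExp_indep_eq (hV.meas d d.2).comap_le hle
    (comap_measurable (d : Ω → ℝ)).stronglyMeasurable (IndepFun_iff_Indep _ _ _ |>.1 hi)
  have h3 := condExp_of_stronglyMeasurable (μ := μ) hle hm.stronglyMeasurable hint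
  rw [hu]
  filter_upwards [h1, h2] with ω e1 e2
  rw [e1, Pi.add_apply, e2, h3, hV.mean d.2, zero_add]

end GaussSp

theorem quad_le {Ω : Type*} [MeasurableSpace Ω] {μ : Measure Ω} {I : Type*} [Fintype I]
    (S : Matrix I I ℝ) (hS : S.PosDef) (E D : I → Ω → ℝ)
    (hE : ∀ p, MemLp (E p) 2 μ) (hD : ∀ p, MemLp (D p) 2 μ)
    (h0 : ∀ p, ∫ ω, (∑ p', S p p' * E p' ω) * D p ω ∂μ = 0) :
    ∫ ω, (fun p => E p ω) ⬝ᵥ S *ᵥ (fun p => E p ω) ∂μ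
      ≤ ∫ ω, (fun p => E p ω + D p ω) ⬝ᵥ S *ᵥ (fun p => E p ω + D p ω) ∂μ := by
  have hint : ∀ A B : I → Ω → ℝ, (∀ p, MemLp (A p) 2 μ) → (∀ p, MemLp (B p) 2 μ) →
      Integrable (fun ω => (fun p => A p ω) ⬝ᵥ S *ᵥ (fun p => B p ω)) μ := by
    intro A B hA hB
    simp only [dotProduct, mulVec]
    refine integrable_finsetSum _ fun p _ => ?_
    exact (hA p).integrable_mul (memLp_finsetSum _ fun p' _ => (hB p').const_mul _)
  have hsym : S.IsSymm := by
    have := hS.1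
    rwa [Matrix.IsHermitian, Matrix.conjTranspose_eq_transpose_of_trivial] at this
  have key : ∀ ω, (fun p => E p ω + D p ω) ⬝ᵥ S *ᵥ (fun p => E p ω + D p ω)
      = (fun p => E p ω) ⬝ᵥ S *ᵥ (fun p => E p ω)
        + 2 * ((fun p => D p ω) ⬝ᵥ S *ᵥ (fun p => E p ω))
        + (fun p => D p ω) ⬝ᵥ S *ᵥ (fun p => D p ω) := by
    intro ω
    have e : (fun p => E p ω + D p ω) = (fun p => E p ω) + (fun p => D p ω) := rfl
    have s : (fun p => E p ω) ⬝ᵥ S *ᵥ (fun p => D p ω)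
        = (fun p => D p ω) ⬝ᵥ S *ᵥ (fun p => E p ω) := by
      rw [dotProduct_mulVec, ← mulVec_transpose, hsym.eq, dotProduct_comm]
    rw [e, mulVec_add, dotProduct_add, add_dotProduct, add_dotProduct, s]
    ring
  have hz : ∫ ω, (fun p => D p ω) ⬝ᵥ S *ᵥ (fun p => E p ω) ∂μ = 0 := by
    simp only [dotProduct, mulVec]
    rw [integral_finsetSum]
    · refine Finset.sum_eq_zero fun p _ => ?_
      rw [← h0 p]
      simp only [mul_comm (D p _)]
    · intro p _
      exact (hD p).integrable_mul (memLp_finsetSum _ fun p' _ => (hE p').const_mul _)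
  simp only [key]
  have hs : Integrable (fun ω => (fun p => E p ω) ⬝ᵥ S *ᵥ (fun p => E p ω)
        + 2 * ((fun p => D p ω) ⬝ᵥ S *ᵥ (fun p => E p ω))) μ :=
    (hint E E hE hE).add ((hint D E hD hE).const_mul 2)
  rw [integral_add hs (hint D D hD hD),
    integral_add (hint E E hE hE) ((hint D E hD hE).const_mul 2), integral_const_mul, hz]
  have : 0 ≤ ∫ ω, (fun p => D p ω) ⬝ᵥ S *ᵥ (fun p => D p ω) ∂μ :=
    integral_nonneg fun ω => by
      simpa using hS.posSemidef.dotProduct_mulVec_nonneg (fun p => D p ω)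
  linarith

theorem quad_sigma {n : ℕ} (dz : Fin n → ℕ)
    (S : ∀ i j : Fin n, Matrix (Fin (dz i)) (Fin (dz j)) ℝ)
    (Sbig : Matrix (Σ i : Fin n, Fin (dz i)) (Σ i : Fin n, Fin (dz i)) ℝ)
    (hSbig : ∀ (i j : Fin n) (r : Fin (dz i)) (r' : Fin (dz j)),
      Sbig ⟨i, r⟩ ⟨j, r'⟩ = S i j r r') (e : ∀ i, Fin (dz i) → ℝ) :
    ∑ i, ∑ j, (e i) ⬝ᵥ (S i j).mulVec (e j)
      = (fun p : Σ i, Fin (dz i) => e p.1 p.2) ⬝ᵥ Sbig *ᵥ (fun p => e p.1 p.2) := by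
  simp only [dotProduct, mulVec, Fintype.sum_sigma, hSbig, Finset.mul_sum]
  exact Finset.sum_congr rfl fun i _ => Finset.sum_comm



/-- Multi-agent Gaussian estimation: if the gains `F₁,…,Fₙ` satisfy
`Σⱼ (Sᵢⱼ Fⱼ Σ̂ⱼᵢ − Sᵢⱼ Lⱼ Θ̂ᵢ) = 0` for every `i`, then the strategy
`ẑᵢ = Lᵢ x̂₀ + Fᵢ ỹᵢ` minimizes the expected team estimation error
`J(g) = E[Σᵢⱼ (Lᵢ x − ẑᵢ)ᵀ Sᵢⱼ (Lⱼ x − ẑⱼ)]` over all measurable square-integrable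
strategies `ẑᵢ = gᵢ(y₀, yᵢ)`. -/
theorem stmt11 {Ω : Type*} [MeasurableSpace Ω] (μ : Measure Ω) [IsProbabilityMeasure μ]
    (dx q n : ℕ) (dy dz : Fin n → ℕ)
    (x : Ω → Fin dx → ℝ) (y0 : Ω → Fin q → ℝ) (y : ∀ i : Fin n, Ω → Fin (dy i) → ℝ)
    (hx : Measurable x) (hy0 : Measurable y0) (hy : ∀ i, Measurable (y i))
    (hGauss : ∀ (a : Fin dx → ℝ) (b0 : Fin q → ℝ) (b : ∀ i, Fin (dy i) → ℝ),
      ∃ v : NNReal,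
        μ.map (fun ω => (∑ k, a k * x ω k) + (∑ k, b0 k * y0 ω k)
          + ∑ i, ∑ k, b i k * y i ω k) = gaussianReal 0 v)
    (Sigma00 : Matrix (Fin q) (Fin q) ℝ)
    (hSigma00 : ∀ k l, Sigma00 k l = ∫ ω, y0 ω k * y0 ω l ∂μ)
    (hinv0 : IsUnit Sigma00.det)
    (xhat0 : Ω → Fin dx → ℝ)
    (hxhat0 : xhat0 = fun ω k =>
      (μ[(fun ω => x ω k) | MeasurableSpace.comap y0 inferInstance]) ω)
    (yhat : ∀ i : Fin n, Ω → Fin (dy i) → ℝ)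
    (hyhat : ∀ i, yhat i = fun ω k =>
      (μ[(fun ω => y i ω k) | MeasurableSpace.comap y0 inferInstance]) ω)
    (Θhat : ∀ i, Matrix (Fin dx) (Fin (dy i)) ℝ)
    (hΘhat : ∀ i k l, Θhat i k l = ∫ ω, x ω k * (y i ω l - yhat i ω l) ∂μ)
    (Sigmahat : ∀ i j, Matrix (Fin (dy i)) (Fin (dy j)) ℝ)
    (hSigmahat : ∀ i j k l, Sigmahat i j k l
      = ∫ ω, (y i ω k - yhat i ω k) * (y j ω l - yhat j ω l) ∂μ)
    (hinv : ∀ i, IsUnit (Sigmahat i i).det)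
    (L : ∀ i : Fin n, Matrix (Fin (dz i)) (Fin dx) ℝ)
    (S : ∀ i j : Fin n, Matrix (Fin (dz i)) (Fin (dz j)) ℝ)
    (Sbig : Matrix (Σ i : Fin n, Fin (dz i)) (Σ i : Fin n, Fin (dz i)) ℝ)
    (hSbig : ∀ (i j : Fin n) (r : Fin (dz i)) (r' : Fin (dz j)),
      Sbig ⟨i, r⟩ ⟨j, r'⟩ = S i j r r')
    (hSpd : Sbig.PosDef)
    (J : (∀ i : Fin n, Ω → Fin (dz i) → ℝ) → ℝ)
    (hJ : ∀ z, J z = ∫ ω, ∑ i, ∑ j,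
      ((L i).mulVec (x ω) - z i ω) ⬝ᵥ (S i j).mulVec ((L j).mulVec (x ω) - z j ω) ∂μ)
    (F : ∀ i : Fin n, Matrix (Fin (dz i)) (Fin (dy i)) ℝ)
    (hF : ∀ i, ∑ j, (S i j * F j * Sigmahat j i - S i j * L j * Θhat i) = 0) :
    ∀ g : ∀ i : Fin n, (Fin q → ℝ) × (Fin (dy i) → ℝ) → Fin (dz i) → ℝ,
      (∀ i, Measurable (g i)) →
      (∀ i k, MemLp (fun ω => g i (y0 ω, y i ω) k) 2 μ) →
      J (fun i ω => (L i).mulVec (xhat0 ω)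
            + (F i).mulVec (fun l => y i ω l - yhat i ω l))
        ≤ J (fun i ω => g i (y0 ω, y i ω)) := by
  intro g hg hgL
  classical
  -- the Gaussian space
  let V : Submodule ℝ (Ω → ℝ) :=
    { carrier := {u | ∃ (a : Fin dx → ℝ) (b0 : Fin q → ℝ) (b : ∀ i, Fin (dy i) → ℝ),
        u = fun ω => (∑ k, a k * x ω k) + (∑ k, b0 k * y0 ω k) + ∑ i, ∑ k, b i k * y i ω k}
      zero_mem' := ⟨0, 0, 0, by ext; simp⟩
      add_mem' := by
        rintro _ _ ⟨a, b0, b, rfl⟩ ⟨a', b0', b', rfl⟩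
        refine ⟨a + a', b0 + b0', b + b', ?_⟩
        ext ω
        simp only [Pi.add_apply, add_mul, Finset.sum_add_distrib]
        ring
      smul_mem' := by
        rintro c _ ⟨a, b0, b, rfl⟩
        refine ⟨c • a, c • b0, c • b, ?_⟩
        ext ω
        simp only [Pi.smul_apply, smul_eq_mul, mul_assoc, ← Finset.mul_sum]
        ring }
  have hV : GaussSp μ V := by
    constructor
    · rintro _ ⟨a, b0, b, rfl⟩
      have := fun i k => (measurable_pi_apply k).comp (hy i)
      have := fun k => (measurable_pi_apply k).comp hx
      have := fun k => (measurable_pi_apply k).comp hy0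
      fun_prop
    · rintro _ ⟨a, b0, b, rfl⟩
      exact hGauss a b0 b
  let xv : Fin dx → V := fun k => ⟨fun ω => x ω k, Pi.single k 1, 0, 0, by
    ext ω; simp [Pi.single_apply]⟩
  let wv : Fin q → V := fun k => ⟨fun ω => y0 ω k, 0, Pi.single k 1, 0, by
    ext ω; simp [Pi.single_apply]⟩
  let yv : ∀ i, Fin (dy i) → V := fun i k => ⟨fun ω => y i ω k, 0, 0,
    fun j => if h : i = j then fun l => if h ▸ k = l then 1 else 0 else 0, by
    ext ω
    rw [Finset.sum_eq_single i]
    · simp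
    · intro j _ hj
      simp [Ne.symm hj]
    · simp⟩
  have hce := hV.condexp y0 hy0 wv (fun k => rfl) Sigma00 hSigma00 hinv0
  choose cx hcx0 hcx using fun k => hce (xv k)
  choose cy hcy0 hcy using fun i k => hce (yv i k)
  let xt : Fin dx → V := fun k => xv k - ∑ l, cx k l • wv l
  let yt : ∀ i, Fin (dy i) → V := fun i k => yv i k - ∑ l, cy i k l • wv l
  have hxt : ∀ᵐ ω ∂μ, ∀ k, x ω k - xhat0 ω k = (xt k : Ω → ℝ) ω := by
    rw [ae_all_iff]; intro k
    filter_upwards [hcx k] with ω h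
    rw [hxhat0]
    simp only
    change x ω k - (μ[(xv k : Ω → ℝ) | MeasurableSpace.comap y0 inferInstance]) ω = _
    rw [h]
    simp [xt, xv, wv, Finset.sum_apply]
  have hyt : ∀ᵐ ω ∂μ, ∀ i k, y i ω k - yhat i ω k = (yt i k : Ω → ℝ) ω := by
    simp only [ae_all_iff]; intro i k
    filter_upwards [hcy i k] with ω h
    rw [hyhat]
    simp only
    change y i ω k - (μ[(yv i k : Ω → ℝ) | MeasurableSpace.comap y0 inferInstance]) ω = _
    rw [h]
    simp [yt, yv, wv, Finset.sum_apply]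
  have hΘ : ∀ i k l, Θhat i k l = hV.Ip (yt i l) (xt k) := by
    intro i k l
    have h1 : hV.Ip (yt i l) (xt k) = hV.Ip (yt i l) (xv k) := by
      have : ∀ m, hV.Ip (yt i l) (wv m) = 0 := fun m => by
        rw [hV.Ip_comm]; exact hcy0 i l m
      simp [xt, this]
    rw [h1, hΘhat, hV.Ip_apply]
    refine integral_congr_ae ?_
    filter_upwards [hyt] with ω h
    rw [h i l]
  have hSg : ∀ i j k l, Sigmahat i j k l = hV.Ip (yt j l) (yt i k) := by
    intro i j k l
    rw [hSigmahat, hV.Ip_apply]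
    refine integral_congr_ae ?_
    filter_upwards [hyt] with ω h
    rw [h i k, h j l]
  -- optimal error
  let ev : (Σ i : Fin n, Fin (dz i)) → V := fun p =>
    ∑ k, L p.1 p.2 k • xt k - ∑ l, F p.1 p.2 l • yt p.1 l
  let Wv : (Σ i : Fin n, Fin (dz i)) → V := fun p => ∑ p', Sbig p p' • ev p'
  have hWw : ∀ p m, hV.Ip (wv m) (Wv p) = 0 := by
    intro p m
    have h1 : ∀ k, hV.Ip (wv m) (xt k) = 0 := fun k => hcx0 k m
    have h2 : ∀ i k, hV.Ip (wv m) (yt i k) = 0 := fun i k => hcy0 i k m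
    simp only [Wv, ev, map_sum, map_sub, map_smul, h1, h2]
    simp
  have hWy : ∀ i r m, hV.Ip (yt i m) (Wv ⟨i, r⟩) = 0 := by
    intro i r m
    have h := congrFun (congrFun (hF i) r) m
    simp only [Matrix.sum_apply, Matrix.sub_apply, Matrix.mul_assoc] at h
    simp only [Matrix.mul_apply, hΘ, hSg, Matrix.zero_apply] at h
    simp only [Wv, ev, map_sum, map_sub, map_smul, smul_eq_mul, Fintype.sum_sigma, hSbig]
    rw [← neg_eq_zero, ← h, ← Finset.sum_neg_distrib]
    refine Finset.sum_congr rfl fun j _ => ?_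
    simp only [mul_sub, Finset.sum_sub_distrib]
    ring
  -- independence
  have hind : ∀ i r, IndepFun (Wv ⟨i, r⟩ : Ω → ℝ)
      (fun ω (k : Fin q ⊕ Fin (dy i)) => ((Sum.elim wv (yt i) k : V) : Ω → ℝ) ω) μ := by
    intro i r
    refine hV.indep _ _ ?_
    rintro (k | k)
    · exact hWw _ k
    · exact hWy i r k
  -- deviation
  let D : (Σ i : Fin n, Fin (dz i)) → Ω → ℝ := fun p ω =>
    ((∑ k, L p.1 p.2 k * ∑ l, cx k l * y0 ω l) + ∑ l, F p.1 p.2 l * (yt p.1 l : Ω → ℝ) ω)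
      - g p.1 (y0 ω, y p.1 ω) p.2
  have hDL : ∀ p, MemLp (D p) 2 μ := by
    intro p
    refine MemLp.sub (MemLp.add ?_ ?_) (hgL p.1 p.2)
    · refine memLp_finsetSum _ fun k _ => MemLp.const_mul ?_ _
      exact memLp_finsetSum _ fun l _ => (hV.memLp (wv l).2).const_mul _
    · exact memLp_finsetSum _ fun l _ => (hV.memLp (yt p.1 l).2).const_mul _
  have hD0 : ∀ p, ∫ ω, (∑ p', Sbig p p' * (ev p' : Ω → ℝ) ω) * D p ω ∂μ = 0 := by
    rintro ⟨i, r⟩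
    have e1 : ∀ ω, (∑ p', Sbig ⟨i, r⟩ p' * (ev p' : Ω → ℝ) ω) = (Wv ⟨i, r⟩ : Ω → ℝ) ω := by
      intro ω; simp [Wv, Finset.sum_apply]
    simp only [e1]
    let φ : (Fin q ⊕ Fin (dy i) → ℝ) → ℝ := fun v =>
      ((∑ k, L i r k * ∑ l, cx k l * v (Sum.inl l)) + ∑ l, F i r l * v (Sum.inr l))
      - g i (fun l => v (Sum.inl l),
          fun m => v (Sum.inr m) + ∑ l, cy i m l * v (Sum.inl l)) r
    have hφ : Measurable φ := by
      have : Measurable (fun v : Fin q ⊕ Fin (dy i) → ℝ => g i (fun l => v (Sum.inl l),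
          fun m => v (Sum.inr m) + ∑ l, cy i m l * v (Sum.inl l)) r) := by
        refine (measurable_pi_apply r).comp ((hg i).comp ?_)
        fun_prop
      fun_prop
    have hφD : (φ ∘ fun ω (k : Fin q ⊕ Fin (dy i)) =>
        ((Sum.elim wv (yt i) k : V) : Ω → ℝ) ω) = D ⟨i, r⟩ := by
      ext ω
      have e2 : (fun m => (yt i m : Ω → ℝ) ω + ∑ l, cy i m l * y0 ω l) = y i ω := by
        ext m; simp [yt, yv, wv, Finset.sum_apply]
      simp only [φ, D, Function.comp_apply, Sum.elim_inl, Sum.elim_inr]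
      change _ - g i (y0 ω, fun m => (yt i m : Ω → ℝ) ω + ∑ l, cy i m l * y0 ω l) r = _
      rw [e2]
    have hi := (hind i r).comp measurable_id hφ
    rw [hφD, Function.id_comp] at hi
    rw [hi.integral_fun_mul_eq_mul_integral (hV.memLp (Wv _).2).1 (hDL _).1,
      hV.mean (Wv _).2, zero_mul]
  have main := quad_le Sbig hSpd (fun p => (ev p : Ω → ℝ)) D (fun p => hV.memLp (ev p).2) hDL hD0
  rw [hJ, hJ]
  simp only [quad_sigma dz S Sbig hSbig]
  refine le_of_eq_of_le (integral_congr_ae ?_) (main.trans (le_of_eq (integral_congr_ae ?_)))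
  · filter_upwards [hxt, hyt] with ω h1 h2
    have : (fun p : Σ i, Fin (dz i) => (L p.1 *ᵥ x ω - (L p.1 *ᵥ xhat0 ω
        + F p.1 *ᵥ fun l => y p.1 ω l - yhat p.1 ω l)) p.2) = fun p => (ev p : Ω → ℝ) ω := by
      ext p
      simp only [h2, ← sub_sub, ← mulVec_sub]
      simp [ev, ← h1, mulVec, dotProduct, Finset.sum_apply]
    simp only [this]
  · refine Filter.Eventually.of_forall fun ω => ?_
    have : (fun p : Σ i, Fin (dz i) => (ev p : Ω → ℝ) ω + D p ω)
        = (fun p => (L p.1 *ᵥ x ω - g p.1 (y0 ω, y p.1 ω)) p.2) := by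
      ext p
      have : ∀ k, (xt k : Ω → ℝ) ω = x ω k - ∑ l, cx k l * y0 ω l := by
        intro k; simp [xt, xv, wv, Finset.sum_apply]
      simp [ev, D, this, mulVec, dotProduct, Finset.sum_apply, mul_sub, Finset.sum_sub_distrib]
      ring
    simp only [this]
end

section
/- In the multi-agent Gaussian estimation problem, a linear strategy of the form ẑ_i = L_i x̂_0 + F_i ỹ_i minimizes the expected team estimation error J over all measurable square-integrable strategies if and only if the gains satisfy Σ_{j=1}^n ( S_ij F_j Σ̂_ji − S_ij L_j Θ̂_i ) Σ̂_ii⁻¹ = 0 for all i ∈ {1,…,n}, equivalently Σ_{j=1}^n ( S_ij F_j Σ̂_ji − S_ij L_j Θ̂_i ) = 0 for all i. -/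
open MeasureTheory ProbabilityTheory Matrix

section helpers

set_option linter.unusedSectionVars false

/-- A linear space of centered Gaussian random variables. -/
structure GSpace {Ω : Type*} [MeasurableSpace Ω] (μ : Measure Ω) (G : Submodule ℝ (Ω → ℝ)) :
    Prop where
  meas : ∀ u ∈ G, Measurable u
  gauss : ∀ u ∈ G, ∃ v : NNReal, μ.map u = gaussianReal 0 v

variable {Ω : Type*} [MeasurableSpace Ω] {μ : Measure Ω} [IsProbabilityMeasure μ]
  {G : Submodule ℝ (Ω → ℝ)}

lemma GSpace.memLp (hG : GSpace μ G) {u : Ω → ℝ} (hu : u ∈ G) : MemLp u 2 μ := by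
  obtain ⟨v, hv⟩ := hG.gauss u hu
  have h := memLp_id_gaussianReal' (μ := 0) (v := v) 2 (by simp)
  rw [← hv] at h
  exact (memLp_map_measure_iff (by fun_prop) (hG.meas u hu).aemeasurable).1 h

lemma GSpace.integral (hG : GSpace μ G) {u : Ω → ℝ} (hu : u ∈ G) : ∫ ω, u ω ∂μ = 0 := by
  obtain ⟨v, hv⟩ := hG.gauss u hu
  have h := integral_id_gaussianReal (μ := 0) (v := v)
  rw [← hv, integral_map (hG.meas u hu).aemeasurable (by fun_prop)] at h
  exact h

lemma GSpace.intmul (hG : GSpace μ G) {u w : Ω → ℝ} (hu : u ∈ G) (hw : w ∈ G) :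
    Integrable (fun ω => u ω * w ω) μ := (hG.memLp hu).integrable_mul (hG.memLp hw)

lemma GSpace.sum_mem (c : κ → ℝ) [Fintype κ] (v : κ → Ω → ℝ) (hv : ∀ k, v k ∈ G) :
    (fun ω => ∑ k, c k * v k ω) ∈ G := by
  have : (fun ω => ∑ k, c k * v k ω) = ∑ k, c k • v k := by
    ext ω; simp [Finset.sum_apply]
  rw [this]
  exact Submodule.sum_mem _ fun k _ => G.smul_mem _ (hv k)

lemma GSpace.indep (hG : GSpace μ G) {κ : Type*} [Fintype κ] {u : Ω → ℝ} (hu : u ∈ G)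
    (v : κ → Ω → ℝ) (hv : ∀ k, v k ∈ G) (h0 : ∀ k, ∫ ω, u ω * v k ω ∂μ = 0) :
    IndepFun u (fun ω k => v k ω) μ := by
  have hmv : Measurable (fun ω k => v k ω) := measurable_pi_lambda _ fun k => hG.meas _ (hv k)
  have hmu := hG.meas _ hu
  have key : HasGaussianLaw (fun ω ↦ ((fun _ : Unit => u ω), fun k ↦ v k ω)) μ := by
    constructor
    apply isGaussian_of_map_eq_gaussianReal
    intro Λ
    have hmem : (fun ω => Λ ((fun _ : Unit => u ω), fun k ↦ v k ω)) ∈ G := by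
      classical
      have : (fun ω => Λ ((fun _ : Unit => u ω), fun k ↦ v k ω)) =
          Λ ((fun _ => 1), 0) • u + fun ω => ∑ k, Λ (0, Pi.single k 1) * v k ω := by
        ext ω
        have e : ((fun _ : Unit => u ω), fun k ↦ v k ω) =
          u ω • ((fun _ : Unit => (1:ℝ)), (0 : κ → ℝ)) +
            ∑ k, v k ω • ((0 : Unit → ℝ), (Pi.single k 1 : κ → ℝ)) := by
          refine Prod.ext ?_ ?_
          · ext; simp [Prod.fst_sum]
          · ext k; simp [Prod.snd_sum, Finset.sum_apply, Pi.single_apply]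
        rw [e, map_add, map_sum, map_smul]
        simp only [map_smul, smul_eq_mul, Pi.add_apply, Pi.smul_apply]
        rw [mul_comm]
        congr 1
        exact Finset.sum_congr rfl fun k _ => mul_comm _ _
      rw [this]
      exact G.add_mem (G.smul_mem _ hu) (GSpace.sum_mem _ _ hv)
    obtain ⟨s, hs⟩ := hG.gauss _ hmem
    refine ⟨0, s, ?_⟩
    rw [Measure.map_map (by fun_prop) ((measurable_pi_lambda _ fun _ => hmu).prodMk hmv)]
    exact hs
  have := HasGaussianLaw.indepFun_of_covariance_eval (X := fun _ : Unit => u) (Y := v) key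
    (fun _ k => by
      rw [covariance_eq_sub (hG.memLp hu) (hG.memLp (hv k)), hG.integral hu]
      simp [h0 k])
  exact this.comp (φ := fun f : Unit → ℝ => f ()) (measurable_pi_apply ()) measurable_id

lemma GSpace.condExp (hG : GSpace μ G) {q : ℕ} {y0 : Ω → Fin q → ℝ} (hy0 : Measurable y0)
    (hy : ∀ k, (fun ω => y0 ω k) ∈ G)
    (M : Matrix (Fin q) (Fin q) ℝ)
    (hM : ∀ k l, M k l = ∫ ω, y0 ω k * y0 ω l ∂μ)
    (hinv0 : IsUnit M.det) {u : Ω → ℝ} (hu : u ∈ G) :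
    ∃ c : Fin q → ℝ, (μ[u | MeasurableSpace.comap y0 inferInstance]) =ᵐ[μ]
        (fun ω => ∑ k, c k * y0 ω k) ∧
      ∀ l, ∫ ω, (u ω - ∑ k, c k * y0 ω k) * y0 ω l ∂μ = 0 := by
  set p : Fin q → ℝ := fun l => ∫ ω, u ω * y0 ω l ∂μ with hp
  set c := p ᵥ* M⁻¹ with hc
  have hcM : c ᵥ* M = p := by
    rw [hc, Matrix.vecMul_vecMul, Matrix.nonsing_inv_mul _ hinv0, Matrix.vecMul_one]
  have hcG : (fun ω => ∑ k, c k * y0 ω k) ∈ G :=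
    GSpace.sum_mem c (fun k ω => y0 ω k) hy
  have horth : ∀ l, ∫ ω, (u ω - ∑ k, c k * y0 ω k) * y0 ω l ∂μ = 0 := by
    intro l
    simp_rw [sub_mul]
    rw [integral_sub (hG.intmul hu (hy l)) (hG.intmul hcG (hy l))]
    simp_rw [Finset.sum_mul]
    rw [integral_finsetSum _ (fun k _ => by
      simp_rw [mul_assoc]; exact (hG.intmul (hy k) (hy l)).const_mul _)]
    simp_rw [mul_assoc, integral_const_mul, ← hM]
    have := congrFun hcM l
    simp only [Matrix.vecMul, dotProduct] at this
    rw [this]; simp [hp]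
  refine ⟨c, ?_, horth⟩
  have hrG : (fun ω => u ω - ∑ k, c k * y0 ω k) ∈ G := G.sub_mem hu hcG
  have hind := hG.indep hrG (fun k ω => y0 ω k) hy horth
  have h1 := condExp_indep_eq (f := fun ω => u ω - ∑ k, c k * y0 ω k) (hG.meas _ hrG).comap_le
    hy0.comap_le
    (comap_measurable _).stronglyMeasurable hind
  have hiu := (hG.memLp hu).integrable one_le_two
  have hic := (hG.memLp hcG).integrable one_le_two
  have h2 := condExp_sub hiu hic (MeasurableSpace.comap y0 inferInstance)
  have h3 : μ[(fun ω => ∑ k, c k * y0 ω k) | MeasurableSpace.comap y0 inferInstance]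
      = (fun ω => ∑ k, c k * y0 ω k) := by
    refine condExp_of_stronglyMeasurable hy0.comap_le ?_ hic
    have : Measurable[MeasurableSpace.comap y0 inferInstance] y0 := comap_measurable _
    apply Measurable.stronglyMeasurable
    exact (show Measurable (fun z : Fin q → ℝ => ∑ k, c k * z k) by fun_prop).comp this
  rw [h3] at h2
  have h4 : ∫ ω, (u ω - ∑ k, c k * y0 ω k) ∂μ = 0 := hG.integral hrG
  filter_upwards [h1, h2] with ω h1 h2
  change _ = (_ - _ : ℝ) at h2
  rw [h4] at h1
  have h5 := h2.symm.trans h1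
  linarith

lemma GSpace.orth (hG : GSpace μ G) {κ : Type*} [Fintype κ] {u : Ω → ℝ} (hu : u ∈ G)
    (v : κ → Ω → ℝ) (hv : ∀ k, v k ∈ G) (h0 : ∀ k, ∫ ω, u ω * v k ω ∂μ = 0)
    (h : (κ → ℝ) → ℝ) (hh : Measurable h) : ∫ ω, u ω * h (fun k => v k ω) ∂μ = 0 := by
  have hmv : Measurable (fun ω k => v k ω) := measurable_pi_lambda _ fun k => hG.meas _ (hv k)
  have := (hG.indep hu v hv h0).comp measurable_id hh
  have h2 := this.integral_fun_mul_eq_mul_integral (hG.meas _ hu).aestronglyMeasurable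
    (hh.comp hmv).aestronglyMeasurable
  simp only [Function.comp, id] at h2
  rw [h2, hG.integral hu, zero_mul]

/-- The quadratic cost. -/
noncomputable def qcost {A : Type*} [Fintype A] (μ : Measure Ω) (S : Matrix A A ℝ)
    (r : A → Ω → ℝ) : ℝ :=
  ∫ ω, ∑ a, ∑ b, r a ω * (S a b * r b ω) ∂μ

lemma quad_id {A : Type*} [Fintype A] (S : Matrix A A ℝ) (hS : ∀ a b, S a b = S b a)
    (r d : A → ℝ) : ∑ a, ∑ b, (r a - d a) * (S a b * (r b - d b)) =
      ∑ a, ∑ b, r a * (S a b * r b) - 2 * ∑ a, (∑ b, S a b * r b) * d a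
        + ∑ a, ∑ b, d a * (S a b * d b) := by
  have h1 : ∑ a, ∑ b, r a * (S a b * d b) = ∑ a, (∑ b, S a b * r b) * d a := by
    rw [Finset.sum_comm]
    refine Finset.sum_congr rfl fun a _ => ?_
    rw [Finset.sum_mul]
    refine Finset.sum_congr rfl fun b _ => ?_
    rw [hS b a]; ring
  have h2 : ∑ a, ∑ b, d a * (S a b * r b) = ∑ a, (∑ b, S a b * r b) * d a := by
    refine Finset.sum_congr rfl fun a _ => ?_
    rw [Finset.sum_mul]
    refine Finset.sum_congr rfl fun b _ => ?_
    ring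
  have h3 : ∀ a b, (r a - d a) * (S a b * (r b - d b)) = r a * (S a b * r b)
    - r a * (S a b * d b) - d a * (S a b * r b) + d a * (S a b * d b) := by intros; ring
  simp_rw [h3, Finset.sum_add_distrib, Finset.sum_sub_distrib]
  rw [h1, h2]; ring

lemma qcost_sub {A : Type*} [Fintype A] (S : Matrix A A ℝ) (hS : ∀ a b, S a b = S b a)
    (r d : A → Ω → ℝ) (hr : ∀ a, MemLp (r a) 2 μ) (hd : ∀ a, MemLp (d a) 2 μ) :
    qcost μ S (fun a ω => r a ω - d a ω) =
      qcost μ S r - 2 * ∑ a, ∫ ω, (∑ b, S a b * r b ω) * d a ω ∂μ + qcost μ S d := by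
  have hq : ∀ f : A → Ω → ℝ, (∀ a, MemLp (f a) 2 μ) →
      Integrable (fun ω => ∑ a, ∑ b, f a ω * (S a b * f b ω)) μ := fun f hf =>
    integrable_finsetSum _ fun a _ => integrable_finsetSum _ fun b _ =>
      (hf a).integrable_mul ((hf b).const_mul _)
  have hm : ∀ a, Integrable (fun ω => (∑ b, S a b * r b ω) * d a ω) μ := fun a =>
    (memLp_finsetSum _ fun b _ => (hr b).const_mul _).integrable_mul (hd a)
  unfold qcost
  simp_rw [quad_id S hS (fun a => r a _) (fun a => d a _)]
  have hs : Integrable (fun ω => 2 * ∑ a, (∑ b, S a b * r b ω) * d a ω) μ :=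
    (integrable_finsetSum _ fun a _ => hm a).const_mul 2
  have hrs : Integrable (fun ω => ∑ a, ∑ b, r a ω * (S a b * r b ω) -
    2 * ∑ a, (∑ b, S a b * r b ω) * d a ω) μ := (hq r hr).sub hs
  rw [integral_add hrs (hq d hd), integral_sub (hq r hr) hs,
    integral_const_mul, integral_finsetSum _ fun a _ => hm a]

lemma qcost_nonneg {A : Type*} [Fintype A] (S : Matrix A A ℝ) (hS : S.PosDef)
    (d : A → Ω → ℝ) : 0 ≤ qcost μ S d := by
  refine integral_nonneg fun ω => ?_
  have := hS.posSemidef.dotProduct_mulVec_nonneg (fun a => d a ω)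
  simpa [dotProduct, mulVec, Finset.mul_sum] using this

lemma qcost_smul {A : Type*} [Fintype A] (S : Matrix A A ℝ)
    (d : A → Ω → ℝ) (t : ℝ) : qcost μ S (fun a ω => t * d a ω) = t ^ 2 * qcost μ S d := by
  unfold qcost
  rw [← integral_const_mul]
  congr 1; ext ω
  simp_rw [Finset.mul_sum]
  refine Finset.sum_congr rfl fun a _ => Finset.sum_congr rfl fun b _ => by ring

lemma qcost_min {A : Type*} [Fintype A] (S : Matrix A A ℝ) (hS : ∀ a b, S a b = S b a)
    (r d : A → Ω → ℝ) (hr : ∀ a, MemLp (r a) 2 μ) (hd : ∀ a, MemLp (d a) 2 μ)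
    (h : ∀ t : ℝ, qcost μ S r ≤ qcost μ S (fun a ω => r a ω - t * d a ω)) :
    ∑ a, ∫ ω, (∑ b, S a b * r b ω) * d a ω ∂μ = 0 := by
  have h' : ∀ t : ℝ, 0 ≤ - 2 * t * ∑ a, ∫ ω, (∑ b, S a b * r b ω) * d a ω ∂μ +
      t ^ 2 * qcost μ S d := by
    intro t
    have := h t
    rw [qcost_sub S hS r (fun a ω => t * d a ω) hr (fun a => (hd a).const_mul t),
      qcost_smul] at this
    have e : ∑ a, ∫ ω, (∑ b, S a b * r b ω) * (t * d a ω) ∂μ =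
        t * ∑ a, ∫ ω, (∑ b, S a b * r b ω) * d a ω ∂μ := by
      rw [Finset.mul_sum]
      refine Finset.sum_congr rfl fun a _ => ?_
      rw [← integral_const_mul]
      congr 1; ext ω; ring
    rw [e] at this
    linarith
  set B := ∑ a, ∫ ω, (∑ b, S a b * r b ω) * d a ω ∂μ
  set C := qcost μ S d
  have hd := discrim_le_zero (a := C) (b := -2 * B) (c := 0) (fun t => by
    have := h' t; nlinarith)
  unfold discrim at hd
  nlinarith [sq_nonneg B]

lemma GSpace.int_sum_mul (hG : GSpace μ G) {κ : Type*} [Fintype κ] (c : κ → ℝ) (v : κ → Ω → ℝ)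
    (hv : ∀ k, v k ∈ G) {w : Ω → ℝ} (hw : w ∈ G) :
    ∫ ω, (∑ k, c k * v k ω) * w ω ∂μ = ∑ k, c k * ∫ ω, v k ω * w ω ∂μ := by
  simp_rw [Finset.sum_mul, mul_assoc]
  rw [integral_finsetSum _ (fun k _ => (hG.intmul (hv k) hw).const_mul _)]
  simp_rw [integral_const_mul]

lemma GSpace.int_sub_mul (hG : GSpace μ G) {u v w : Ω → ℝ} (hu : u ∈ G)
    (hv : v ∈ G) (hw : w ∈ G) :
    ∫ ω, (u ω - v ω) * w ω ∂μ = ∫ ω, u ω * w ω ∂μ - ∫ ω, v ω * w ω ∂μ := by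
  simp_rw [sub_mul]
  rw [integral_sub (hG.intmul hu hw) (hG.intmul hv hw)]

end helpers

/-- Multi-agent Gaussian estimation: a linear strategy `ẑᵢ = Lᵢ x̂₀ + Fᵢ ỹᵢ` minimizes
the expected team estimation error over all measurable square-integrable strategies if
and only if `Σⱼ (Sᵢⱼ Fⱼ Σ̂ⱼᵢ − Sᵢⱼ Lⱼ Θ̂ᵢ) Σ̂ᵢᵢ⁻¹ = 0` for all `i`, equivalently
`Σⱼ (Sᵢⱼ Fⱼ Σ̂ⱼᵢ − Sᵢⱼ Lⱼ Θ̂ᵢ) = 0` for all `i`. -/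
theorem stmt12 {Ω : Type*} [MeasurableSpace Ω] (μ : Measure Ω) [IsProbabilityMeasure μ]
    (dx q n : ℕ) (dy dz : Fin n → ℕ)
    (x : Ω → Fin dx → ℝ) (y0 : Ω → Fin q → ℝ) (y : ∀ i : Fin n, Ω → Fin (dy i) → ℝ)
    (hx : Measurable x) (hy0 : Measurable y0) (hy : ∀ i, Measurable (y i))
    (hGauss : ∀ (a : Fin dx → ℝ) (b0 : Fin q → ℝ) (b : ∀ i, Fin (dy i) → ℝ),
      ∃ v : NNReal,
        μ.map (fun ω => (∑ k, a k * x ω k) + (∑ k, b0 k * y0 ω k)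
          + ∑ i, ∑ k, b i k * y i ω k) = gaussianReal 0 v)
    (Sigma00 : Matrix (Fin q) (Fin q) ℝ)
    (hSigma00 : ∀ k l, Sigma00 k l = ∫ ω, y0 ω k * y0 ω l ∂μ)
    (hinv0 : IsUnit Sigma00.det)
    (xhat0 : Ω → Fin dx → ℝ)
    (hxhat0 : xhat0 = fun ω k =>
      (μ[(fun ω => x ω k) | MeasurableSpace.comap y0 inferInstance]) ω)
    (yhat : ∀ i : Fin n, Ω → Fin (dy i) → ℝ)
    (hyhat : ∀ i, yhat i = fun ω k =>
      (μ[(fun ω => y i ω k) | MeasurableSpace.comap y0 inferInstance]) ω)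
    (Θhat : ∀ i, Matrix (Fin dx) (Fin (dy i)) ℝ)
    (hΘhat : ∀ i k l, Θhat i k l = ∫ ω, x ω k * (y i ω l - yhat i ω l) ∂μ)
    (Sigmahat : ∀ i j, Matrix (Fin (dy i)) (Fin (dy j)) ℝ)
    (hSigmahat : ∀ i j k l, Sigmahat i j k l
      = ∫ ω, (y i ω k - yhat i ω k) * (y j ω l - yhat j ω l) ∂μ)
    (hinv : ∀ i, IsUnit (Sigmahat i i).det)
    (L : ∀ i : Fin n, Matrix (Fin (dz i)) (Fin dx) ℝ)
    (S : ∀ i j : Fin n, Matrix (Fin (dz i)) (Fin (dz j)) ℝ)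
    (Sbig : Matrix (Σ i : Fin n, Fin (dz i)) (Σ i : Fin n, Fin (dz i)) ℝ)
    (hSbig : ∀ (i j : Fin n) (r : Fin (dz i)) (r' : Fin (dz j)),
      Sbig ⟨i, r⟩ ⟨j, r'⟩ = S i j r r')
    (hSpd : Sbig.PosDef)
    (J : (∀ i : Fin n, Ω → Fin (dz i) → ℝ) → ℝ)
    (hJ : ∀ z, J z = ∫ ω, ∑ i, ∑ j,
      ((L i).mulVec (x ω) - z i ω) ⬝ᵥ (S i j).mulVec ((L j).mulVec (x ω) - z j ω) ∂μ)
    (F : ∀ i : Fin n, Matrix (Fin (dz i)) (Fin (dy i)) ℝ) :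
    ((∀ g : ∀ i : Fin n, (Fin q → ℝ) × (Fin (dy i) → ℝ) → Fin (dz i) → ℝ,
        (∀ i, Measurable (g i)) →
        (∀ i k, MemLp (fun ω => g i (y0 ω, y i ω) k) 2 μ) →
        J (fun i ω => (L i).mulVec (xhat0 ω)
              + (F i).mulVec (fun l => y i ω l - yhat i ω l))
          ≤ J (fun i ω => g i (y0 ω, y i ω)))
      ↔ (∀ i, (∑ j, (S i j * F j * Sigmahat j i - S i j * L j * Θhat i))
                * (Sigmahat i i)⁻¹ = 0)) ∧
    ((∀ g : ∀ i : Fin n, (Fin q → ℝ) × (Fin (dy i) → ℝ) → Fin (dz i) → ℝ,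
        (∀ i, Measurable (g i)) →
        (∀ i k, MemLp (fun ω => g i (y0 ω, y i ω) k) 2 μ) →
        J (fun i ω => (L i).mulVec (xhat0 ω)
              + (F i).mulVec (fun l => y i ω l - yhat i ω l))
          ≤ J (fun i ω => g i (y0 ω, y i ω)))
      ↔ (∀ i, ∑ j, (S i j * F j * Sigmahat j i - S i j * L j * Θhat i) = 0)) := by
  classical
  -- the Gaussian space
  let Φ : ((Fin dx → ℝ) × (Fin q → ℝ) × (∀ i, Fin (dy i) → ℝ)) →ₗ[ℝ] (Ω → ℝ) :=
    { toFun := fun c ω => (∑ k, c.1 k * x ω k) + (∑ k, c.2.1 k * y0 ω k)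
          + ∑ i, ∑ k, c.2.2 i k * y i ω k
      map_add' := by
        intro c c'; ext ω
        simp only [Prod.fst_add, Prod.snd_add, Pi.add_apply, add_mul, Finset.sum_add_distrib]
        ring
      map_smul' := by
        intro t c; ext ω
        simp only [Prod.smul_fst, Prod.smul_snd, Pi.smul_apply, smul_eq_mul, mul_assoc,
          ← Finset.mul_sum, RingHom.id_apply]
        ring }
  obtain ⟨G, hGdef⟩ : ∃ G, G = LinearMap.range Φ := ⟨_, rfl⟩
  have hG : GSpace μ G := by
    subst hGdef
    constructor
    · rintro u ⟨c, rfl⟩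
      have : ∀ i k, Measurable fun ω => y i ω k := fun i k => (measurable_pi_apply k).comp (hy i)
      change Measurable (fun ω => (∑ k, c.1 k * x ω k) + (∑ k, c.2.1 k * y0 ω k)
          + ∑ i, ∑ k, c.2.2 i k * y i ω k)
      fun_prop
    · rintro u ⟨c, rfl⟩
      exact hGauss c.1 c.2.1 c.2.2
  have hxG : ∀ k, (fun ω => x ω k) ∈ G := by
    intro k; subst hGdef
    refine ⟨(Pi.single k 1, 0, 0), ?_⟩
    ext ω; simp [Φ, Pi.single_apply]
  have hy0G : ∀ k, (fun ω => y0 ω k) ∈ G := by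
    intro k; subst hGdef
    refine ⟨(0, Pi.single k 1, 0), ?_⟩
    ext ω; simp [Φ, Pi.single_apply]
  have hyG : ∀ i k, (fun ω => y i ω k) ∈ G := by
    intro i k; subst hGdef
    refine ⟨(0, 0, Pi.single i (Pi.single k 1)), ?_⟩
    ext ω
    simp only [Φ, LinearMap.coe_mk, AddHom.coe_mk, Pi.zero_apply, zero_mul,
      Finset.sum_const_zero, zero_add]
    rw [Finset.sum_eq_single i]
    · simp [Pi.single_apply]
    · intro j _ hj; simp [Pi.single_eq_of_ne hj]
    · simp
  clear_value Φ
  -- linear versions of the conditional expectations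
  choose cx hcx hcx' using fun k => hG.condExp hy0 hy0G Sigma00 hSigma00 hinv0 (hxG k)
  choose cy hcy hcy' using fun i k => hG.condExp hy0 hy0G Sigma00 hSigma00 hinv0 (hyG i k)
  let Xl : (Fin q → ℝ) → Fin dx → ℝ := fun p k => ∑ m, cx k m * p m
  let Yl : ∀ i, (Fin q → ℝ) → Fin (dy i) → ℝ := fun i p k => ∑ m, cy i k m * p m
  have hXlm : Measurable Xl := measurable_pi_lambda _ fun k => by fun_prop
  have hYlm : ∀ i, Measurable (Yl i) := fun i => measurable_pi_lambda _ fun k => by fun_prop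
  have hXlG : ∀ k, (fun ω => Xl (y0 ω) k) ∈ G := fun k =>
    GSpace.sum_mem (cx k) (fun m ω => y0 ω m) hy0G
  have hYlG : ∀ i k, (fun ω => Yl i (y0 ω) k) ∈ G := fun i k =>
    GSpace.sum_mem (cy i k) (fun m ω => y0 ω m) hy0G
  have hxa : ∀ᵐ ω ∂μ, xhat0 ω = Xl (y0 ω) := by
    have : ∀ᵐ ω ∂μ, ∀ k, xhat0 ω k = Xl (y0 ω) k := by
      rw [ae_all_iff]; intro k; rw [hxhat0]; exact hcx k
    filter_upwards [this] with ω h using funext h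
  have hya : ∀ᵐ ω ∂μ, ∀ i, yhat i ω = Yl i (y0 ω) := by
    have : ∀ᵐ ω ∂μ, ∀ i k, yhat i ω k = Yl i (y0 ω) k := by
      rw [ae_all_iff]; intro i; rw [ae_all_iff]; intro k; rw [hyhat]; exact hcy i k
    filter_upwards [this] with ω h i using funext (h i)
  let xt : Fin dx → Ω → ℝ := fun k ω => x ω k - Xl (y0 ω) k
  let yt : ∀ i, Fin (dy i) → Ω → ℝ := fun i k ω => y i ω k - Yl i (y0 ω) k
  have hxtG : ∀ k, xt k ∈ G := fun k => G.sub_mem (hxG k) (hXlG k)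
  have hytG : ∀ i k, yt i k ∈ G := fun i k => G.sub_mem (hyG i k) (hYlG i k)
  have hxt0 : ∀ k m, ∫ ω, xt k ω * y0 ω m ∂μ = 0 := hcx'
  have hyt0 : ∀ i k m, ∫ ω, yt i k ω * y0 ω m ∂μ = 0 := hcy'
  have hΘ : ∀ i k l, Θhat i k l = ∫ ω, xt k ω * yt i l ω ∂μ := by
    intro i k l
    rw [hG.int_sub_mul (hxG k) (hXlG k) (hytG i l)]
    have h1 : ∫ ω, Xl (y0 ω) k * yt i l ω ∂μ = 0 := by
      rw [hG.int_sum_mul (cx k) (fun m ω => y0 ω m) hy0G (hytG i l)]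
      refine Finset.sum_eq_zero fun m _ => ?_
      simp_rw [mul_comm (y0 _ m), hyt0, mul_zero]
    rw [h1, sub_zero, hΘhat]
    refine integral_congr_ae ?_
    filter_upwards [hya] with ω h
    simp only [h, yt]
  have hSh : ∀ i j k l, Sigmahat i j k l = ∫ ω, yt i k ω * yt j l ω ∂μ := by
    intro i j k l
    rw [hSigmahat]
    refine integral_congr_ae ?_
    filter_upwards [hya] with ω h
    simp only [h, yt]
  -- the flattened problem
  have hSsymm : ∀ a b, Sbig a b = Sbig b a := fun a b => by
    have := hSpd.isHermitian.apply b a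
    simpa using this
  have hJ' : ∀ z, J z = qcost μ Sbig
      (fun (a : Σ i : Fin n, Fin (dz i)) ω => (L a.1 *ᵥ x ω) a.2 - z a.1 ω a.2) := by
    intro z
    rw [hJ, qcost]
    congr 1; ext ω
    simp only [Fintype.sum_sigma, dotProduct, mulVec, Pi.sub_apply, hSbig, Finset.mul_sum]
    refine Finset.sum_congr rfl fun i _ => ?_
    rw [Finset.sum_comm]
  let r : (Σ i : Fin n, Fin (dz i)) → Ω → ℝ := fun a ω =>
    ∑ k, L a.1 a.2 k * xt k ω - ∑ l, F a.1 a.2 l * yt a.1 l ω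
  have hrG : ∀ a, r a ∈ G := fun a => G.sub_mem (GSpace.sum_mem _ _ hxtG)
    (GSpace.sum_mem _ _ (hytG a.1))
  let e : (Σ i : Fin n, Fin (dz i)) → Ω → ℝ := fun a ω => ∑ b, Sbig a b * r b ω
  have heG : ∀ a, e a ∈ G := fun a => GSpace.sum_mem (Sbig a) r hrG
  have hrw : ∀ a w, w ∈ G → ∫ ω, r a ω * w ω ∂μ =
      ∑ k, L a.1 a.2 k * ∫ ω, xt k ω * w ω ∂μ - ∑ l, F a.1 a.2 l * ∫ ω, yt a.1 l ω * w ω ∂μ := by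
    intro a w hw
    rw [← hG.int_sum_mul _ xt hxtG hw, ← hG.int_sum_mul _ (yt a.1) (hytG a.1) hw]
    exact hG.int_sub_mul (GSpace.sum_mem _ _ hxtG) (GSpace.sum_mem _ _ (hytG a.1)) hw
  have hew : ∀ a w, w ∈ G → ∫ ω, e a ω * w ω ∂μ = ∑ b, Sbig a b * ∫ ω, r b ω * w ω ∂μ :=
    fun a w hw => hG.int_sum_mul (Sbig a) r hrG hw
  have he0 : ∀ a m, ∫ ω, e a ω * y0 ω m ∂μ = 0 := by
    intro a m
    rw [hew a _ (hy0G m)]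
    refine Finset.sum_eq_zero fun b _ => ?_
    rw [hrw b _ (hy0G m)]
    simp [hxt0, hyt0]
  have heyt : ∀ i k l, ∫ ω, e ⟨i, k⟩ ω * yt i l ω ∂μ =
      -(∑ j, (S i j * F j * Sigmahat j i - S i j * L j * Θhat i)) k l := by
    intro i k l
    rw [hew _ _ (hytG i l)]
    simp_rw [hrw _ _ (hytG i l), ← hΘ, ← hSh]
    rw [Fintype.sum_sigma, Matrix.sum_apply, ← Finset.sum_neg_distrib]
    refine Finset.sum_congr rfl fun j _ => ?_
    simp only [hSbig, Matrix.sub_apply, Matrix.mul_assoc]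
    simp only [Matrix.mul_apply (M := S i j), Matrix.mul_apply (M := F j),
      Matrix.mul_apply (M := L j), mul_sub, Finset.sum_sub_distrib]
    ring
  let glin : (∀ i : Fin n, Matrix (Fin (dz i)) (Fin (dy i)) ℝ) →
      ∀ i : Fin n, (Fin q → ℝ) × (Fin (dy i) → ℝ) → Fin (dz i) → ℝ :=
    fun D i p => L i *ᵥ Xl p.1 + D i *ᵥ (p.2 - Yl i p.1)
  have hglm : ∀ D i, Measurable (glin D i) := by
    intro D i
    refine measurable_pi_lambda _ fun k => ?_
    have h1 : ∀ k, Measurable fun p => Xl p k := fun k => (measurable_pi_apply k).comp hXlm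
    have h2 : ∀ k, Measurable fun p => Yl i p k := fun k => (measurable_pi_apply k).comp (hYlm i)
    simp only [glin, Pi.add_apply, mulVec, dotProduct, Pi.sub_apply]
    fun_prop
  have hglG : ∀ D i k, (fun ω => glin D i (y0 ω, y i ω) k) ∈ G := fun D i k =>
    G.add_mem (GSpace.sum_mem (L i k) (fun k ω => Xl (y0 ω) k) hXlG)
      (GSpace.sum_mem (D i k) (yt i) (hytG i))
  have hrgl : ∀ a ω, r a ω = (L a.1 *ᵥ x ω) a.2 - glin F a.1 (y0 ω, y a.1 ω) a.2 := by
    intro a ω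
    simp only [r, glin, xt, yt, Pi.add_apply, mulVec, dotProduct, Pi.sub_apply, mul_sub,
      Finset.sum_sub_distrib]
    ring
  have hJ0 : J (fun i ω => (L i).mulVec (xhat0 ω)
              + (F i).mulVec (fun l => y i ω l - yhat i ω l)) = qcost μ Sbig r := by
    rw [hJ']
    refine integral_congr_ae ?_
    filter_upwards [hxa, hya] with ω h1 h2
    simp only [hrgl, h1, h2, glin]
    rfl
  have hmain : (∀ g : ∀ i : Fin n, (Fin q → ℝ) × (Fin (dy i) → ℝ) → Fin (dz i) → ℝ,
        (∀ i, Measurable (g i)) →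
        (∀ i k, MemLp (fun ω => g i (y0 ω, y i ω) k) 2 μ) →
        J (fun i ω => (L i).mulVec (xhat0 ω)
              + (F i).mulVec (fun l => y i ω l - yhat i ω l))
          ≤ J (fun i ω => g i (y0 ω, y i ω)))
      ↔ ∀ i k l, ∫ ω, e ⟨i, k⟩ ω * yt i l ω ∂μ = 0 := by
    rw [hJ0]
    constructor
    · intro H
      let D : ∀ i : Fin n, Matrix (Fin (dz i)) (Fin (dy i)) ℝ := fun i k l =>
        ∫ ω, e ⟨i, k⟩ ω * yt i l ω ∂μ
      let d : (Σ i : Fin n, Fin (dz i)) → Ω → ℝ := fun a ω => ∑ l, D a.1 a.2 l * yt a.1 l ω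
      have hdG : ∀ a, d a ∈ G := fun a => GSpace.sum_mem _ _ (hytG a.1)
      have hz := qcost_min Sbig hSsymm r d (fun a => hG.memLp (hrG a))
        (fun a => hG.memLp (hdG a)) (fun t => by
          have := H (glin (fun i => F i + t • D i)) (hglm _) (fun i k => hG.memLp (hglG (fun i => F i + t • D i) i k))
          rw [hJ'] at this
          refine this.trans_eq ?_
          congr 1
          ext a ω
          rw [hrgl]
          simp only [d, yt, glin, Pi.add_apply, mulVec, dotProduct, Pi.sub_apply,
            Matrix.add_apply, Matrix.smul_apply, smul_eq_mul, add_mul, Finset.sum_add_distrib,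
            mul_assoc, ← Finset.mul_sum]
          ring)
      have hz2 : ∑ a : (Σ i : Fin n, Fin (dz i)), ∑ l, D a.1 a.2 l * D a.1 a.2 l = 0 := by
        rw [← hz]
        refine Finset.sum_congr rfl fun a _ => ?_
        have h1 := hG.int_sum_mul (D a.1 a.2) (yt a.1) (hytG a.1) (heG a)
        rw [show ∫ ω, (∑ b, Sbig a b * r b ω) * d a ω ∂μ =
          ∫ ω, (∑ l, D a.1 a.2 l * yt a.1 l ω) * e a ω ∂μ from by
            congr 1; ext ω; exact mul_comm _ _, h1]
        refine Finset.sum_congr rfl fun l _ => ?_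
        simp_rw [mul_comm (yt _ _ _)]
        rfl
      intro i k l
      rw [Finset.sum_eq_zero_iff_of_nonneg
        (fun a _ => Finset.sum_nonneg fun l _ => mul_self_nonneg _)] at hz2
      have h3 := hz2 ⟨i, k⟩ (Finset.mem_univ _)
      rw [Finset.sum_eq_zero_iff_of_nonneg (fun l _ => mul_self_nonneg _)] at h3
      exact mul_self_eq_zero.1 (h3 l (Finset.mem_univ _))
    · intro H g hg hgL
      rw [hJ']
      let d : (Σ i : Fin n, Fin (dz i)) → Ω → ℝ := fun a ω =>
        g a.1 (y0 ω, y a.1 ω) a.2 - glin F a.1 (y0 ω, y a.1 ω) a.2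
      have hd : ∀ a, MemLp (d a) 2 μ := fun a => (hgL a.1 a.2).sub (hG.memLp (hglG F a.1 a.2))
      have h1 : (fun (a : Σ i : Fin n, Fin (dz i)) ω => (L a.1 *ᵥ x ω) a.2
          - g a.1 (y0 ω, y a.1 ω) a.2) = fun a ω => r a ω - d a ω := by
        ext a ω; rw [hrgl]; simp only [d]; ring
      rw [h1, qcost_sub Sbig hSsymm r d (fun a => hG.memLp (hrG a)) hd]
      have h2 : ∀ a, ∫ ω, (∑ b, Sbig a b * r b ω) * d a ω ∂μ = 0 := by
        rintro ⟨i, k⟩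
        have hv : ∀ m : Fin q ⊕ Fin (dy i),
            Sum.elim (fun k ω => y0 ω k) (fun k ω => y i ω k) m ∈ G := by
          rintro (m | m)
          · exact hy0G m
          · exact hyG i m
        have := hG.orth (heG ⟨i, k⟩) _ hv (by
          rintro (m | m)
          · exact he0 _ m
          · simp only [Sum.elim_inr]
            have h5 := hG.int_sub_mul (hyG i m) (hYlG i m) (heG ⟨i, k⟩)
            have h6 : ∫ ω, Yl i (y0 ω) m * e ⟨i, k⟩ ω ∂μ = 0 := by
              rw [hG.int_sum_mul (cy i m) (fun m ω => y0 ω m) hy0G (heG _)]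
              refine Finset.sum_eq_zero fun c _ => ?_
              simp_rw [mul_comm (y0 _ c), he0, mul_zero]
            have h7 := H i k m
            simp_rw [mul_comm (e _ _)] at h7 ⊢
            have h8 : ∫ ω, (y i ω m - Yl i (y0 ω) m) * e ⟨i, k⟩ ω ∂μ = 0 := h7
            linarith)
          (fun v => g i (fun m => v (Sum.inl m), fun m => v (Sum.inr m)) k
            - glin F i (fun m => v (Sum.inl m), fun m => v (Sum.inr m)) k) (by
            have hp : Measurable fun v : Fin q ⊕ Fin (dy i) → ℝ =>
              ((fun m => v (Sum.inl m), fun m => v (Sum.inr m)) :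
                (Fin q → ℝ) × (Fin (dy i) → ℝ)) := by fun_prop
            exact ((measurable_pi_apply k).comp ((hg i).comp hp)).sub
              ((measurable_pi_apply k).comp ((hglm F i).comp hp)))
        exact this
      rw [Finset.sum_eq_zero fun a _ => h2 a]
      have := qcost_nonneg (μ := μ) Sbig hSpd d
      linarith
  have hfin : (∀ i k l, ∫ ω, e ⟨i, k⟩ ω * yt i l ω ∂μ = 0) ↔
      (∀ i, ∑ j, (S i j * F j * Sigmahat j i - S i j * L j * Θhat i) = 0) := by
    simp_rw [heyt, neg_eq_zero]
    constructor
    · intro h i; ext k l; exact h i k l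
    · intro h i k l; rw [h i]; rfl
  have hinvq : (∀ i, (∑ j, (S i j * F j * Sigmahat j i - S i j * L j * Θhat i))
                * (Sigmahat i i)⁻¹ = 0) ↔
      (∀ i, ∑ j, (S i j * F j * Sigmahat j i - S i j * L j * Θhat i) = 0) := by
    refine forall_congr' fun i => ⟨fun h => ?_, fun h => by rw [h, Matrix.zero_mul]⟩
    have h2 := congrArg (· * Sigmahat i i) h
    simpa only [Matrix.mul_assoc, Matrix.nonsing_inv_mul _ (hinv i), Matrix.mul_one,
      Matrix.zero_mul] using h2
  exact ⟨hmain.trans (hfin.trans hinvq.symm), hmain.trans hfin⟩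
end

section
/- In the multi-agent Gaussian estimation problem, the minimum expected team estimation error (achieved by the strategy ẑ_i = L_i x̂_0 + F_i ỹ_i with vec(F_1,…,F_n) = Γ⁻¹ η) equals J* = Tr( Lᵀ S L P_0 ) − ηᵀ Γ⁻¹ η, where P_0 = Var(x − x̂_0), η = vec(S_{1•} L Θ̂_1, …, S_{n•} L Θ̂_n) with S_{i•} L = Σ_j S_ij L_j, and Γ is the block matrix with blocks Γ_ij = Σ̂_ij ⊗ S_ij. -/
open MeasureTheory ProbabilityTheory Matrix

namespace TeamEst

variable {Ω : Type*} [MeasurableSpace Ω]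

/-- second-moment pairing -/
noncomputable def ip (μ : Measure Ω) (f g : Ω → ℝ) : ℝ := ∫ ω, f ω * g ω ∂μ

lemma ip_comm (μ : Measure Ω) (f g : Ω → ℝ) : ip μ f g = ip μ g f := by
  simp only [ip, mul_comm]

lemma ip_congr {μ : Measure Ω} {f f' g g' : Ω → ℝ} (hf : f =ᵐ[μ] f') (hg : g =ᵐ[μ] g') :
    ip μ f g = ip μ f' g' := by
  apply integral_congr_ae
  filter_upwards [hf, hg] with ω h1 h2
  rw [h1, h2]

lemma memLp_lin {μ : Measure Ω} {τ : Type*} [Fintype τ] (B : τ → ℝ) {Y : τ → Ω → ℝ}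
    (hY : ∀ t, MemLp (Y t) 2 μ) : MemLp (fun ω => ∑ t, B t * Y t ω) 2 μ :=
  memLp_finsetSum _ fun t _ => (hY t).const_mul (B t)

lemma int_mul {μ : Measure Ω} {f g : Ω → ℝ} (hf : MemLp f 2 μ) (hg : MemLp g 2 μ) :
    Integrable (fun ω => f ω * g ω) μ := hf.integrable_mul hg

lemma ip_sum_right {μ : Measure Ω} {τ : Type*} [Fintype τ] (B : τ → ℝ) {Y : τ → Ω → ℝ}
    {f : Ω → ℝ} (hf : MemLp f 2 μ) (hY : ∀ t, MemLp (Y t) 2 μ) :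
    ip μ f (fun ω => ∑ t, B t * Y t ω) = ∑ t, B t * ip μ f (Y t) := by
  unfold ip
  simp only [Finset.mul_sum]
  rw [integral_finsetSum]
  · refine Finset.sum_congr rfl fun t _ => ?_
    rw [← integral_const_mul]
    congr 1; ext ω; ring
  · intro t _
    exact int_mul hf ((hY t).const_mul (B t))

lemma ip_sum_left {μ : Measure Ω} {τ : Type*} [Fintype τ] (B : τ → ℝ) {Y : τ → Ω → ℝ}
    {f : Ω → ℝ} (hf : MemLp f 2 μ) (hY : ∀ t, MemLp (Y t) 2 μ) :
    ip μ (fun ω => ∑ t, B t * Y t ω) f = ∑ t, B t * ip μ (Y t) f := by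
  rw [ip_comm, ip_sum_right B hf hY]
  simp only [ip_comm μ f]

lemma ip_sub_left {μ : Measure Ω} {f g h : Ω → ℝ} (hf : MemLp f 2 μ) (hg : MemLp g 2 μ)
    (hh : MemLp h 2 μ) : ip μ (fun ω => f ω - g ω) h = ip μ f h - ip μ g h := by
  unfold ip
  simp only [sub_mul]
  exact integral_sub (int_mul hf hh) (int_mul hg hh)

lemma ip_sub_right {μ : Measure Ω} {f g h : Ω → ℝ} (hf : MemLp f 2 μ) (hg : MemLp g 2 μ)
    (hh : MemLp h 2 μ) : ip μ h (fun ω => f ω - g ω) = ip μ h f - ip μ h g := by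
  rw [ip_comm, ip_sub_left hf hg hh, ip_comm μ h, ip_comm μ h]

lemma ip_add_left {μ : Measure Ω} {f g h : Ω → ℝ} (hf : MemLp f 2 μ) (hg : MemLp g 2 μ)
    (hh : MemLp h 2 μ) : ip μ (fun ω => f ω + g ω) h = ip μ f h + ip μ g h := by
  unfold ip
  simp only [add_mul]
  exact integral_add (int_mul hf hh) (int_mul hg hh)

/-- a linear space of centered jointly Gaussian variables -/
def GSub (μ : Measure Ω) (V : Submodule ℝ (Ω → ℝ)) : Prop :=
  ∀ f ∈ V, Measurable f ∧ ∃ v : NNReal, μ.map f = gaussianReal 0 v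

lemma lin_mem {V : Submodule ℝ (Ω → ℝ)} {τ : Type*} [Fintype τ] (B : τ → ℝ) {Y : τ → Ω → ℝ}
    (hY : ∀ t, Y t ∈ V) : (fun ω => ∑ t, B t * Y t ω) ∈ V := by
  have : (fun ω => ∑ t, B t * Y t ω) = ∑ t, B t • Y t := by
    ext ω; simp
  rw [this]
  exact V.sum_mem fun t _ => V.smul_mem _ (hY t)

lemma sub_mem' {V : Submodule ℝ (Ω → ℝ)} {f g : Ω → ℝ} (hf : f ∈ V) (hg : g ∈ V) :
    (fun ω => f ω - g ω) ∈ V := V.sub_mem hf hg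

section
variable {μ : Measure Ω} [IsProbabilityMeasure μ] {V : Submodule ℝ (Ω → ℝ)} (hV : GSub μ V)
include hV

lemma GSub.law {f : Ω → ℝ} (hf : f ∈ V) : HasGaussianLaw f μ := by
  obtain ⟨v, hv⟩ := (hV f hf).2
  exact ⟨by rw [hv]; infer_instance⟩

lemma GSub.memLp {f : Ω → ℝ} (hf : f ∈ V) : MemLp f 2 μ := (hV.law hf).memLp_two

lemma GSub.mean {f : Ω → ℝ} (hf : f ∈ V) : ∫ ω, f ω ∂μ = 0 := by
  obtain ⟨v, hv⟩ := (hV f hf).2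
  have h : ∫ x, x ∂(μ.map f) = ∫ ω, f ω ∂μ :=
    integral_map (hV f hf).1.aemeasurable (by fun_prop)
  rw [← h, hv, integral_id_gaussianReal]

lemma GSub.indep {τ : Type*} [Fintype τ] {u : Ω → ℝ} {Y : τ → Ω → ℝ} (hu : u ∈ V)
    (hY : ∀ t, Y t ∈ V) (h0 : ∀ t, ip μ u (Y t) = 0) :
    IndepFun u (fun ω t => Y t ω) μ := by
  classical
  have hm : Measurable (fun ω => ((fun _ : Unit => u ω), fun t => Y t ω)) := by
    refine Measurable.prodMk ?_ ?_
    · exact measurable_pi_lambda _ fun _ => (hV u hu).1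
    · exact measurable_pi_lambda _ fun t => (hV _ (hY t)).1
  have hG : HasGaussianLaw (fun ω => ((fun _ : Unit => u ω), fun t => Y t ω)) μ := by
    refine ⟨isGaussian_of_map_eq_gaussianReal fun L => ?_⟩
    have hmem : (fun ω => L ((fun _ : Unit => u ω), fun t => Y t ω)) ∈ V := by
      have : (fun ω => L ((fun _ : Unit => u ω), fun t => Y t ω))
          = fun ω => L ((fun _ => 1), 0) * u ω + ∑ t, L (0, Pi.single t 1) * Y t ω := by
        ext ω
        have h1 : (((fun _ : Unit => u ω), fun t => Y t ω) : (Unit → ℝ) × (τ → ℝ))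
            = u ω • ((fun _ => 1), 0) + ∑ t, Y t ω • (0, Pi.single t 1) := by
          ext t
          · simp [Prod.fst_sum]
          · simp [Prod.snd_sum, Finset.sum_apply, Pi.single_apply]
        rw [h1, map_add, map_smul, map_sum]
        simp only [map_smul, smul_eq_mul, mul_comm]
      rw [this]
      exact V.add_mem (V.smul_mem (L ((fun _ => 1), 0)) hu) (lin_mem _ hY)
    obtain ⟨v, hv⟩ := (hV _ hmem).2
    refine ⟨0, v, ?_⟩
    rw [Measure.map_map (by fun_prop) hm]
    exact hv
  have hi := hG.indepFun_of_covariance_eval (X := fun _ : Unit => u) (Y := Y) (fun _ t => by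
    rw [covariance_eq_sub (hV.memLp hu) (hV.memLp (hY t)), hV.mean hu, zero_mul, sub_zero]
    exact h0 t)
  exact hi.comp (φ := fun f : Unit → ℝ => f ()) (ψ := id) (measurable_pi_apply _) measurable_id

lemma GSub.ip_fun_zero {τ : Type*} [Fintype τ] {u : Ω → ℝ} {Y : τ → Ω → ℝ} (hu : u ∈ V)
    (hY : ∀ t, Y t ∈ V) (h0 : ∀ t, ip μ u (Y t) = 0) {h : (τ → ℝ) → ℝ} (hh : Measurable h) :
    ip μ (fun ω => h (fun t => Y t ω)) u = 0 := by
  have hi := (hV.indep hu hY h0).comp measurable_id hh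
  have hYm : Measurable (fun ω t => Y t ω) := measurable_pi_lambda _ fun t => (hV _ (hY t)).1
  have := hi.integral_fun_mul_eq_mul_integral (hV u hu).1.aestronglyMeasurable
    (hh.comp hYm).aestronglyMeasurable
  rw [ip_comm]
  unfold ip
  simp only [Function.comp_apply, id] at this
  rw [this, hV.mean hu, zero_mul]

lemma GSub.condExp {τ : Type*} [Fintype τ] [DecidableEq τ] {u : Ω → ℝ} {Y : Ω → τ → ℝ}
    (hu : u ∈ V)
    (hY : ∀ t, (fun ω => Y ω t) ∈ V) (C : Matrix τ τ ℝ)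
    (hC : ∀ s t, C s t = ∫ ω, Y ω s * Y ω t ∂μ) (hdet : IsUnit C.det) :
    ∃ B : τ → ℝ, (μ[u | MeasurableSpace.comap Y inferInstance])
        =ᵐ[μ] (fun ω => ∑ t, B t * Y ω t) ∧
      ∀ t, ip μ (fun ω => u ω - ∑ s, B s * Y ω s) (fun ω => Y ω t) = 0 := by
  set b : τ → ℝ := fun t => ip μ u (fun ω => Y ω t) with hb
  set B : τ → ℝ := b ᵥ* C⁻¹ with hB
  have hBC : B ᵥ* C = b := by
    rw [hB, vecMul_vecMul, nonsing_inv_mul _ hdet, vecMul_one]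
  have hl : (fun ω => ∑ t, B t * Y ω t) ∈ V := lin_mem (Y := fun t ω => Y ω t) B hY
  have horth : ∀ t, ip μ (fun ω => u ω - ∑ s, B s * Y ω s) (fun ω => Y ω t) = 0 := by
    intro t
    rw [ip_sub_left (hV.memLp hu) (hV.memLp hl) (hV.memLp (hY t)),
      ip_sum_left (Y := fun t ω => Y ω t) B (hV.memLp (hY t)) (fun t => hV.memLp (hY t)), sub_eq_zero]
    have := congrFun hBC t
    simp only [vecMul, dotProduct, hC] at this
    exact this.symm
  refine ⟨B, ?_, horth⟩
  have hYm : Measurable Y := measurable_pi_iff.2 fun t => (hV _ (hY t)).1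
  have hd := sub_mem' hu hl
  have hi := hV.indep (Y := fun t ω => Y ω t) hd hY horth
  have hle := hYm.comap_le
  have h1 := condExp_indep_eq (μ := μ) (hV _ hd).1.comap_le hle
    (comap_measurable _).stronglyMeasurable hi
  have h2 : (μ[fun ω => ∑ t, B t * Y ω t | MeasurableSpace.comap Y inferInstance])
      = (fun ω => ∑ t, B t * Y ω t) := by
    refine condExp_of_stronglyMeasurable hle ?_ ((hV.memLp hl).integrable (by norm_num))
    refine Measurable.stronglyMeasurable ?_
    have h3 : Measurable (fun v : τ → ℝ => ∑ t, B t * v t) := by fun_prop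
    exact h3.comp (comap_measurable Y)
  have h4 := condExp_sub (μ := μ) ((hV.memLp hu).integrable (by norm_num))
    ((hV.memLp hl).integrable (by norm_num)) (MeasurableSpace.comap Y inferInstance)
  rw [h2] at h4
  rw [hV.mean hd] at h1
  filter_upwards [h1, h4] with ω ha hb
  have hc : (μ[u - fun ω => ∑ t, B t * Y ω t | MeasurableSpace.comap Y inferInstance]) ω = 0 := ha
  rw [hc, Pi.sub_apply] at hb
  linarith

end

end TeamEst

namespace TeamEst

section quad
variable {Ω : Type*} [MeasurableSpace Ω] {μ : Measure Ω} {α : Type*} [Fintype α]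

/-- expected quadratic form -/
noncomputable def Q (μ : Measure Ω) (S : Matrix α α ℝ) (v : α → Ω → ℝ) : ℝ :=
  ∫ ω, ∑ p, v p ω * ∑ q, S p q * v q ω ∂μ

lemma Q_eq (S : Matrix α α ℝ) {v : α → Ω → ℝ} (hv : ∀ p, MemLp (v p) 2 μ) :
    Q μ S v = ∑ p, ip μ (v p) (fun ω => ∑ q, S p q * v q ω) := by
  unfold Q ip
  rw [integral_finsetSum]
  intro p _
  exact int_mul (hv p) (memLp_lin _ hv)

lemma Q_int (S : Matrix α α ℝ) {v w : α → Ω → ℝ} (hv : ∀ p, MemLp (v p) 2 μ)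
    (hw : ∀ p, MemLp (w p) 2 μ) :
    Integrable (fun ω => ∑ p, v p ω * ∑ q, S p q * w q ω) μ :=
  integrable_finsetSum _ fun p _ => int_mul (hv p) (memLp_lin _ hw)

lemma Q_congr (S : Matrix α α ℝ) {v w : α → Ω → ℝ} (h : ∀ p, v p =ᵐ[μ] w p) :
    Q μ S v = Q μ S w := by
  apply integral_congr_ae
  filter_upwards [ae_all_iff.2 h] with ω hω
  simp only [hω]

lemma symm_sum {S : Matrix α α ℝ} (hS : ∀ p q, S p q = S q p) (a b : α → ℝ) :
    ∑ p, a p * ∑ q, S p q * b q = ∑ p, b p * ∑ q, S p q * a q := by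
  simp only [Finset.mul_sum]
  rw [Finset.sum_comm]
  refine Finset.sum_congr rfl fun p _ => Finset.sum_congr rfl fun q _ => ?_
  rw [hS]; ring

lemma symm_ip {S : Matrix α α ℝ} (hS : ∀ p q, S p q = S q p) {v w : α → Ω → ℝ}
    (hv : ∀ p, MemLp (v p) 2 μ) (hw : ∀ p, MemLp (w p) 2 μ) :
    ∑ p, ip μ (v p) (fun ω => ∑ q, S p q * w q ω)
      = ∑ p, ip μ (w p) (fun ω => ∑ q, S p q * v q ω) := by
  unfold ip
  rw [← integral_finsetSum _ fun p _ => int_mul (hv p) (memLp_lin (S p) hw),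
    ← integral_finsetSum _ fun p _ => int_mul (hw p) (memLp_lin (S p) hv)]
  congr 1; ext ω
  exact symm_sum hS _ _

lemma posDef_symm {S : Matrix α α ℝ} (hS : S.PosDef) (p q : α) : S p q = S q p := by
  have := hS.isHermitian.apply p q
  simpa using this.symm

lemma quad_nonneg {S : Matrix α α ℝ} (hS : S.PosDef) (a : α → ℝ) :
    0 ≤ ∑ p, a p * ∑ q, S p q * a q := by
  have := hS.posSemidef.dotProduct_mulVec_nonneg a
  simpa [dotProduct, mulVec] using this

lemma quad_zero {S : Matrix α α ℝ} (hS : S.PosDef) {a : α → ℝ}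
    (h : ∑ p, a p * ∑ q, S p q * a q = 0) : a = 0 := by
  by_contra hne
  have := hS.dotProduct_mulVec_pos hne
  simp [dotProduct, mulVec] at this
  linarith

lemma Q_le {S : Matrix α α ℝ} (hS : S.PosDef) {w d : α → Ω → ℝ}
    (hw : ∀ p, MemLp (w p) 2 μ) (hd : ∀ p, MemLp (d p) 2 μ)
    (h0 : ∀ p, ip μ (d p) (fun ω => ∑ q, S p q * w q ω) = 0) :
    Q μ S w ≤ Q μ S (fun p ω => w p ω + d p ω) := by
  have hz : ∫ ω, ∑ p, d p ω * ∑ q, S p q * w q ω ∂μ = 0 := by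
    rw [integral_finsetSum _ fun p _ => int_mul (hd p) (memLp_lin (S p) hw)]
    exact Finset.sum_eq_zero fun p _ => h0 p
  have h1 : Q μ S w = ∫ ω, ((∑ p, w p ω * ∑ q, S p q * w q ω)
      + 2 * ∑ p, d p ω * ∑ q, S p q * w q ω) ∂μ := by
    rw [integral_add (Q_int S hw hw) ((Q_int S hd hw).const_mul 2), integral_const_mul, hz]
    simp [Q]
  rw [h1]
  refine integral_mono ((Q_int S hw hw).add ((Q_int S hd hw).const_mul 2))
    (Q_int S (fun p => (hw p).add (hd p)) (fun p => (hw p).add (hd p))) fun ω => ?_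
  have h2 := quad_nonneg hS (fun p => d p ω)
  have h3 := symm_sum (posDef_symm hS) (fun p => w p ω) (fun p => d p ω)
  simp only [mul_add, add_mul, Finset.sum_add_distrib]
  linarith

lemma Q_zero {S : Matrix α α ℝ} (hS : S.PosDef) {m : α → Ω → ℝ}
    (hm : ∀ p, MemLp (m p) 2 μ) (h : Q μ S m = 0) (p : α) : m p =ᵐ[μ] 0 := by
  have := (integral_eq_zero_iff_of_nonneg (fun ω => quad_nonneg hS (fun p => m p ω))
    (Q_int S hm hm)).1 h
  filter_upwards [this] with ω hω
  exact congrFun (quad_zero hS hω) p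

end quad

section core
variable {Ω : Type*} [MeasurableSpace Ω] {μ : Measure Ω} {n dx : ℕ} {dy dz : Fin n → ℕ}

/-- local correction terms -/
noncomputable def mm (f : (Σ i : Fin n, Fin (dy i) × Fin (dz i)) → ℝ)
    (yt : ∀ i : Fin n, Fin (dy i) → Ω → ℝ) (p : Σ i : Fin n, Fin (dz i)) : Ω → ℝ :=
  fun ω => ∑ l, f ⟨p.1, (l, p.2)⟩ * yt p.1 l ω

/-- linear image of the common error -/
noncomputable def le (Lb : Matrix (Σ i : Fin n, Fin (dz i)) (Fin dx) ℝ)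
    (e : Fin dx → Ω → ℝ) (p : Σ i : Fin n, Fin (dz i)) : Ω → ℝ :=
  fun ω => ∑ k, Lb p k * e k ω

variable {yt : ∀ i : Fin n, Fin (dy i) → Ω → ℝ} (hyt : ∀ i l, MemLp (yt i l) 2 μ)
  {e : Fin dx → Ω → ℝ} (he : ∀ k, MemLp (e k) 2 μ)
  {Sb : Matrix (Σ i : Fin n, Fin (dz i)) (Σ i : Fin n, Fin (dz i)) ℝ} (hS : Sb.PosDef)
  {Lb : Matrix (Σ i : Fin n, Fin (dz i)) (Fin dx) ℝ}
  {Γ : Matrix (Σ i : Fin n, Fin (dy i) × Fin (dz i)) (Σ j : Fin n, Fin (dy j) × Fin (dz j)) ℝ}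
  (hΓ : ∀ (i j : Fin n) (c : Fin (dy i)) (r : Fin (dz i)) (c' : Fin (dy j)) (r' : Fin (dz j)),
      Γ ⟨i, (c, r)⟩ ⟨j, (c', r')⟩ = ip μ (yt i c) (yt j c') * Sb ⟨i, r⟩ ⟨j, r'⟩)
  {η : (Σ i : Fin n, Fin (dy i) × Fin (dz i)) → ℝ}
  (hη : ∀ (i : Fin n) (c : Fin (dy i)) (r : Fin (dz i)),
      η ⟨i, (c, r)⟩ = ∑ p, Sb ⟨i, r⟩ p * ∑ k, Lb p k * ip μ (e k) (yt i c))

include hyt in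
lemma mm_memLp (f : (Σ i : Fin n, Fin (dy i) × Fin (dz i)) → ℝ) (p) : MemLp (mm f yt p) 2 μ :=
  memLp_lin _ fun l => hyt p.1 l

include he in
lemma le_memLp (p) : MemLp (le Lb e p) 2 μ :=
  memLp_lin _ he

include hyt hΓ in
lemma ip_mm (f : (Σ i : Fin n, Fin (dy i) × Fin (dz i)) → ℝ) (i c r) :
    ip μ (yt i c) (fun ω => ∑ q, Sb ⟨i, r⟩ q * mm f yt q ω) = (Γ *ᵥ f) ⟨i, (c, r)⟩ := by
  rw [ip_sum_right _ (hyt i c) (mm_memLp hyt f)]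
  have : ∀ q, ip μ (yt i c) (mm f yt q) = ∑ l, f ⟨q.1, (l, q.2)⟩ * ip μ (yt i c) (yt q.1 l) :=
    fun q => ip_sum_right _ (hyt i c) (hyt q.1)
  simp only [this, mulVec, dotProduct, Fintype.sum_sigma, Fintype.sum_prod_type, hΓ,
    Finset.mul_sum]
  refine Finset.sum_congr rfl fun j _ => ?_
  rw [Finset.sum_comm]
  refine Finset.sum_congr rfl fun l _ => Finset.sum_congr rfl fun r' _ => ?_
  ring

include hyt he hη in
lemma ip_le (i c r) :
    ip μ (yt i c) (fun ω => ∑ q, Sb ⟨i, r⟩ q * le Lb e q ω) = η ⟨i, (c, r)⟩ := by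
  rw [ip_sum_right _ (hyt i c) (le_memLp he), hη]
  have : ∀ q, ip μ (yt i c) (le Lb e q) = ∑ k, Lb q k * ip μ (e k) (yt i c) := by
    intro q
    simp only [ip_comm μ _ (yt i c)]
    exact ip_sum_right _ (hyt i c) he
  simp only [this]

include hyt in
lemma mm_ip (f : (Σ i : Fin n, Fin (dy i) × Fin (dz i)) → ℝ)
    {u : (Σ i : Fin n, Fin (dz i)) → Ω → ℝ} (hu : ∀ p, MemLp (u p) 2 μ) :
    ∑ p, ip μ (mm f yt p) (u p)
      = ∑ p : (Σ i : Fin n, Fin (dy i) × Fin (dz i)),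
        f p * ip μ (yt p.1 p.2.1) (u ⟨p.1, p.2.2⟩) := by
  have : ∀ p, ip μ (mm f yt p) (u p) = ∑ l, f ⟨p.1, (l, p.2)⟩ * ip μ (yt p.1 l) (u p) :=
    fun q => ip_sum_left _ (hu q) (hyt q.1)
  simp only [this, Fintype.sum_sigma, Fintype.sum_prod_type]
  refine Finset.sum_congr rfl fun j _ => ?_
  rw [Finset.sum_comm]

include hyt hS hΓ in
lemma gamma_unit (hinv : ∀ i, IsUnit (Matrix.of fun k l => ip μ (yt i k) (yt i l)).det) :
    IsUnit Γ := by
  rw [← mulVec_injective_iff_isUnit]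
  intro f1 f2 h12
  have hf : Γ *ᵥ (f1 - f2) = 0 := by
    rw [mulVec_sub]; simpa [sub_eq_zero] using h12
  rw [← sub_eq_zero]
  generalize f1 - f2 = f at hf
  have hm := mm_memLp hyt f
  have hQ : Q μ Sb (mm f yt) = 0 := by
    rw [Q_eq _ hm, mm_ip hyt f (fun p => memLp_lin (Sb p) hm)]
    refine Finset.sum_eq_zero fun p _ => ?_
    obtain ⟨i, c, r⟩ := p
    rw [ip_mm hyt hΓ, hf]; simp
  have hz := Q_zero hS hm hQ
  ext ⟨i, c, r⟩
  have h0 : (fun l => f ⟨i, (l, r)⟩) ᵥ* (Matrix.of fun k l => ip μ (yt i k) (yt i l)) = 0 := by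
    ext l
    have h1 : ip μ (mm f yt ⟨i, r⟩) (yt i l) = 0 := by
      rw [ip_congr (hz ⟨i, r⟩) (Filter.EventuallyEq.refl _ _)]
      simp [ip]
    refine Eq.trans ?_ h1
    exact (ip_sum_left _ (hyt i l) (hyt i)).symm
  have h2 := congrArg (fun v => v ᵥ* (Matrix.of fun k l => ip μ (yt i k) (yt i l))⁻¹) h0
  simp only [vecMul_vecMul, mul_nonsing_inv _ (hinv i), vecMul_one, zero_vecMul] at h2
  exact congrFun h2 c

include hyt he hΓ hη in
lemma orth {f : (Σ i : Fin n, Fin (dy i) × Fin (dz i)) → ℝ} (hf : Γ *ᵥ f = η) (i c r) :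
    ip μ (yt i c) (fun ω => ∑ q, Sb ⟨i, r⟩ q * (le Lb e q ω - mm f yt q ω)) = 0 := by
  have h1 : (fun ω => ∑ q, Sb ⟨i, r⟩ q * (le Lb e q ω - mm f yt q ω))
      = fun ω => (∑ q, Sb ⟨i, r⟩ q * le Lb e q ω) - ∑ q, Sb ⟨i, r⟩ q * mm f yt q ω := by
    ext ω; simp only [mul_sub, Finset.sum_sub_distrib]
  rw [h1, ip_sub_right (memLp_lin _ (le_memLp he)) (memLp_lin _ (mm_memLp hyt f)) (hyt i c),
    ip_mm hyt hΓ, ip_le hyt he hη, hf, sub_self]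

include hyt he hΓ hη hS in
lemma value {f : (Σ i : Fin n, Fin (dy i) × Fin (dz i)) → ℝ} (hf : Γ *ᵥ f = η)
    (P0 : Matrix (Fin dx) (Fin dx) ℝ) (hP0 : ∀ k l, P0 k l = ip μ (e k) (e l)) :
    Q μ Sb (fun p ω => le Lb e p ω - mm f yt p ω) = (Lbᵀ * Sb * Lb * P0).trace - η ⬝ᵥ f := by
  have hl := le_memLp (Lb := Lb) he
  have hm := mm_memLp hyt f
  have hw : ∀ p, MemLp (fun ω => le Lb e p ω - mm f yt p ω) 2 μ := fun p => (hl p).sub (hm p)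
  rw [Q_eq _ hw]
  have h1 : ∀ p, ip μ (fun ω => le Lb e p ω - mm f yt p ω)
        (fun ω => ∑ q, Sb p q * (le Lb e q ω - mm f yt q ω))
      = ip μ (le Lb e p) (fun ω => ∑ q, Sb p q * le Lb e q ω)
        - ip μ (le Lb e p) (fun ω => ∑ q, Sb p q * mm f yt q ω)
        - ip μ (mm f yt p) (fun ω => ∑ q, Sb p q * (le Lb e q ω - mm f yt q ω)) := by
    intro p
    rw [ip_sub_left (hl p) (hm p) (memLp_lin _ hw)]
    congr 1
    rw [← ip_sub_right (memLp_lin _ hl) (memLp_lin _ hm) (hl p)]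
    congr 1
    ext ω; simp only [mul_sub, Finset.sum_sub_distrib]
  simp only [h1, Finset.sum_sub_distrib]
  have h2 : ∑ p, ip μ (mm f yt p) (fun ω => ∑ q, Sb p q * (le Lb e q ω - mm f yt q ω)) = 0 := by
    rw [mm_ip hyt f (fun p => memLp_lin (Sb p) hw)]
    refine Finset.sum_eq_zero fun p _ => ?_
    obtain ⟨i, c, r⟩ := p
    rw [orth hyt he hΓ hη hf]; simp
  have h3 : ∑ p, ip μ (le Lb e p) (fun ω => ∑ q, Sb p q * mm f yt q ω) = η ⬝ᵥ f := by
    rw [symm_ip (posDef_symm hS) hl hm, mm_ip hyt f (fun p => memLp_lin (Sb p) hl)]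
    refine Finset.sum_congr rfl fun p _ => ?_
    obtain ⟨i, c, r⟩ := p
    rw [ip_le hyt he hη, mul_comm]
  rw [h2, h3, sub_zero]
  congr 1
  have h4 : ∀ p q, ip μ (le Lb e p) (le Lb e q) = ∑ k, Lb p k * ∑ l, Lb q l * P0 k l := by
    intro p q
    refine (ip_sum_left _ (hl q) he).trans ?_
    refine Finset.sum_congr rfl fun k _ => ?_
    simp only [hP0]
    exact congrArg _ (ip_sum_right _ (he k) he)
  have hPs : ∀ k l, P0 k l = P0 l k := fun k l => by rw [hP0, hP0, ip_comm]
  have h5 : ∀ p, ip μ (le Lb e p) (fun ω => ∑ q, Sb p q * le Lb e q ω)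
      = ∑ q, Sb p q * ∑ k, Lb p k * ∑ l, Lb q l * P0 k l := by
    intro p
    rw [ip_sum_right _ (hl p) hl]
    simp only [h4]
  simp only [h5]
  rw [Matrix.mul_assoc, Matrix.mul_assoc, Matrix.trace_mul_comm]
  simp only [trace, diag, mul_apply, transpose_apply]
  refine Finset.sum_congr rfl fun p _ => ?_
  simp only [Finset.sum_mul, Finset.mul_sum]
  rw [Finset.sum_comm]
  refine Finset.sum_congr rfl fun k _ => ?_
  refine Finset.sum_congr rfl fun q _ => ?_
  refine Finset.sum_congr rfl fun l _ => ?_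
  rw [hPs k l]
  ring

end core

end TeamEst

namespace TeamEst

section space
variable {Ω : Type*} {dx q n : ℕ} {dy : Fin n → ℕ}
    (x : Ω → Fin dx → ℝ) (y0 : Ω → Fin q → ℝ) (y : ∀ i : Fin n, Ω → Fin (dy i) → ℝ)

/-- all linear combinations of the observed and hidden variables -/
def VV : Submodule ℝ (Ω → ℝ) where
  carrier := {f | ∃ (a : Fin dx → ℝ) (b0 : Fin q → ℝ) (b : ∀ i, Fin (dy i) → ℝ),
    f = fun ω => (∑ k, a k * x ω k) + (∑ k, b0 k * y0 ω k) + ∑ i, ∑ k, b i k * y i ω k}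
  zero_mem' := ⟨0, 0, fun _ => 0, by ext ω; simp⟩
  add_mem' := by
    rintro f g ⟨a, b0, b, rfl⟩ ⟨a', b0', b', rfl⟩
    refine ⟨a + a', b0 + b0', fun i => b i + b' i, ?_⟩
    ext ω
    simp only [Pi.add_apply, add_mul, Finset.sum_add_distrib]
    ring
  smul_mem' := by
    rintro c f ⟨a, b0, b, rfl⟩
    refine ⟨c • a, c • b0, fun i => c • b i, ?_⟩
    ext ω
    simp only [Pi.smul_apply, smul_eq_mul, mul_add, Finset.mul_sum, mul_assoc]

lemma VV_x (k : Fin dx) : (fun ω => x ω k) ∈ VV x y0 y :=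
  ⟨Pi.single k 1, 0, fun _ => 0, by ext ω; simp [Pi.single_apply]⟩

lemma VV_y0 (k : Fin q) : (fun ω => y0 ω k) ∈ VV x y0 y :=
  ⟨0, Pi.single k 1, fun _ => 0, by ext ω; simp [Pi.single_apply]⟩

lemma VV_y (i : Fin n) (k : Fin (dy i)) : (fun ω => y i ω k) ∈ VV x y0 y := by
  refine ⟨0, 0, fun j => Pi.single (M := fun j => Fin (dy j) → ℝ) i (Pi.single k 1) j, ?_⟩
  ext ω
  rw [Finset.sum_eq_single i]
  · simp [Pi.single_apply]
  · intro j _ hj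
    simp [Pi.single_eq_of_ne hj]
  · simp

lemma VV_gsub [MeasurableSpace Ω] (μ : Measure Ω)
    (hx : Measurable x) (hy0 : Measurable y0) (hy : ∀ i, Measurable (y i))
    (hGauss : ∀ (a : Fin dx → ℝ) (b0 : Fin q → ℝ) (b : ∀ i, Fin (dy i) → ℝ),
      ∃ v : NNReal,
        μ.map (fun ω => (∑ k, a k * x ω k) + (∑ k, b0 k * y0 ω k)
          + ∑ i, ∑ k, b i k * y i ω k) = gaussianReal 0 v) : GSub μ (VV x y0 y) := by
  rintro f ⟨a, b0, b, rfl⟩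
  refine ⟨?_, hGauss a b0 b⟩
  fun_prop

end space

end TeamEst

/-- Multi-agent Gaussian estimation: the minimum expected team estimation error, achieved
by the strategy `ẑᵢ = Lᵢ x̂₀ + Fᵢ ỹᵢ` with `vec(F₁,…,Fₙ) = Γ⁻¹ η`, equals
`J* = Tr(Lᵀ S L P₀) − ηᵀ Γ⁻¹ η`, where `P₀ = Var(x − x̂₀)`,
`η = vec(S₁• L Θ̂₁, …, Sₙ• L Θ̂ₙ)` and `Γ` has blocks `Γᵢⱼ = Σ̂ᵢⱼ ⊗ Sᵢⱼ`. -/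
theorem stmt14 {Ω : Type*} [MeasurableSpace Ω] (μ : Measure Ω) [IsProbabilityMeasure μ]
    (dx q n : ℕ) (dy dz : Fin n → ℕ)
    (x : Ω → Fin dx → ℝ) (y0 : Ω → Fin q → ℝ) (y : ∀ i : Fin n, Ω → Fin (dy i) → ℝ)
    (hx : Measurable x) (hy0 : Measurable y0) (hy : ∀ i, Measurable (y i))
    (hGauss : ∀ (a : Fin dx → ℝ) (b0 : Fin q → ℝ) (b : ∀ i, Fin (dy i) → ℝ),
      ∃ v : NNReal,
        μ.map (fun ω => (∑ k, a k * x ω k) + (∑ k, b0 k * y0 ω k)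
          + ∑ i, ∑ k, b i k * y i ω k) = gaussianReal 0 v)
    (Sigma00 : Matrix (Fin q) (Fin q) ℝ)
    (hSigma00 : ∀ k l, Sigma00 k l = ∫ ω, y0 ω k * y0 ω l ∂μ)
    (hinv0 : IsUnit Sigma00.det)
    (xhat0 : Ω → Fin dx → ℝ)
    (hxhat0 : xhat0 = fun ω k =>
      (μ[(fun ω => x ω k) | MeasurableSpace.comap y0 inferInstance]) ω)
    (yhat : ∀ i : Fin n, Ω → Fin (dy i) → ℝ)
    (hyhat : ∀ i, yhat i = fun ω k =>
      (μ[(fun ω => y i ω k) | MeasurableSpace.comap y0 inferInstance]) ω)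
    (Θhat : ∀ i, Matrix (Fin dx) (Fin (dy i)) ℝ)
    (hΘhat : ∀ i k l, Θhat i k l = ∫ ω, x ω k * (y i ω l - yhat i ω l) ∂μ)
    (Sigmahat : ∀ i j, Matrix (Fin (dy i)) (Fin (dy j)) ℝ)
    (hSigmahat : ∀ i j k l, Sigmahat i j k l
      = ∫ ω, (y i ω k - yhat i ω k) * (y j ω l - yhat j ω l) ∂μ)
    (hinv : ∀ i, IsUnit (Sigmahat i i).det)
    (P0 : Matrix (Fin dx) (Fin dx) ℝ)
    (hP0 : ∀ k l, P0 k l = ∫ ω, (x ω k - xhat0 ω k) * (x ω l - xhat0 ω l) ∂μ)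
    (L : ∀ i : Fin n, Matrix (Fin (dz i)) (Fin dx) ℝ)
    (S : ∀ i j : Fin n, Matrix (Fin (dz i)) (Fin (dz j)) ℝ)
    (Lbig : Matrix (Σ i : Fin n, Fin (dz i)) (Fin dx) ℝ)
    (hLbig : ∀ (i : Fin n) (r : Fin (dz i)) (k : Fin dx), Lbig ⟨i, r⟩ k = L i r k)
    (Sbig : Matrix (Σ i : Fin n, Fin (dz i)) (Σ i : Fin n, Fin (dz i)) ℝ)
    (hSbig : ∀ (i j : Fin n) (r : Fin (dz i)) (r' : Fin (dz j)),
      Sbig ⟨i, r⟩ ⟨j, r'⟩ = S i j r r')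
    (hSpd : Sbig.PosDef)
    (Γ : Matrix (Σ i : Fin n, Fin (dy i) × Fin (dz i))
        (Σ j : Fin n, Fin (dy j) × Fin (dz j)) ℝ)
    (hΓ : ∀ (i j : Fin n) (c : Fin (dy i)) (r : Fin (dz i))
        (c' : Fin (dy j)) (r' : Fin (dz j)),
      Γ ⟨i, (c, r)⟩ ⟨j, (c', r')⟩ = Sigmahat i j c c' * S i j r r')
    (η : (Σ i : Fin n, Fin (dy i) × Fin (dz i)) → ℝ)
    (hη : ∀ (i : Fin n) (c : Fin (dy i)) (r : Fin (dz i)),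
      η ⟨i, (c, r)⟩ = ((∑ j, S i j * L j) * Θhat i) r c)
    (F : ∀ i : Fin n, Matrix (Fin (dz i)) (Fin (dy i)) ℝ)
    (hF : (fun p : Σ i : Fin n, Fin (dy i) × Fin (dz i) => F p.1 p.2.2 p.2.1)
      = Γ⁻¹.mulVec η)
    (J : (∀ i : Fin n, Ω → Fin (dz i) → ℝ) → ℝ)
    (hJ : ∀ z, J z = ∫ ω, ∑ i, ∑ j,
      ((L i).mulVec (x ω) - z i ω) ⬝ᵥ (S i j).mulVec ((L j).mulVec (x ω) - z j ω) ∂μ) :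
    J (fun i ω => (L i).mulVec (xhat0 ω)
          + (F i).mulVec (fun l => y i ω l - yhat i ω l))
      = (Lbigᵀ * Sbig * Lbig * P0).trace - η ⬝ᵥ Γ⁻¹.mulVec η ∧
    ∀ g : ∀ i : Fin n, (Fin q → ℝ) × (Fin (dy i) → ℝ) → Fin (dz i) → ℝ,
      (∀ i, Measurable (g i)) →
      (∀ i k, MemLp (fun ω => g i (y0 ω, y i ω) k) 2 μ) →
      J (fun i ω => (L i).mulVec (xhat0 ω)
            + (F i).mulVec (fun l => y i ω l - yhat i ω l))
        ≤ J (fun i ω => g i (y0 ω, y i ω)) := by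
  have hGV := TeamEst.VV_gsub x y0 y μ hx hy0 hy hGauss
  set V := TeamEst.VV x y0 y with hVdef
  have hxV : ∀ k, (fun ω => x ω k) ∈ V := TeamEst.VV_x x y0 y
  have hy0V : ∀ k, (fun ω => y0 ω k) ∈ V := TeamEst.VV_y0 x y0 y
  have hyV : ∀ i k, (fun ω => y i ω k) ∈ V := TeamEst.VV_y x y0 y
  choose Bx hBx hBxo using fun k => hGV.condExp (hxV k) hy0V Sigma00 hSigma00 hinv0
  choose By hBy hByo using fun i k => hGV.condExp (hyV i k) hy0V Sigma00 hSigma00 hinv0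
  set xb : Fin dx → Ω → ℝ := fun k ω => ∑ t, Bx k t * y0 ω t with hxb
  set yb : ∀ i, Fin (dy i) → Ω → ℝ := fun i k ω => ∑ t, By i k t * y0 ω t with hyb
  have hxbV : ∀ k, xb k ∈ V := fun k => TeamEst.lin_mem (Y := fun t ω => y0 ω t) _ hy0V
  have hybV : ∀ i k, yb i k ∈ V := fun i k => TeamEst.lin_mem (Y := fun t ω => y0 ω t) _ hy0V
  set e : Fin dx → Ω → ℝ := fun k ω => x ω k - xb k ω with he
  set yt : ∀ i, Fin (dy i) → Ω → ℝ := fun i k ω => y i ω k - yb i k ω with hyt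
  have heV : ∀ k, e k ∈ V := fun k => TeamEst.sub_mem' (hxV k) (hxbV k)
  have hytV : ∀ i k, yt i k ∈ V := fun i k => TeamEst.sub_mem' (hyV i k) (hybV i k)
  have hxh : ∀ k, (fun ω => xhat0 ω k) =ᵐ[μ] xb k := by
    intro k; rw [hxhat0]; exact hBx k
  have hyh : ∀ i k, (fun ω => yhat i ω k) =ᵐ[μ] yb i k := by
    intro i k; rw [hyhat]; exact hBy i k
  have hxe : ∀ k, (fun ω => x ω k - xhat0 ω k) =ᵐ[μ] e k := by
    intro k; filter_upwards [hxh k] with ω h; simp only [he, h]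
  have hye : ∀ i k, (fun ω => y i ω k - yhat i ω k) =ᵐ[μ] yt i k := by
    intro i k; filter_upwards [hyh i k] with ω h; simp only [hyt, h]
  have heo : ∀ k t, TeamEst.ip μ (e k) (fun ω => y0 ω t) = 0 := hBxo
  have hyto : ∀ i k t, TeamEst.ip μ (yt i k) (fun ω => y0 ω t) = 0 := hByo
  have hytL : ∀ i k, MemLp (yt i k) 2 μ := fun i k => hGV.memLp (hytV i k)
  have heL : ∀ k, MemLp (e k) 2 μ := fun k => hGV.memLp (heV k)
  have hSg : ∀ i j k l, Sigmahat i j k l = TeamEst.ip μ (yt i k) (yt j l) := by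
    intro i j k l
    rw [hSigmahat, ← TeamEst.ip_congr (hye i k) (hye j l)]; rfl
  have hTh : ∀ i k l, Θhat i k l = TeamEst.ip μ (e k) (yt i l) := by
    intro i k l
    have h1 : Θhat i k l = TeamEst.ip μ (fun ω => x ω k) (yt i l) := by
      rw [hΘhat, ← TeamEst.ip_congr (Filter.EventuallyEq.refl _ _) (hye i l)]; rfl
    have h2 : TeamEst.ip μ (xb k) (yt i l) = 0 := by
      rw [hxb, TeamEst.ip_comm]
      refine (TeamEst.ip_sum_right (Y := fun t ω => y0 ω t) _ (hytL i l)
        (fun t => hGV.memLp (hy0V t))).trans ?_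
      exact Finset.sum_eq_zero fun t _ => by rw [hyto, mul_zero]
    rw [h1, he, TeamEst.ip_sub_left (hGV.memLp (hxV k)) (hGV.memLp (hxbV k)) (hytL i l), h2,
      sub_zero]
  have hP : ∀ k l, P0 k l = TeamEst.ip μ (e k) (e l) := by
    intro k l
    rw [hP0, ← TeamEst.ip_congr (hxe k) (hxe l)]; rfl
  have hΓ' : ∀ (i j : Fin n) (c : Fin (dy i)) (r : Fin (dz i)) (c' : Fin (dy j))
      (r' : Fin (dz j)), Γ ⟨i, (c, r)⟩ ⟨j, (c', r')⟩
        = TeamEst.ip μ (yt i c) (yt j c') * Sbig ⟨i, r⟩ ⟨j, r'⟩ := by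
    intro i j c r c' r'
    rw [hΓ, hSg, hSbig]
  have hη' : ∀ (i : Fin n) (c : Fin (dy i)) (r : Fin (dz i)),
      η ⟨i, (c, r)⟩ = ∑ p, Sbig ⟨i, r⟩ p * ∑ k, Lbig p k * TeamEst.ip μ (e k) (yt i c) := by
    intro i c r
    rw [hη]
    simp only [mul_apply, Matrix.sum_apply, hTh, Fintype.sum_sigma, hSbig, hLbig, Finset.sum_mul,
      Finset.mul_sum]
    rw [Finset.sum_comm]
    refine Finset.sum_congr rfl fun j _ => ?_
    rw [Finset.sum_comm]
    refine Finset.sum_congr rfl fun s _ => Finset.sum_congr rfl fun k _ => ?_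
    ring
  have hU : IsUnit Γ := by
    refine TeamEst.gamma_unit hytL hSpd hΓ' fun i => ?_
    have : (Matrix.of fun k l => TeamEst.ip μ (yt i k) (yt i l)) = Sigmahat i i := by
      ext k l; rw [hSg]; rfl
    rw [this]; exact hinv i
  set f : (Σ i : Fin n, Fin (dy i) × Fin (dz i)) → ℝ := Γ⁻¹.mulVec η with hfdef
  have hf : Γ *ᵥ f = η := by
    rw [hfdef, mulVec_mulVec, mul_nonsing_inv _ ((isUnit_iff_isUnit_det _).1 hU), one_mulVec]
  have hFf : ∀ i r l, F i r l = f ⟨i, (l, r)⟩ := fun i r l => congrFun hF ⟨i, (l, r)⟩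
  have hJQ : ∀ z : ∀ i : Fin n, Ω → Fin (dz i) → ℝ, J z = TeamEst.Q μ Sbig
      (fun p ω => ((L p.1).mulVec (x ω) - z p.1 ω) p.2) := by
    intro z
    rw [hJ]
    unfold TeamEst.Q
    congr 1; ext ω
    simp only [dotProduct, mulVec, Fintype.sum_sigma, hSbig]
    refine Finset.sum_congr rfl fun i _ => ?_
    rw [Finset.sum_comm]
    refine Finset.sum_congr rfl fun r _ => ?_
    rw [Finset.mul_sum]
  set w : (Σ i : Fin n, Fin (dz i)) → Ω → ℝ :=
    fun p ω => TeamEst.le Lbig e p ω - TeamEst.mm f yt p ω with hw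
  have hleV : ∀ p, TeamEst.le Lbig e p ∈ V := fun p => TeamEst.lin_mem _ heV
  have hmmV : ∀ p, TeamEst.mm f yt p ∈ V := fun p => TeamEst.lin_mem _ (hytV p.1)
  have hwV : ∀ p, w p ∈ V := fun p => TeamEst.sub_mem' (hleV p) (hmmV p)
  have hwL : ∀ p, MemLp (w p) 2 μ := fun p => hGV.memLp (hwV p)
  have hJopt : J (fun i ω => (L i).mulVec (xhat0 ω)
          + (F i).mulVec (fun l => y i ω l - yhat i ω l)) = TeamEst.Q μ Sbig w := by
    rw [hJQ]
    refine TeamEst.Q_congr _ fun p => ?_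
    obtain ⟨i, r⟩ := p
    filter_upwards [ae_all_iff.2 hxe, ae_all_iff.2 (hye i)] with ω h1 h2
    simp only [hw, TeamEst.le, TeamEst.mm, ← h1, ← h2, ← hFf, hLbig, mulVec, dotProduct,
      Pi.sub_apply, Pi.add_apply, mul_sub, Finset.sum_sub_distrib]
    ring
  refine ⟨?_, ?_⟩
  · rw [hJopt]
    exact TeamEst.value hytL heL hSpd hΓ' hη' hf P0 hP
  · intro g hg hgL
    rw [hJopt, hJQ]
    set zb : (Σ i : Fin n, Fin (dz i)) → Ω → ℝ :=
      fun p ω => (∑ k, Lbig p k * xb k ω) + TeamEst.mm f yt p ω with hzb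
    have hlxV : ∀ p, (fun ω => ∑ k, Lbig p k * xb k ω) ∈ V := fun p => TeamEst.lin_mem _ hxbV
    have hzbL : ∀ p, MemLp (zb p) 2 μ := fun p => (hGV.memLp (hlxV p)).add (hGV.memLp (hmmV p))
    set d : (Σ i : Fin n, Fin (dz i)) → Ω → ℝ :=
      fun p ω => zb p ω - g p.1 (y0 ω, y p.1 ω) p.2 with hd
    have hdL : ∀ p, MemLp (d p) 2 μ := fun p => (hzbL p).sub (hgL p.1 p.2)
    have hsplit : (fun (p : Σ i : Fin n, Fin (dz i)) ω =>
        ((L p.1).mulVec (x ω) - g p.1 (y0 ω, y p.1 ω)) p.2) = fun p ω => w p ω + d p ω := by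
      ext ⟨i, r⟩ ω
      simp only [hw, hd, hzb, he, TeamEst.le, hLbig, mulVec, dotProduct, Pi.sub_apply, mul_sub,
        Finset.sum_sub_distrib]
      ring
    rw [hsplit]
    refine TeamEst.Q_le hSpd hwL hdL ?_
    rintro ⟨i, r⟩
    have huV : (fun ω => ∑ q, Sbig ⟨i, r⟩ q * w q ω) ∈ V := TeamEst.lin_mem _ hwV
    set u : Ω → ℝ := fun ω => ∑ q, Sbig ⟨i, r⟩ q * w q ω with hu
    have huL : MemLp u 2 μ := hGV.memLp huV
    have hy0L : ∀ t, MemLp (fun ω => y0 ω t) 2 μ := fun t => hGV.memLp (hy0V t)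
    have huyt : ∀ l, TeamEst.ip μ (yt i l) u = 0 := fun l =>
      TeamEst.orth hytL heL hΓ' hη' hf i l r
    have hwy0 : ∀ p t, TeamEst.ip μ (w p) (fun ω => y0 ω t) = 0 := by
      intro p t
      refine (TeamEst.ip_sub_left (hGV.memLp (hleV p)) (hGV.memLp (hmmV p)) (hy0L t)).trans ?_
      have h1 : TeamEst.ip μ (TeamEst.le Lbig e p) (fun ω => y0 ω t) = 0 :=
        (TeamEst.ip_sum_left _ (hy0L t) heL).trans
          (Finset.sum_eq_zero fun k _ => by rw [heo, mul_zero])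
      have h2 : TeamEst.ip μ (TeamEst.mm f yt p) (fun ω => y0 ω t) = 0 :=
        (TeamEst.ip_sum_left _ (hy0L t) (hytL p.1)).trans
          (Finset.sum_eq_zero fun k _ => by rw [hyto, mul_zero])
      rw [h1, h2, sub_zero]
    have huy0 : ∀ t, TeamEst.ip μ u (fun ω => y0 ω t) = 0 := fun t =>
      (TeamEst.ip_sum_left _ (hy0L t) hwL).trans
          (Finset.sum_eq_zero fun k _ => by rw [hwy0, mul_zero])
    have huby : ∀ B : Fin q → ℝ, TeamEst.ip μ u (fun ω => ∑ t, B t * y0 ω t) = 0 := fun B =>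
      (TeamEst.ip_sum_right (Y := fun t ω => y0 ω t) _ huL hy0L).trans
          (Finset.sum_eq_zero fun k _ => by rw [huy0, mul_zero])
    have huxb : ∀ k, TeamEst.ip μ (xb k) u = 0 := fun k => by
      rw [TeamEst.ip_comm]; exact huby _
    have huy : ∀ l, TeamEst.ip μ u (fun ω => y i ω l) = 0 := by
      intro l
      have h1 := TeamEst.ip_sub_left (hGV.memLp (hyV i l)) (hGV.memLp (hybV i l)) huL
      have h2 := huyt l
      have h3 : TeamEst.ip μ (yb i l) u = 0 := by
        rw [TeamEst.ip_comm]; exact huby _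
      rw [TeamEst.ip_comm]
      have h4 := h1.symm.trans h2
      linarith
    have hz0 : TeamEst.ip μ (zb ⟨i, r⟩) u = 0 := by
      refine (TeamEst.ip_add_left (hGV.memLp (hlxV _)) (hGV.memLp (hmmV _)) huL).trans ?_
      have h1 : TeamEst.ip μ (fun ω => ∑ k, Lbig ⟨i, r⟩ k * xb k ω) u = 0 :=
        (TeamEst.ip_sum_left _ huL (fun k => hGV.memLp (hxbV k))).trans
          (Finset.sum_eq_zero fun k _ => by rw [huxb, mul_zero])
      have h2 : TeamEst.ip μ (TeamEst.mm f yt ⟨i, r⟩) u = 0 :=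
        (TeamEst.ip_sum_left _ huL (hytL i)).trans
          (Finset.sum_eq_zero fun k _ => by rw [huyt, mul_zero])
      rw [h1, h2, add_zero]
    have hg0 : TeamEst.ip μ (fun ω => g i (y0 ω, y i ω) r) u = 0 := by
      refine hGV.ip_fun_zero (τ := Fin q ⊕ Fin (dy i))
        (Y := Sum.elim (fun t ω => y0 ω t) (fun l ω => y i ω l)) huV ?_ ?_
        (h := fun v => g i (fun t => v (Sum.inl t), fun l => v (Sum.inr l)) r) ?_
      · rintro (t | l)
        · exact hy0V t
        · exact hyV i l
      · rintro (t | l)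
        · exact huy0 t
        · exact huy l
      · have h1 : Measurable (fun v : Fin q ⊕ Fin (dy i) → ℝ =>
            ((fun t => v (Sum.inl t), fun l => v (Sum.inr l))
              : (Fin q → ℝ) × (Fin (dy i) → ℝ))) := by fun_prop
        exact (measurable_pi_apply r).comp ((hg i).comp h1)
    refine (TeamEst.ip_sub_left (hzbL _) (hgL i r) huL).trans ?_
    rw [hz0, hg0, sub_zero]
end

section
/- In the multi-agent Gaussian estimation problem, the naive MMSE strategy ẑ_i = L_i E[x | y_0, y_i] = L_i ( x̂_0 + K_i ỹ_i ) with K_i = Θ̂_i Σ̂_ii⁻¹ incurs the expected team estimation error J^mmse = Tr( Lᵀ S L P_0 ) + Σ_{i=1}^n Tr( K_iᵀ L_iᵀ Σ_{j=1}^n S_ij L_j [ K_j Σ̂_ji − 2 Θ̂_i ] ), where P_0 = Var(x − x̂_0). -/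
open MeasureTheory ProbabilityTheory Matrix

lemma s16_gen {Ω : Type*} [MeasurableSpace Ω] (μ : Measure Ω) {a b : ℕ}
    (f : Ω → Fin a → ℝ) (g : Ω → Fin b → ℝ)
    (hf : ∀ k, MemLp (fun ω => f ω k) 2 μ) (hg : ∀ k, MemLp (fun ω => g ω k) 2 μ)
    (A : Matrix (Fin a) (Fin b) ℝ) (C : Matrix (Fin b) (Fin a) ℝ)
    (hC : ∀ k l, C k l = ∫ ω, g ω k * f ω l ∂μ) :
    Integrable (fun ω => f ω ⬝ᵥ A.mulVec (g ω)) μ ∧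
      ∫ ω, f ω ⬝ᵥ A.mulVec (g ω) ∂μ = (A * C).trace := by
  have hi : ∀ k l, Integrable (fun ω => A k l * (g ω l * f ω k)) μ := fun k l =>
    ((hg l).integrable_mul (hf k)).const_mul _
  have he : (fun ω => f ω ⬝ᵥ A.mulVec (g ω)) = fun ω => ∑ k, ∑ l, A k l * (g ω l * f ω k) := by
    funext ω
    simp only [dotProduct, mulVec, Finset.mul_sum]
    refine Finset.sum_congr rfl fun k _ => Finset.sum_congr rfl fun l _ => by ring
  rw [he]
  refine ⟨integrable_finsetSum _ fun k _ => integrable_finsetSum _ fun l _ => hi k l, ?_⟩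
  rw [integral_finsetSum _ fun k _ => integrable_finsetSum _ fun l _ => hi k l]
  simp only [trace, diag, mul_apply]
  refine Finset.sum_congr rfl fun k _ => ?_
  rw [integral_finsetSum _ fun l _ => hi k l]
  refine Finset.sum_congr rfl fun l _ => ?_
  rw [integral_const_mul, hC]

lemma s16_int {Ω : Type*} [MeasurableSpace Ω] (μ : Measure Ω) (a b c d : Ω → ℝ)
    (ha : Integrable a μ) (hb : Integrable b μ) (hc : Integrable c μ) (hd : Integrable d μ) :
    ∫ ω, (a ω - b ω - c ω + d ω) ∂μ
      = ∫ ω, a ω ∂μ - ∫ ω, b ω ∂μ - ∫ ω, c ω ∂μ + ∫ ω, d ω ∂μ := by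
  have h1 : ∫ ω, (a ω - b ω - c ω + d ω) ∂μ = ∫ ω, (a ω - b ω - c ω) ∂μ + ∫ ω, d ω ∂μ :=
    integral_add ((ha.sub hb).sub hc) hd
  have h2 : ∫ ω, (a ω - b ω - c ω) ∂μ = ∫ ω, (a ω - b ω) ∂μ - ∫ ω, c ω ∂μ :=
    integral_sub (ha.sub hb) hc
  rw [h1, h2, integral_sub ha hb]

lemma s16_orth {Ω : Type*} {m m0 : MeasurableSpace Ω} (μ : Measure Ω) [IsProbabilityMeasure μ]
    (hm : m ≤ m0) (f g : Ω → ℝ) (hf : MemLp f 2 μ) (hg : MemLp g 2 μ) :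
    ∫ ω, (μ[f | m]) ω * (g ω - (μ[g | m]) ω) ∂μ = 0 := by
  have hf' : MemLp (μ[f | m]) 2 μ := hf.condExp one_le_two
  have hg' : MemLp (μ[g | m]) 2 μ := hg.condExp one_le_two
  have h1 : Integrable ((μ[f | m]) * g) μ := hf'.integrable_mul hg
  have h2 : Integrable ((μ[f | m]) * (μ[g | m])) μ := hf'.integrable_mul hg'
  have h3 : μ[(μ[f | m]) * g | m] =ᵐ[μ] (μ[f | m]) * (μ[g | m]) :=
    condExp_mul_of_stronglyMeasurable_left stronglyMeasurable_condExp h1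
      (hg.integrable one_le_two)
  have h4 : ∫ ω, ((μ[f | m]) * g) ω ∂μ = ∫ ω, ((μ[f | m]) * (μ[g | m])) ω ∂μ := by
    rw [← integral_condExp hm]
    exact integral_congr_ae h3
  simp only [mul_sub]
  exact (integral_sub h1 h2).trans (sub_eq_zero.2 h4)

lemma s16_memLp {Ω : Type*} [MeasurableSpace Ω] (μ : Measure Ω) 
    (f : Ω → ℝ) (hf : Measurable f) (v : NNReal) (h : μ.map f = gaussianReal 0 v) :
    MemLp f 2 μ := by
  have h1 : MemLp id 2 (μ.map f) := by
    rw [h]; exact memLp_id_gaussianReal 2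
  exact (memLp_map_measure_iff aestronglyMeasurable_id hf.aemeasurable).1 h1

lemma s16_trace (dx n : ℕ) (dz : Fin n → ℕ)
    (L : ∀ i : Fin n, Matrix (Fin (dz i)) (Fin dx) ℝ)
    (S : ∀ i j : Fin n, Matrix (Fin (dz i)) (Fin (dz j)) ℝ)
    (Lbig : Matrix (Σ i : Fin n, Fin (dz i)) (Fin dx) ℝ)
    (hLbig : ∀ (i : Fin n) (r : Fin (dz i)) (k : Fin dx), Lbig ⟨i, r⟩ k = L i r k)
    (Sbig : Matrix (Σ i : Fin n, Fin (dz i)) (Σ i : Fin n, Fin (dz i)) ℝ)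
    (hSbig : ∀ (i j : Fin n) (r : Fin (dz i)) (r' : Fin (dz j)),
      Sbig ⟨i, r⟩ ⟨j, r'⟩ = S i j r r') :
    Lbigᵀ * Sbig * Lbig = ∑ i, ∑ j, (L i)ᵀ * S i j * L j := by
  ext k l
  simp only [Matrix.sum_apply, mul_apply, transpose_apply, Fintype.sum_sigma, hLbig, hSbig,
    Finset.sum_mul]
  rw [Finset.sum_comm]
  conv_rhs => rw [Finset.sum_comm]
  rw [Finset.sum_comm]
  refine Finset.sum_congr rfl fun j _ => ?_
  conv_lhs => rw [Finset.sum_comm]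

/-- Multi-agent Gaussian estimation: the naive MMSE strategy
`ẑᵢ = Lᵢ E[x | y₀, yᵢ] = Lᵢ (x̂₀ + Kᵢ ỹᵢ)` with `Kᵢ = Θ̂ᵢ Σ̂ᵢᵢ⁻¹` incurs the expected team
estimation error
`J^mmse = Tr(Lᵀ S L P₀) + Σᵢ Tr(Kᵢᵀ Lᵢᵀ Σⱼ Sᵢⱼ Lⱼ [Kⱼ Σ̂ⱼᵢ − 2 Θ̂ᵢ])`,
where `P₀ = Var(x − x̂₀)`. -/
theorem stmt16 {Ω : Type*} [MeasurableSpace Ω] (μ : Measure Ω) [IsProbabilityMeasure μ]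
    (dx q n : ℕ) (dy dz : Fin n → ℕ)
    (x : Ω → Fin dx → ℝ) (y0 : Ω → Fin q → ℝ) (y : ∀ i : Fin n, Ω → Fin (dy i) → ℝ)
    (hx : Measurable x) (hy0 : Measurable y0) (hy : ∀ i, Measurable (y i))
    (hGauss : ∀ (a : Fin dx → ℝ) (b0 : Fin q → ℝ) (b : ∀ i, Fin (dy i) → ℝ),
      ∃ v : NNReal,
        μ.map (fun ω => (∑ k, a k * x ω k) + (∑ k, b0 k * y0 ω k)
          + ∑ i, ∑ k, b i k * y i ω k) = gaussianReal 0 v)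
    (Sigma00 : Matrix (Fin q) (Fin q) ℝ)
    (hSigma00 : ∀ k l, Sigma00 k l = ∫ ω, y0 ω k * y0 ω l ∂μ)
    (hinv0 : IsUnit Sigma00.det)
    (xhat0 : Ω → Fin dx → ℝ)
    (hxhat0 : xhat0 = fun ω k =>
      (μ[(fun ω => x ω k) | MeasurableSpace.comap y0 inferInstance]) ω)
    (yhat : ∀ i : Fin n, Ω → Fin (dy i) → ℝ)
    (hyhat : ∀ i, yhat i = fun ω k =>
      (μ[(fun ω => y i ω k) | MeasurableSpace.comap y0 inferInstance]) ω)
    (Θhat : ∀ i, Matrix (Fin dx) (Fin (dy i)) ℝ)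
    (hΘhat : ∀ i k l, Θhat i k l = ∫ ω, x ω k * (y i ω l - yhat i ω l) ∂μ)
    (Sigmahat : ∀ i j, Matrix (Fin (dy i)) (Fin (dy j)) ℝ)
    (hSigmahat : ∀ i j k l, Sigmahat i j k l
      = ∫ ω, (y i ω k - yhat i ω k) * (y j ω l - yhat j ω l) ∂μ)
    (hinv : ∀ i, IsUnit (Sigmahat i i).det)
    (P0 : Matrix (Fin dx) (Fin dx) ℝ)
    (hP0 : ∀ k l, P0 k l = ∫ ω, (x ω k - xhat0 ω k) * (x ω l - xhat0 ω l) ∂μ)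
    (L : ∀ i : Fin n, Matrix (Fin (dz i)) (Fin dx) ℝ)
    (S : ∀ i j : Fin n, Matrix (Fin (dz i)) (Fin (dz j)) ℝ)
    (Lbig : Matrix (Σ i : Fin n, Fin (dz i)) (Fin dx) ℝ)
    (hLbig : ∀ (i : Fin n) (r : Fin (dz i)) (k : Fin dx), Lbig ⟨i, r⟩ k = L i r k)
    (Sbig : Matrix (Σ i : Fin n, Fin (dz i)) (Σ i : Fin n, Fin (dz i)) ℝ)
    (hSbig : ∀ (i j : Fin n) (r : Fin (dz i)) (r' : Fin (dz j)),
      Sbig ⟨i, r⟩ ⟨j, r'⟩ = S i j r r')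
    (hSpd : Sbig.PosDef)
    (K : ∀ i, Matrix (Fin dx) (Fin (dy i)) ℝ)
    (hK : ∀ i, K i = Θhat i * (Sigmahat i i)⁻¹)
    (J : (∀ i : Fin n, Ω → Fin (dz i) → ℝ) → ℝ)
    (hJ : ∀ z, J z = ∫ ω, ∑ i, ∑ j,
      ((L i).mulVec (x ω) - z i ω) ⬝ᵥ (S i j).mulVec ((L j).mulVec (x ω) - z j ω) ∂μ) :
    J (fun i ω => (L i).mulVec (fun k =>
          xhat0 ω k + (K i).mulVec (fun l => y i ω l - yhat i ω l) k))
      = (Lbigᵀ * Sbig * Lbig * P0).trace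
        + ∑ i, ((K i)ᵀ * (L i)ᵀ
            * ∑ j, S i j * L j * (K j * Sigmahat j i - (2 : ℝ) • Θhat i)).trace := by
  have hm : MeasurableSpace.comap y0 inferInstance ≤ (inferInstance : MeasurableSpace Ω) :=
    hy0.comap_le
  have hxL : ∀ k, MemLp (fun ω => x ω k) 2 μ := by
    intro k
    obtain ⟨v, hv⟩ := hGauss (Pi.single k 1) 0 0
    refine s16_memLp μ _ (by fun_prop) v ?_
    simpa [Pi.single_apply] using hv
  have hyL : ∀ i k, MemLp (fun ω => y i ω k) 2 μ := by
    intro i k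
    obtain ⟨v, hv⟩ := hGauss 0 0 (Pi.single i (Pi.single k 1))
    refine s16_memLp μ _ (by fun_prop) v ?_
    rw [← hv]
    congr 1
    funext ω
    simp only [Pi.zero_apply, zero_mul, Finset.sum_const_zero, zero_add]
    rw [Finset.sum_eq_single i]
    · simp [Pi.single_apply]
    · intro j _ hj
      simp [Pi.single_eq_of_ne hj]
    · simp
  have hxhL : ∀ k, MemLp (fun ω => xhat0 ω k) 2 μ := by
    intro k; rw [hxhat0]; exact (hxL k).condExp one_le_two
  have hyhL : ∀ i k, MemLp (fun ω => yhat i ω k) 2 μ := by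
    intro i k; rw [hyhat]; exact (hyL i k).condExp one_le_two
  set e : Ω → Fin dx → ℝ := fun ω k => x ω k - xhat0 ω k with he
  set w : ∀ i, Ω → Fin (dy i) → ℝ := fun i ω k => y i ω k - yhat i ω k with hw
  have heL : ∀ k, MemLp (fun ω => e ω k) 2 μ := fun k => (hxL k).sub (hxhL k)
  have hwL : ∀ i k, MemLp (fun ω => w i ω k) 2 μ := fun i k => (hyL i k).sub (hyhL i k)
  have hew : ∀ i k l, Θhat i k l = ∫ ω, e ω k * w i ω l ∂μ := by
    intro i k l
    have h0 : ∫ ω, xhat0 ω k * w i ω l ∂μ = 0 := by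
      have := s16_orth μ hm _ _ (hxL k) (hyL i l)
      simpa only [hw, hxhat0, hyhat] using this
    have h1 : ∀ ω, e ω k * w i ω l = x ω k * w i ω l - xhat0 ω k * w i ω l := by
      intro ω; simp only [he]; ring
    simp only [h1]
    have h2 : ∫ ω, (x ω k * w i ω l - xhat0 ω k * w i ω l) ∂μ
        = ∫ ω, x ω k * w i ω l ∂μ - ∫ ω, xhat0 ω k * w i ω l ∂μ :=
      integral_sub ((hxL k).integrable_mul (hwL i l)) ((hxhL k).integrable_mul (hwL i l))
    rw [h2, h0, sub_zero, hΘhat]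
  have hwe : ∀ i k l, (Θhat i)ᵀ k l = ∫ ω, w i ω k * e ω l ∂μ := by
    intro i k l
    rw [transpose_apply, hew]
    simp only [mul_comm]
  let M : ∀ i j : Fin n, Matrix (Fin dx) (Fin dx) ℝ := fun i j => (L i)ᵀ * S i j * L j
  have hMt : ∀ i j, (M i j)ᵀ = M j i := by
    intro i j
    have hS : (S i j)ᵀ = S j i := by
      ext r r'
      have := hSpd.isHermitian.apply ⟨j, r⟩ ⟨i, r'⟩
      rw [hSbig, hSbig] at this
      simpa using this
    simp only [M, transpose_mul, transpose_transpose, hS, Matrix.mul_assoc]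
  have t1 := fun i j => s16_gen μ e e heL heL (M i j) P0 hP0
  have t2 := fun i j => s16_gen μ e (w j) heL (hwL j) (M i j * K j) (Θhat j)ᵀ (hwe j)
  have t3 := fun i j => s16_gen μ (w i) e (hwL i) heL ((K i)ᵀ * M i j) (Θhat i) (hew i)
  have t4 := fun i j => s16_gen μ (w i) (w j) (hwL i) (hwL j) ((K i)ᵀ * M i j * K j)
    (Sigmahat j i) (hSigmahat j i)
  have key : ∀ i j ω, ((L i).mulVec (x ω) - (L i).mulVec (fun k =>
        xhat0 ω k + (K i).mulVec (w i ω) k)) ⬝ᵥ (S i j).mulVec ((L j).mulVec (x ω) -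
          (L j).mulVec (fun k => xhat0 ω k + (K j).mulVec (w j ω) k))
      = e ω ⬝ᵥ (M i j).mulVec (e ω) - e ω ⬝ᵥ (M i j * K j).mulVec (w j ω)
        - w i ω ⬝ᵥ ((K i)ᵀ * M i j).mulVec (e ω)
        + w i ω ⬝ᵥ ((K i)ᵀ * M i j * K j).mulVec (w j ω) := by
    intro i j ω
    have hd : ∀ i, (L i).mulVec (x ω) - (L i).mulVec (fun k =>
        xhat0 ω k + (K i).mulVec (w i ω) k) = (L i).mulVec (e ω - (K i).mulVec (w i ω)) := by
      intro i
      rw [← mulVec_sub]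
      congr 1
      funext k
      simp only [he, Pi.sub_apply]; ring
    have ht : ∀ {a b : ℕ} (A : Matrix (Fin a) (Fin b) ℝ) (u : Fin b → ℝ) (v : Fin a → ℝ),
        A.mulVec u ⬝ᵥ v = u ⬝ᵥ Aᵀ.mulVec v := by
      intro a b A u v
      rw [dotProduct_mulVec, vecMul_transpose]
    rw [hd, hd, ht]
    simp only [mulVec_mulVec, ← Matrix.mul_assoc]
    change _ ⬝ᵥ (M i j).mulVec _ = _
    rw [sub_dotProduct, mulVec_sub, dotProduct_sub, dotProduct_sub, ht, ht]
    simp only [mulVec_mulVec, ← Matrix.mul_assoc]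
    ring
  rw [hJ]
  simp only [hw] at key
  simp only [key]
  have hI : ∀ i j, Integrable (fun ω => e ω ⬝ᵥ (M i j).mulVec (e ω)
      - e ω ⬝ᵥ (M i j * K j).mulVec (w j ω)
        - w i ω ⬝ᵥ ((K i)ᵀ * M i j).mulVec (e ω)
        + w i ω ⬝ᵥ ((K i)ᵀ * M i j * K j).mulVec (w j ω)) μ := fun i j =>
    (((t1 i j).1.sub (t2 i j).1).sub (t3 i j).1).add (t4 i j).1
  have hV : ∀ i j, ∫ ω, (e ω ⬝ᵥ (M i j).mulVec (e ω)
      - e ω ⬝ᵥ (M i j * K j).mulVec (w j ω)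
        - w i ω ⬝ᵥ ((K i)ᵀ * M i j).mulVec (e ω)
        + w i ω ⬝ᵥ ((K i)ᵀ * M i j * K j).mulVec (w j ω)) ∂μ
      = (M i j * P0).trace - (M i j * K j * (Θhat j)ᵀ).trace - ((K i)ᵀ * M i j * Θhat i).trace
        + ((K i)ᵀ * M i j * K j * Sigmahat j i).trace := by
    intro i j
    rw [← (t1 i j).2, ← (t2 i j).2, ← (t3 i j).2, ← (t4 i j).2]
    exact s16_int μ _ _ _ _ (t1 i j).1 (t2 i j).1 (t3 i j).1 (t4 i j).1
  refine (integral_finsetSum _ fun i _ => integrable_finsetSum _ fun j _ => hI i j).trans ?_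
  have e1 : ∀ i, ∫ ω, ∑ j, (e ω ⬝ᵥ (M i j).mulVec (e ω)
      - e ω ⬝ᵥ (M i j * K j).mulVec (w j ω)
        - w i ω ⬝ᵥ ((K i)ᵀ * M i j).mulVec (e ω)
        + w i ω ⬝ᵥ ((K i)ᵀ * M i j * K j).mulVec (w j ω)) ∂μ
      = ∑ j, ((M i j * P0).trace - (M i j * K j * (Θhat j)ᵀ).trace
        - ((K i)ᵀ * M i j * Θhat i).trace
        + ((K i)ᵀ * M i j * K j * Sigmahat j i).trace) := by
    intro i
    rw [integral_finsetSum _ fun j _ => hI i j]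
    exact Finset.sum_congr rfl fun j _ => hV i j
  refine (Finset.sum_congr rfl fun i _ => e1 i).trans ?_
  have hc : ∀ i j, (M i j * K j * (Θhat j)ᵀ).trace = ((K j)ᵀ * M j i * Θhat j).trace := by
    intro i j
    rw [← trace_transpose]
    simp only [transpose_mul, transpose_transpose, hMt]
    rw [trace_mul_comm]
  have hc2 : ∑ i, ∑ j, (M i j * K j * (Θhat j)ᵀ).trace
      = ∑ i, ∑ j, ((K i)ᵀ * M i j * Θhat i).trace := by
    simp only [hc]
    rw [Finset.sum_comm]
  rw [s16_trace dx n dz L S Lbig hLbig Sbig hSbig]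
  have hr : ∀ i, ((K i)ᵀ * (L i)ᵀ
      * ∑ j, S i j * L j * (K j * Sigmahat j i - (2 : ℝ) • Θhat i)).trace
      = ∑ j, (((K i)ᵀ * M i j * K j * Sigmahat j i).trace
        - 2 * ((K i)ᵀ * M i j * Θhat i).trace) := by
    intro i
    rw [Matrix.mul_sum, trace_sum]
    refine Finset.sum_congr rfl fun j _ => ?_
    simp only [M, Matrix.mul_sub, trace_sub, Matrix.mul_smul, trace_smul, Matrix.mul_assoc,
      smul_eq_mul]
  simp only [hr, Finset.sum_mul, trace_sum, Finset.sum_add_distrib, Finset.sum_sub_distrib,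
    ← Finset.mul_sum, Matrix.sum_mul]
  rw [hc2]
  simp only [M]
  ring
end
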